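/- arXiv:2303.05932 — 2 statements merged into one kernel-verified Lean document; each statement's English description precedes it below -/
import Mathlib

section
/- For every natural number m, the symmetric group S_m has exactly one irreducible complex character of 2-defect zero if m is a triangular number, and has no irreducible complex character of 2-defect zero otherwise. -/
open Classical

/-- A natural number is triangular if it is of the form `k * (k + 1) / 2`. -/
def IsTriangular (m : ℕ) : Prop := ∃ k : ℕ, m = k * (k + 1) / 2

/-!
Following Frobenius, attach to the β-set `l 0 < l 1 < ⋯` of a partition of `m` the virtual
character `det (h (l i - j))` of `S_m`, where a product of `h`'s is the permutation character on
the words of a given content. The inner product of two such permutation characters counts the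
contingency tables with given margins, so Cauchy's determinant identity says that the
determinantal characters have norm one. Their degrees are positive, hence they are irreducible,
and they are all the irreducible characters because they generate the regular character. By the
hook length formula the degree has the same 2-part as `m!` if and only if no hook length is even.
The β-set then consists of the first `a` even and the first `b` odd numbers, and `d = a - b`
satisfies `d (d - 1) = 2 m`: this has a solution exactly for triangular `m`, and the parity of `d`
is that of the number of parts, which leaves only one.
-/

open Finset Equiv

/-! ### The Cauchy determinant -/

section CauchyDeterminant

variable {R : Type*} [CommRing R] {n : ℕ}

lemma prod_sub_mul_eq_sum_powersetCard {ι : Type*} (y : ι → R) (s : Finset ι) (a b : R) :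
    ∏ k ∈ s, (b - a * y k) = ∑ t ∈ range (#s + 1),
      a ^ t * b ^ (#s - t) * ∑ T ∈ s.powersetCard t, ∏ k ∈ T, (-y k) := by
  have neg_add : ∀ k ∈ s, b - a * y k = a * (-y k) + b := fun k _ ↦ by ring
  rw [prod_congr rfl neg_add, prod_add, sum_powerset]
  refine sum_congr rfl fun t _ ↦ ?_
  rw [mul_sum]
  refine sum_congr rfl fun T hT ↦ ?_
  obtain ⟨hTs, rfl⟩ := mem_powersetCard.1 hT
  rw [prod_mul_distrib, prod_const, prod_const, card_sdiff_of_subset hTs]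
  ring

/-- Column `j` lists the coefficients of the form `∏ k ≠ j, (w - v * y k)` in the monomials
`v ^ t * w ^ (n - 1 - t)`: these products are the numerators of the Cauchy matrix. -/
noncomputable def cauchyNumeratorMatrix (y : Fin n → R) : Matrix (Fin n) (Fin n) R :=
  .of fun t j ↦ ∑ T ∈ (univ.erase j).powersetCard t, ∏ k ∈ T, (-y k)

lemma projVandermonde_mul_cauchyNumeratorMatrix_apply (y v w : Fin n → R) (i j : Fin n) :
    (Matrix.projVandermonde v w * cauchyNumeratorMatrix y) i j =
      ∏ k ∈ univ.erase j, (w i - v i * y k) := by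
  have card_erase : #(univ.erase j) + 1 = n := by
    rw [card_erase_add_one (mem_univ j), card_fin]
  rw [prod_sub_mul_eq_sum_powersetCard, Matrix.mul_apply, card_erase, sum_range]
  refine sum_congr rfl fun t _ ↦ ?_
  rw [Matrix.projVandermonde_apply, cauchyNumeratorMatrix, Matrix.of_apply, Fin.val_rev,
    show #(univ.erase j) - (t : ℕ) = n - (t + 1) by omega]

lemma prod_prod_erase_sub (y : Fin n → R) :
    ∏ j, ∏ k ∈ univ.erase j, (y j - y k) =
      (∏ i, ∏ j ∈ Ioi i, (y i - y j)) * ∏ i, ∏ j ∈ Ioi i, (y j - y i) := by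
  have swap : ∏ i, ∏ j ∈ Ioi i, (y j - y i) = ∏ i, ∏ j ∈ Iio i, (y i - y j) :=
    prod_comm' fun x z ↦ by simp
  rw [swap, ← prod_mul_distrib]
  refine prod_congr rfl fun i _ ↦ ?_
  rw [← prod_union (disjoint_left.2 fun a ↦ by simpa using le_of_lt)]
  congr 1
  ext k
  simp [eq_comm, lt_or_lt_iff_ne]

variable [IsDomain R]

lemma det_cauchyNumeratorMatrix (y : Fin n → R) :
    (cauchyNumeratorMatrix y).det = (Matrix.vandermonde y).det := by
  by_cases hy : Function.Injective y
  · have diagonal : Matrix.projVandermonde 1 y * cauchyNumeratorMatrix y =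
        .diagonal fun j ↦ ∏ k ∈ univ.erase j, (y j - y k) := by
      ext i j
      rw [projVandermonde_mul_cauchyNumeratorMatrix_apply, Matrix.diagonal_apply]
      split_ifs with hij
      · simp [hij]
      · exact prod_eq_zero (i := i) (by simp [hij]) (by simp)
    have det_eq := congrArg Matrix.det diagonal
    rw [Matrix.det_mul, Matrix.det_diagonal, prod_prod_erase_sub,
      Matrix.det_projVandermonde] at det_eq
    simp only [Pi.one_apply, one_mul] at det_eq
    rw [Matrix.det_vandermonde]
    refine mul_left_cancel₀ (prod_ne_zero_iff.2 fun i _ ↦ prod_ne_zero_iff.2 fun j hj ↦ ?_) det_eq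
    exact sub_ne_zero.2 (hy.ne (mem_Ioi.1 hj).ne)
  · obtain ⟨i, j, hij, hne⟩ := Function.not_injective_iff.1 hy
    rw [Matrix.det_vandermonde_eq_zero_iff.2 ⟨i, j, hij, hne⟩]
    refine Matrix.det_zero_of_column_eq hne fun t ↦ ?_
    have map_erase (j : Fin n) : (univ.erase j).val.map (fun k ↦ -y k) =
        (univ.val.map fun k ↦ -y k).erase (-y j) := by
      rw [erase_val, Multiset.map_erase_of_mem _ _ (mem_univ j)]
    simp only [cauchyNumeratorMatrix, Matrix.of_apply, ← esymm_map_val, map_erase, hij]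

theorem det_vandermonde_mul_det_vandermonde_mul_prod (x y : Fin n → R)
    (u : Fin n → Fin n → R) (hu : ∀ i j, (1 - x i * y j) * u i j = 1) :
    (Matrix.vandermonde x).det * (Matrix.vandermonde y).det * ∏ i, ∏ j, u i j =
      (Matrix.of u).det := by
  have scaled : Matrix.projVandermonde x 1 * cauchyNumeratorMatrix y =
      .of fun i j ↦ (∏ k, (1 - x i * y k)) * Matrix.of u i j := by
    ext i j
    rw [projVandermonde_mul_cauchyNumeratorMatrix_apply, Matrix.of_apply, Matrix.of_apply,
      ← mul_prod_erase _ _ (mem_univ j), mul_right_comm, hu, one_mul]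
    rfl
  have det_eq := congrArg Matrix.det scaled
  rw [Matrix.det_mul, det_cauchyNumeratorMatrix, ← Matrix.vandermonde_eq_projVandermonde,
    Matrix.det_mul_column] at det_eq
  have prod_eq_one : ∏ i, (∏ k, (1 - x i * y k)) * ∏ k, u i k = 1 :=
    prod_eq_one fun i _ ↦ by simp [← prod_mul_distrib, hu]
  rw [det_eq, mul_right_comm, ← prod_mul_distrib, prod_eq_one, one_mul]

end CauchyDeterminant

/-! ### Geometric series of monomials -/

section GeomSeries

variable {R τ : Type*} [CommRing R]

/-- The geometric series `∑ t, X ^ (t • v)`, as a formal power series; it is the inverse of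
`1 - X ^ v` when `v ≠ 0`. -/
noncomputable def geomSeries (R : Type*) [CommRing R] (v : τ →₀ ℕ) : MvPowerSeries τ R :=
  fun d ↦ if ∃ t : ℕ, d = t • v then 1 else 0

lemma coeff_geomSeries (v d : τ →₀ ℕ) :
    MvPowerSeries.coeff d (geomSeries R v) = if ∃ t : ℕ, d = t • v then 1 else 0 := rfl

lemma exists_eq_nsmul_iff_tsub {v d : τ →₀ ℕ} (hv : v ≠ 0) (hd : v ≤ d) :
    (∃ t : ℕ, d = t • v) ↔ ∃ t : ℕ, d - v = t • v := by
  constructor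
  · rintro ⟨_ | t, rfl⟩
    · exact absurd (le_antisymm (by simpa using hd) zero_le) hv
    · exact ⟨t, by rw [succ_nsmul, add_tsub_cancel_right]⟩
  · rintro ⟨t, ht⟩
    exact ⟨t + 1, by rw [succ_nsmul, ← ht, tsub_add_cancel_of_le hd]⟩

lemma exists_eq_nsmul_iff_eq_zero {v d : τ →₀ ℕ} (hd : ¬v ≤ d) :
    (∃ t : ℕ, d = t • v) ↔ d = 0 := by
  constructor
  · rintro ⟨_ | t, rfl⟩
    · exact zero_nsmul v
    · exact absurd (by rw [succ_nsmul]; exact le_add_self) hd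
  · rintro rfl
    exact ⟨0, (zero_nsmul v).symm⟩

lemma one_sub_monomial_mul_geomSeries {v : τ →₀ ℕ} (hv : v ≠ 0) :
    (1 - MvPowerSeries.monomial v (1 : R)) * geomSeries R v = 1 := by
  ext d
  rw [sub_mul, one_mul, map_sub, MvPowerSeries.coeff_monomial_mul, MvPowerSeries.coeff_one]
  by_cases hd : v ≤ d
  · have hd0 : d ≠ 0 := fun h ↦ hv (le_antisymm (h ▸ hd) zero_le)
    simp [coeff_geomSeries, hd, hd0, exists_eq_nsmul_iff_tsub hv hd]
  · simp [coeff_geomSeries, hd, exists_eq_nsmul_iff_eq_zero hd]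

lemma coeff_prod_geomSeries {ι : Type*} [Fintype ι] {v : ι → τ →₀ ℕ} (hv : ∀ s, v s ≠ 0)
    (d : τ →₀ ℕ) :
    MvPowerSeries.coeff d (∏ s, geomSeries R (v s)) =
      Nat.card {A : ι → ℕ // ∑ s, A s • v s = d} := by
  simp only [MvPowerSeries.coeff_prod, coeff_geomSeries, prod_boole, mem_univ, true_imp_iff,
    sum_boole]
  congr 1
  rw [← Fintype.card_coe, ← Nat.card_eq_fintype_card]
  refine (Nat.card_eq_of_bijective (fun A ↦
    ⟨Finsupp.equivFunOnFinite.symm fun s ↦ A.1 s • v s, ?mem⟩) ⟨?_, ?_⟩).symm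
  case mem =>
    simpa [mem_finsuppAntidiag, A.2] using fun s ↦ ⟨A.1 s, rfl⟩
  · rintro ⟨A, hA⟩ ⟨B, hB⟩ hAB
    ext s
    have smul_eq : A s • v s = B s • v s := by
      simpa using congrFun (Finsupp.equivFunOnFinite.symm.injective (Subtype.mk.inj hAB)) s
    exact (nsmul_left_strictMono (pos_of_ne_zero (hv s))).injective smul_eq
  · rintro ⟨l, hl⟩
    obtain ⟨hl, hmul⟩ := mem_filter.1 hl
    choose A hA using hmul
    refine ⟨⟨A, ?_⟩, Subtype.ext (Finsupp.ext fun s ↦ (hA s).symm)⟩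
    rw [← (mem_finsuppAntidiag.1 hl).1]
    exact sum_congr rfl fun s _ ↦ (hA s).symm

end GeomSeries

/-! ### Contingency tables -/

section ContingencyTables

/-- The number of contingency tables (matrices of natural numbers) with row sums `r` and column
sums `c`. The margins are integers, so that there are no tables when one of them is negative. -/
noncomputable def contingencyCount {ι κ : Type*} [Fintype ι] [Fintype κ] (r : ι → ℤ) (c : κ → ℤ) :
    ℕ :=
  Nat.card {A : ι × κ → ℕ // (∀ i, ∑ j, (A (i, j) : ℤ) = r i) ∧ ∀ j, ∑ i, (A (i, j) : ℤ) = c j}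

/-- The exponent vector of the monomial `x i * y j` in two families of variables. -/
noncomputable def edgeExponent {ι κ : Type*} (i : ι) (j : κ) : ι ⊕ κ →₀ ℕ :=
  .single (.inl i) 1 + .single (.inr j) 1

lemma edgeExponent_ne_zero {ι κ : Type*} (i : ι) (j : κ) : edgeExponent i j ≠ 0 := fun h ↦ by
  simpa [edgeExponent] using DFunLike.congr_fun h (.inl i)

lemma one_sub_X_mul_X_mul_geomSeries {R ι κ : Type*} [CommRing R] (i : ι) (j : κ) :
    (1 - MvPowerSeries.X (.inl i) * MvPowerSeries.X (.inr j)) *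
      geomSeries R (edgeExponent i j) = 1 := by
  rw [MvPowerSeries.X, MvPowerSeries.X, MvPowerSeries.monomial_mul_monomial, one_mul]
  exact one_sub_monomial_mul_geomSeries (edgeExponent_ne_zero i j)

variable {ι κ : Type*} [Fintype ι] [Fintype κ]

/-- The exponent vector of the monomial `x ^ a * y ^ b` in two families of variables. -/
noncomputable def sumExponent (a : ι → ℕ) (b : κ → ℕ) : ι ⊕ κ →₀ ℕ :=
  Finsupp.equivFunOnFinite.symm (Sum.elim a b)

lemma prod_X_pow_mul_prod_X_pow {R : Type*} [CommRing R] (a : ι → ℕ) (b : κ → ℕ) :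
    (∏ i, (MvPowerSeries.X (.inl i) : MvPowerSeries (ι ⊕ κ) R) ^ a i) *
      ∏ j, MvPowerSeries.X (.inr j) ^ b j = MvPowerSeries.monomial (sumExponent a b) 1 := by
  simp only [MvPowerSeries.X_pow_eq, MvPowerSeries.prod_monomial,
    MvPowerSeries.monomial_mul_monomial, prod_const_one, mul_one]
  congr 2
  ext (i | j) <;> simp [sumExponent, Finsupp.single_apply]

lemma sum_smul_edgeExponent_add_sumExponent_eq_iff (A : ι × κ → ℕ) (a c : ι → ℕ) (b d : κ → ℕ) :
    ∑ s, A s • edgeExponent s.1 s.2 + sumExponent a b = sumExponent c d ↔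
      (∀ i, ∑ j, (A (i, j) : ℤ) = c i - a i) ∧ ∀ j, ∑ i, (A (i, j) : ℤ) = d j - b j := by
  rw [DFunLike.ext_iff, Sum.forall, Fintype.sum_prod_type]
  simp only [eq_sub_iff_add_eq]
  norm_cast
  simp [edgeExponent, sumExponent, Finsupp.single_apply]

lemma coeff_monomial_mul_prod_geomSeries {R : Type*} [CommRing R] (a c : ι → ℕ) (b d : κ → ℕ) :
    MvPowerSeries.coeff (sumExponent c d) (MvPowerSeries.monomial (sumExponent a b) (1 : R) *
      ∏ s : ι × κ, geomSeries R (edgeExponent s.1 s.2)) =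
      contingencyCount (fun i ↦ (c i - a i : ℤ)) (fun j ↦ (d j - b j : ℤ)) := by
  rw [MvPowerSeries.coeff_monomial_mul, contingencyCount]
  simp only [← sum_smul_edgeExponent_add_sumExponent_eq_iff]
  split_ifs with h
  · simp only [one_mul, coeff_prod_geomSeries fun s : ι × κ ↦ edgeExponent_ne_zero s.1 s.2,
      eq_tsub_iff_add_eq_of_le h]
  · have : IsEmpty {A : ι × κ → ℕ // ∑ s, A s • edgeExponent s.1 s.2 + sumExponent a b =
        sumExponent c d} := ⟨fun A ↦ h (A.2 ▸ le_add_self)⟩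
    rw [Nat.card_of_isEmpty, Nat.cast_zero]

variable {n : ℕ}

lemma sum_smul_edgeExponent_perm_eq_iff {l : Fin n → ℕ} (hl : Function.Injective l)
    (σ : Perm (Fin n)) (A : Fin n → ℕ) :
    ∑ s, A s • edgeExponent (σ s) s = sumExponent l l ↔ A = l ∧ σ = 1 := by
  have left_apply (i : Fin n) : (∑ s, A s • edgeExponent (σ s) s) (.inl i) = A (σ.symm i) := by
    simp [edgeExponent, Finsupp.finsetSum_apply, Finsupp.single_apply, ← eq_symm_apply]
  have right_apply (j : Fin n) : (∑ s, A s • edgeExponent (σ s) s) (.inr j) = A j := by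
    simp [edgeExponent, Finsupp.finsetSum_apply, Finsupp.single_apply]
  rw [DFunLike.ext_iff, Sum.forall]
  simp only [left_apply, right_apply, sumExponent,
    Finsupp.equivFunOnFinite_symm_apply_apply, Sum.elim_inl, Sum.elim_inr]
  constructor
  · rintro ⟨h_left, h_right⟩
    refine ⟨funext h_right, Perm.ext fun i ↦ hl ?_⟩
    rw [Perm.one_apply, ← h_left, symm_apply_apply, h_right]
  · rintro ⟨rfl, rfl⟩
    exact ⟨fun i ↦ rfl, fun j ↦ rfl⟩

lemma coeff_det_geomSeries {R : Type*} [CommRing R] {l : Fin n → ℕ} (hl : Function.Injective l) :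
    MvPowerSeries.coeff (sumExponent l l)
      (Matrix.of fun i j ↦ geomSeries R (edgeExponent i j)).det = 1 := by
  have coeff_term (σ : Perm (Fin n)) : MvPowerSeries.coeff (sumExponent l l)
      (∏ j, geomSeries R (edgeExponent (σ j) j)) = if σ = 1 then 1 else 0 := by
    rw [coeff_prod_geomSeries fun j ↦ edgeExponent_ne_zero (σ j) j]
    simp only [sum_smul_edgeExponent_perm_eq_iff hl]
    split_ifs with hσ <;> simp [hσ]
  simp only [Matrix.det_apply, Units.smul_def, Matrix.of_apply, map_sum, map_zsmul, coeff_term]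
  simp

lemma det_vandermonde_X_mul_det_vandermonde_X (R : Type*) [CommRing R] :
    (Matrix.vandermonde fun i : Fin n ↦ MvPowerSeries.X (R := R) (.inl i : Fin n ⊕ Fin n)).det *
      (Matrix.vandermonde fun j ↦ MvPowerSeries.X (.inr j)).det =
    ∑ σ : Perm (Fin n), ∑ τ : Perm (Fin n), ((Perm.sign σ * Perm.sign τ : ℤˣ) : ℤ) •
      MvPowerSeries.monomial (sumExponent (fun i ↦ (σ i : ℕ)) fun j ↦ (τ j : ℕ)) (1 : R) := by
  rw [← Matrix.det_transpose, ← Matrix.det_transpose (Matrix.vandermonde _), Matrix.det_apply,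
    Matrix.det_apply, sum_mul_sum]
  refine sum_congr rfl fun σ _ ↦ sum_congr rfl fun τ _ ↦ ?_
  rw [smul_mul_smul_comm, Units.smul_def, ← prod_X_pow_mul_prod_X_pow]
  rfl

/-- The exponents `l i - σ i` of the term of the determinant `det (h (l i - j))` that belongs to
the permutation `σ`. -/
def betaShift (l : Fin n → ℕ) (σ : Perm (Fin n)) (i : Fin n) : ℤ := l i - (σ i : ℕ)

/- Compare the coefficients of `x ^ l * y ^ l` on the two sides of Cauchy's determinant for
`1 / (1 - x i * y j)`. -/
theorem sum_sign_mul_contingencyCount {l : Fin n → ℕ} (hl : Function.Injective l) :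
    ∑ σ : Perm (Fin n), ∑ τ : Perm (Fin n), ((Perm.sign σ * Perm.sign τ : ℤˣ) : ℤ) *
      (contingencyCount (betaShift l σ) (betaShift l τ) : ℤ) = 1 := by
  have : IsDomain (MvPowerSeries (Fin n ⊕ Fin n) ℤ) := NoZeroDivisors.to_isDomain _
  have cauchy := det_vandermonde_mul_det_vandermonde_mul_prod
    (fun i ↦ MvPowerSeries.X (R := ℤ) (.inl i : Fin n ⊕ Fin n)) (fun j ↦ MvPowerSeries.X (.inr j))
    (fun i j ↦ geomSeries ℤ (edgeExponent i j)) one_sub_X_mul_X_mul_geomSeries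
  rw [det_vandermonde_X_mul_det_vandermonde_X, ← Fintype.prod_prod_type'] at cauchy
  rw [← coeff_det_geomSeries (R := ℤ) hl, ← cauchy]
  simp only [sum_mul, map_sum, smul_mul_assoc, map_zsmul, coeff_monomial_mul_prod_geomSeries,
    smul_eq_mul]
  rfl

end ContingencyTables

/-! ### Words and their contents -/

section Content

variable {α κ ι : Type*}

/-- The content of a word `F : α → κ`: how often each letter `i` occurs in it. -/
noncomputable def content (F : α → κ) (i : κ) : ℕ := Nat.card {x // F x = i}

lemma content_comp_perm (F : α → κ) (g : Perm α) : content (F ∘ g) = content F :=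
  funext fun _ ↦ Nat.card_congr (g.subtypeEquiv fun _ ↦ Iff.rfl)

lemma content_eq_card_filter [Fintype α] (F : α → κ) (i : κ) : content F i = #{x | F x = i} := by
  rw [content, Nat.card_eq_fintype_card, Fintype.card_subtype]

lemma content_fst_comp [Finite α] [Fintype κ] (F : α → ι × κ) (i : ι) :
    content (Prod.fst ∘ F) i = ∑ j, content F (i, j) := by
  have := Fintype.ofFinite α
  simp only [content_eq_card_filter, Prod.ext_iff, ← filter_filter]
  exact card_eq_sum_card_fiberwise fun _ _ ↦ mem_univ _

lemma content_snd_comp [Finite α] [Fintype ι] (F : α → ι × κ) (j : κ) :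
    content (Prod.snd ∘ F) j = ∑ i, content F (i, j) := by
  have := Fintype.ofFinite α
  simp only [content_eq_card_filter, Prod.ext_iff, and_comm (b := _ = j), ← filter_filter]
  exact card_eq_sum_card_fiberwise fun _ _ ↦ mem_univ _

lemma sum_content [Fintype α] [Fintype κ] (F : α → κ) : ∑ i, content F i = Fintype.card α := by
  simp only [content_eq_card_filter, ← card_eq_sum_card_fiberwise (fun x _ ↦ mem_univ (F x)),
    card_univ]

lemma exists_content_eq [Fintype α] [Fintype κ] {a : κ → ℕ} (ha : ∑ i, a i = Fintype.card α) :
    ∃ F : α → κ, content F = a := by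
  have e : α ≃ Σ i, Fin (a i) := Fintype.equivOfCardEq (by simp [ha])
  refine ⟨fun x ↦ (e x).1, funext fun i ↦ ?_⟩
  have fiber : {x // (e x).1 = i} ≃ Fin (a i) :=
    (e.subtypeEquiv (q := fun y ↦ y.1 = i) fun _ ↦ Iff.rfl).trans (sigmaSubtype i)
  rw [content, Nat.card_congr fiber, Nat.card_fin]

lemma exists_comp_perm_eq_of_content_eq [Finite α] {F F' : α → κ} (h : content F = content F') :
    ∃ g : Perm α, F ∘ g = F' := by
  have e (i : κ) : {x // F' x = i} ≃ {x // F x = i} :=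
    (Finite.card_eq.1 (congrFun h i).symm).some
  exact ⟨ofFiberEquiv e, funext (ofFiberEquiv_map e)⟩

lemma card_comp_perm_eq_self [Finite α] [Fintype κ] (F : α → κ) :
    Nat.card {g : Perm α // F ∘ g = F} = ∏ i, (content F i).factorial := by
  have := Fintype.ofFinite α
  simp only [content, Nat.card_eq_fintype_card, DomMulAct.stabilizer_card]

end Content

section Word

variable {α κ ι : Type*}

/-- The words with letters in `κ` and positions in `α` of content `a`. Contents are
integer-valued, so that there are no words when a multiplicity is negative. -/
def Word (α : Type*) {κ : Type*} (a : κ → ℤ) : Type _ := {F : α → κ // ∀ i, (content F i : ℤ) = a i}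

namespace Word

instance (a : κ → ℤ) : MulAction (Perm α) (Word α a) where
  smul g F := ⟨F.1 ∘ ⇑g⁻¹, fun i ↦ by rw [content_comp_perm, F.2]⟩
  one_smul _ := rfl
  mul_smul _ _ _ := Subtype.ext (by simp only [HSMul.hSMul, mul_inv_rev]; rfl)

lemma smul_val {a : κ → ℤ} (g : Perm α) (F : Word α a) : (g • F).1 = F.1 ∘ ⇑g⁻¹ := rfl

lemma isEmpty_of_neg {a : κ → ℤ} {i : κ} (ha : a i < 0) : IsEmpty (Word α a) where
  false F := ha.not_ge (F.2 i ▸ Int.natCast_nonneg _)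

noncomputable instance [Fintype α] [Fintype κ] (a : κ → ℤ) : Fintype (Word α a) :=
  inferInstanceAs (Fintype {_F // _})

instance isPretransitive [Finite α] (a : κ → ℤ) :
    MulAction.IsPretransitive (Perm α) (Word α a) where
  exists_smul_eq F F' := by
    obtain ⟨g, hg⟩ := exists_comp_perm_eq_of_content_eq (F := F.1) (F' := F'.1)
      (funext fun i ↦ Nat.cast_injective ((F.2 i).trans (F'.2 i).symm))
    exact ⟨g⁻¹, Subtype.ext (by rw [smul_val, inv_inv, hg])⟩

/-- The contingency table of a pair of words: the content of the word of pairs of letters. -/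
noncomputable def table {a : ι → ℤ} {b : κ → ℤ} (F : Word α a × Word α b) : ι × κ → ℕ :=
  content fun x ↦ (F.1.1 x, F.2.1 x)

lemma table_eq_iff_mem_orbit [Finite α] {a : ι → ℤ} {b : κ → ℤ} {F F' : Word α a × Word α b} :
    table F = table F' ↔ F ∈ MulAction.orbit (Perm α) F' := by
  constructor
  · intro h
    obtain ⟨g, hg⟩ := exists_comp_perm_eq_of_content_eq h.symm
    refine MulAction.mem_orbit_iff.2 ⟨g⁻¹, Prod.ext (Subtype.ext ?_) (Subtype.ext ?_)⟩
    · rw [Prod.smul_fst, smul_val, inv_inv]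
      exact congrArg (Prod.fst ∘ ·) hg
    · rw [Prod.smul_snd, smul_val, inv_inv]
      exact congrArg (Prod.snd ∘ ·) hg
  · rintro ⟨g, rfl⟩
    exact content_comp_perm (fun x ↦ (F'.1.1 x, F'.2.1 x)) g⁻¹

lemma isEmpty_of_sum_ne [Fintype α] [Fintype κ] {a : κ → ℤ} (ha : ∑ i, a i ≠ Fintype.card α) :
    IsEmpty (Word α a) where
  false F := ha (by simp only [← F.2, ← sum_content F.1, Nat.cast_sum])

lemma card_stabilizer [Finite α] [Fintype κ] {a : κ → ℕ} (F : Word α fun i ↦ (a i : ℤ)) :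
    Nat.card (MulAction.stabilizer (Perm α) F) = ∏ i, (a i).factorial := by
  have content_eq (i : κ) : content F.1 i = a i := Nat.cast_injective (F.2 i)
  simp only [← content_eq, ← card_comp_perm_eq_self]
  refine Nat.card_congr ((Equiv.inv (Perm α)).subtypeEquiv fun g ↦ ?_)
  exact MulAction.mem_stabilizer_iff.trans Subtype.ext_iff

theorem card_mul_prod_factorial [Fintype α] [Fintype κ] {a : κ → ℕ}
    (ha : ∑ i, a i = Fintype.card α) :
    Nat.card (Word α fun i ↦ (a i : ℤ)) * ∏ i, (a i).factorial = (Fintype.card α).factorial := by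
  obtain ⟨F, rfl⟩ := exists_content_eq ha
  let W : Word α fun i ↦ (content F i : ℤ) := ⟨F, fun i ↦ rfl⟩
  rw [← card_stabilizer W, ← MulAction.index_stabilizer_of_transitive (Perm α) W, mul_comm,
    Subgroup.card_mul_index, Nat.card_perm, Nat.card_eq_fintype_card]

variable {a : ι → ℤ} {b : κ → ℤ}

lemma sum_table_right [Finite α] [Fintype κ] (F : Word α a × Word α b) (i : ι) :
    ∑ j, (table F (i, j) : ℤ) = a i := by
  rw [← F.1.2 i, ← Nat.cast_sum, table, ← content_fst_comp]
  rfl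

lemma sum_table_left [Finite α] [Fintype ι] (F : Word α a × Word α b) (j : κ) :
    ∑ i, (table F (i, j) : ℤ) = b j := by
  rw [← F.2.2 j, ← Nat.cast_sum, table, ← content_snd_comp]
  rfl

variable [Fintype α] [Fintype ι] [Fintype κ]

lemma exists_table_eq (ha : ∑ i, a i = Fintype.card α) {A : ι × κ → ℕ}
    (hrow : ∀ i, ∑ j, (A (i, j) : ℤ) = a i) (hcol : ∀ j, ∑ i, (A (i, j) : ℤ) = b j) :
    ∃ F : Word α a × Word α b, table F = A := by
  have total : ∑ s, A s = Fintype.card α := by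
    rw [Fintype.sum_prod_type, ← Nat.cast_inj (R := ℤ), ← ha]
    simp only [Nat.cast_sum, hrow]
  obtain ⟨F, rfl⟩ := exists_content_eq total
  refine ⟨(⟨Prod.fst ∘ F, fun i ↦ ?_⟩, ⟨Prod.snd ∘ F, fun j ↦ ?_⟩), rfl⟩
  · rw [content_fst_comp, Nat.cast_sum, hrow]
  · rw [content_snd_comp, Nat.cast_sum, hcol]

theorem card_orbits_prod (ha : ∑ i, a i = Fintype.card α) :
    Nat.card (MulAction.orbitRel.Quotient (Perm α) (Word α a × Word α b)) =
      contingencyCount a b := by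
  refine Nat.card_eq_of_bijective (Quotient.lift (fun F ↦
    ⟨table F, sum_table_right F, sum_table_left F⟩)
    fun F F' h ↦ Subtype.ext (table_eq_iff_mem_orbit.2 h)) ⟨?_, ?_⟩
  · rintro ⟨F⟩ ⟨F'⟩ h
    exact Quotient.sound (table_eq_iff_mem_orbit.1 (Subtype.mk.inj h))
  · rintro ⟨A, hrow, hcol⟩
    obtain ⟨F, rfl⟩ := exists_table_eq ha hrow hcol
    exact ⟨Quotient.mk _ F, rfl⟩

end Word

end Word

/-! ### Permutation characters -/

section PermCharacter

variable {α κ ι : Type*}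

/-- The permutation character of `Perm α` on the words of content `a`; it is the character induced
from the trivial character of a Young subgroup when `a` is a composition of the size of `α`, and
zero otherwise. -/
noncomputable def permCharacter (K : Type*) [Semiring K] (a : κ → ℤ) (g : Perm α) : K :=
  (Nat.card (MulAction.fixedBy (Word α a) g) : K)

variable {K : Type*} [Semiring K]

lemma permCharacter_inv (a : κ → ℤ) (g : Perm α) :
    permCharacter K a g⁻¹ = permCharacter K a g := by
  rw [permCharacter, MulAction.fixedBy_inv, permCharacter]

lemma content_perm_comp (s : Perm κ) (F : α → κ) (i : κ) :
    content (s ∘ F) (s i) = content F i :=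
  Nat.card_congr (Equiv.subtypeEquivRight fun _ ↦ s.apply_eq_iff_eq)

theorem permCharacter_comp_perm (a : κ → ℤ) (s : Perm κ) :
    permCharacter (α := α) K (a ∘ s) = permCharacter K a := by
  let e : Word α (a ∘ s) ≃ Word α a := ((Equiv.refl α).arrowCongr s).subtypeEquiv fun F ↦
    (s.forall_congr fun i ↦ by rw [← content_perm_comp s F]; rfl)
  have smul_e (g : Perm α) (F : Word α (a ∘ s)) : g • e F = e (g • F) := rfl
  funext g
  refine congrArg Nat.cast (Nat.card_congr (e.subtypeEquiv fun F ↦ ?_))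
  rw [MulAction.mem_fixedBy, MulAction.mem_fixedBy, smul_e, e.apply_eq_iff_eq]

lemma injective_of_content_eq_one {F : α → κ} (hF : ∀ i, content F i = 1) :
    Function.Injective F := by
  intro x y hxy
  have := (Nat.card_eq_one_iff_unique.1 (hF (F y))).1
  exact congrArg Subtype.val (Subsingleton.elim (⟨x, hxy⟩ : {x // F x = F y}) ⟨y, rfl⟩)

variable [Fintype α] [Fintype κ]

theorem permCharacter_eq_zero {a : κ → ℤ} (ha : ¬((∀ i, 0 ≤ a i) ∧ ∑ i, a i = Fintype.card α)) :
    permCharacter (α := α) K a = 0 := by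
  have : IsEmpty (Word α a) := by
    rw [not_and_or, not_forall] at ha
    rcases ha with ⟨i, hi⟩ | hsum
    · exact Word.isEmpty_of_neg (not_le.1 hi)
    · exact Word.isEmpty_of_sum_ne hsum
  funext g
  simp [permCharacter]

lemma permCharacter_one_mul_prod_factorial {a : κ → ℕ} (ha : ∑ i, a i = Fintype.card α) :
    permCharacter (α := α) K (fun i ↦ (a i : ℤ)) 1 * (∏ i, (a i).factorial : ℕ) =
      (Fintype.card α).factorial := by
  rw [← Word.card_mul_prod_factorial ha, permCharacter, MulAction.fixedBy_one_eq_univ,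
    Nat.card_univ, Nat.cast_mul]

/- Burnside's lemma for the action on pairs of words. -/
theorem sum_permCharacter_mul_permCharacter [Fintype ι] {a : ι → ℤ} (b : κ → ℤ)
    (ha : ∑ i, a i = Fintype.card α) :
    ∑ g : Perm α, permCharacter K a g * permCharacter K b g =
      contingencyCount a b * Nat.card (Perm α) := by
  have fixedBy_prod (g : Perm α) : MulAction.fixedBy (Word α a × Word α b) g =
      MulAction.fixedBy (Word α a) g ×ˢ MulAction.fixedBy (Word α b) g :=
    Set.ext fun F ↦ Prod.ext_iff
  have burnside := MulAction.sum_card_fixedBy_eq_card_orbits_mul_card_group (Perm α)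
    (Word α a × Word α b)
  simp only [← Nat.card_eq_fintype_card, Word.card_orbits_prod ha, fixedBy_prod,
    Nat.card_coe_set_eq, Set.ncard_prod] at burnside
  simp only [permCharacter, Nat.card_coe_set_eq]
  exact_mod_cast congrArg (Nat.cast (R := K)) burnside

theorem permCharacter_const_one (hκ : Fintype.card κ = Fintype.card α) (g : Perm α) :
    permCharacter K (fun _ : κ ↦ 1) g = if g = 1 then (Nat.card (Perm α) : K) else 0 := by
  split_ifs with hg
  · rw [hg, Nat.card_perm, Nat.card_eq_fintype_card]
    simpa using permCharacter_one_mul_prod_factorial (α := α) (K := K) (a := fun _ : κ ↦ 1)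
      (by simp [hκ])
  · have : IsEmpty (MulAction.fixedBy (Word α fun _ : κ ↦ 1) g) := by
      refine ⟨fun ⟨F, hF⟩ ↦ hg (inv_eq_one.1 (Perm.ext fun x ↦ ?_))⟩
      have F_injective := injective_of_content_eq_one fun i ↦ Nat.cast_eq_one.1 (F.2 i)
      exact F_injective (congrFun (congrArg Subtype.val hF) x)
    rw [permCharacter, Nat.card_of_isEmpty, Nat.cast_zero]

end PermCharacter

/-! ### The lattice of virtual characters of a finite group -/

section Characters

open CategoryTheory

universe u

section Field

variable {K : Type u} {G V : Type*} [Field K] [AddCommGroup V] [Module K V]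

theorem character_ofMulAction [Monoid G] {X : Type*} [MulAction G X] [Finite X] (g : G) :
    (Representation.ofMulAction K G X).character g = Nat.card (MulAction.fixedBy X g) := by
  have := Fintype.ofFinite X
  have diagonal_entry (x : X) : (MonoidAlgebra.basis X K).repr (MonoidAlgebra.single (g • x) 1) x =
      if g • x = x then 1 else 0 := by
    rw [← MonoidAlgebra.basis_apply, Module.Basis.repr_self, Finsupp.single_apply]
  simp [Representation.character, LinearMap.trace_eq_matrix_trace K (MonoidAlgebra.basis X K),
    Matrix.trace, LinearMap.toMatrix_apply, diagonal_entry, Fintype.card_subtype]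

lemma isCompl_toSubmodule [Monoid G] {ρ : Representation K G V} {W W' : Subrepresentation ρ}
    (h : IsCompl W W') : IsCompl W.toSubmodule W'.toSubmodule :=
  ⟨disjoint_iff.2 (congrArg Subrepresentation.toSubmodule (disjoint_iff.1 h.1)),
    codisjoint_iff.2 (congrArg Subrepresentation.toSubmodule (codisjoint_iff.1 h.2))⟩

theorem character_eq_add_of_isCompl [Monoid G] [FiniteDimensional K V] {ρ : Representation K G V}
    {W W' : Subrepresentation ρ} (h : IsCompl W W') :
    ρ.character = W.toRepresentation.character + W'.toRepresentation.character := by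
  have isInternal : DirectSum.IsInternal fun b ↦ cond b W.toSubmodule W'.toSubmodule :=
    (DirectSum.isInternal_submodule_iff_isCompl _ (i := true) (j := false) (by simp)
      (by ext b; cases b <;> simp)).2 (isCompl_toSubmodule h)
  funext g
  have trace_eq := LinearMap.trace_eq_sum_trace_restrict (f := ρ g) isInternal fun b ↦ by
    cases b
    · exact W'.apply_mem_toSubmodule g
    · exact W.apply_mem_toSubmodule g
  rwa [Fintype.sum_bool] at trace_eq

lemma character_eq_zero_of_subsingleton [Monoid G] [Subsingleton V] (ρ : Representation K G V) :
    ρ.character = 0 := by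
  funext g
  rw [Representation.character, Subsingleton.elim (ρ g) 0, map_zero, Pi.zero_apply]

theorem exists_isCompl_of_not_isIrreducible [Group G] [Finite G] [NeZero (Nat.card G : K)]
    [Nontrivial V] {ρ : Representation K G V} (hρ : ¬ρ.IsIrreducible) :
    ∃ W W' : Subrepresentation ρ, IsCompl W W' ∧ W.toSubmodule ≠ ⊥ ∧ W'.toSubmodule ≠ ⊥ := by
  have : Nontrivial (Subrepresentation ρ) :=
    ⟨⊥, ⊤, fun h ↦ bot_ne_top (congrArg Subrepresentation.toSubmodule h)⟩
  obtain ⟨W, hbot, htop⟩ : ∃ W : Subrepresentation ρ, W ≠ ⊥ ∧ W ≠ ⊤ := by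
    by_contra! h
    exact hρ (IsSimpleOrder.of_forall_eq_top h)
  obtain ⟨W', hW⟩ := exists_isCompl W
  refine ⟨W, W', hW, fun h ↦ hbot (Subrepresentation.toSubmodule_injective h), fun h ↦ htop ?_⟩
  rw [← codisjoint_bot, ← Subrepresentation.toSubmodule_injective (a₂ := ⊥) h]
  exact hW.codisjoint

/-- The bilinear pairing `|G|⁻¹ ∑ g, f g * f' g⁻¹` of functions on `G`, which agrees with the
Hermitian inner product on complex characters. -/
noncomputable def characterPairing (K : Type u) (G : Type*) [Field K] [Group G] [Fintype G] :
    (G → K) →ₗ[K] (G → K) →ₗ[K] K :=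
  (Nat.card G : K)⁻¹ • ∑ g, (LinearMap.proj g).smulRight (LinearMap.proj g⁻¹)

lemma characterPairing_apply [Group G] [Fintype G] (f f' : G → K) :
    characterPairing K G f f' = (Nat.card G : K)⁻¹ * ∑ g, f g * f' g⁻¹ := by
  simp [characterPairing]

end Field

variable (K G : Type u) [Field K] [Group G]

/-- The set of irreducible characters of `G` over `K`. -/
def irreducibleCharacters : Set (G → K) :=
  {f | ∃ V : FDRep K G, Simple V ∧ V.character = f}

variable {K G} [IsAlgClosed K] [CharZero K]

theorem characterPairing_irreducibleCharacters [Fintype G] {f f' : G → K}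
    (hf : f ∈ irreducibleCharacters K G) (hf' : f' ∈ irreducibleCharacters K G) :
    characterPairing K G f f' = if f = f' then 1 else 0 := by
  obtain ⟨V, hV, rfl⟩ := hf
  obtain ⟨W, hW, rfl⟩ := hf'
  have := invertibleOfNonzero (Nat.cast_ne_zero.2 Nat.card_pos.ne' : (Nat.card G : K) ≠ 0)
  rw [characterPairing_apply, FDRep.char_orthonormal V W]
  by_cases iso : Nonempty (V ≅ W)
  · rw [if_pos iso, if_pos (FDRep.char_iso iso.some)]
  · rw [if_neg iso, if_neg]
    intro character_eq
    have orthogonal := FDRep.char_orthonormal V W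
    have norm_one := FDRep.char_orthonormal V V
    rw [if_neg iso, ← character_eq] at orthogonal
    rw [if_pos ⟨Iso.refl V⟩, orthogonal] at norm_one
    exact zero_ne_one norm_one

theorem character_mem_irreducibleCharacters [Finite G] {V : Type u} [AddCommGroup V]
    [Module K V] [FiniteDimensional K V] (ρ : Representation K G V) [ρ.IsIrreducible] :
    ρ.character ∈ irreducibleCharacters K G := by
  refine ⟨FDRep.of ρ, ?_, rfl⟩
  have := Fintype.ofFinite G
  have := invertibleOfNonzero (Nat.cast_ne_zero.2 Nat.card_pos.ne' : (Nat.card G : K) ≠ 0)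
  have orthonormal := Representation.char_orthonormal ρ ρ
  rw [if_pos ⟨Representation.Equiv.refl ρ⟩] at orthonormal
  rw [FDRep.simple_iff_char_is_norm_one]
  exact (inv_mul_eq_one₀ (Nat.cast_ne_zero.2 Nat.card_pos.ne')).1 orthonormal |>.symm

theorem character_mem_closure_irreducibleCharacters [Finite G] {V : Type u} [AddCommGroup V]
    [Module K V] [FiniteDimensional K V] (ρ : Representation K G V) :
    ρ.character ∈ AddSubgroup.closure (irreducibleCharacters K G) := by
  induction hd : Module.finrank K V using Nat.strong_induction_on generalizing V with
  | _ d ih =>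
  rcases subsingleton_or_nontrivial V with hV | hV
  · rw [character_eq_zero_of_subsingleton]
    exact zero_mem _
  by_cases irreducible : ρ.IsIrreducible
  · exact AddSubgroup.subset_closure (character_mem_irreducibleCharacters ρ)
  have : NeZero (Nat.card G : K) := ⟨Nat.cast_ne_zero.2 Nat.card_pos.ne'⟩
  obtain ⟨W, W', hW, W_ne_bot, W'_ne_bot⟩ := exists_isCompl_of_not_isIrreducible irreducible
  have finrank_add := Submodule.finrank_add_eq_of_isCompl (isCompl_toSubmodule hW)
  have W_pos := Submodule.one_le_finrank_iff.2 W_ne_bot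
  have W'_pos := Submodule.one_le_finrank_iff.2 W'_ne_bot
  rw [character_eq_add_of_isCompl hW]
  exact add_mem (ih _ (by lia) W.toRepresentation rfl) (ih _ (by lia) W'.toRepresentation rfl)

theorem characterPairing_self_finsupp [Fintype G] {c : (G → K) →₀ ℤ}
    (hc : (c.support : Set (G → K)) ⊆ irreducibleCharacters K G) :
    characterPairing K G (c.sum fun f a ↦ a • f) (c.sum fun f a ↦ a • f) =
      ((∑ f ∈ c.support, c f ^ 2 : ℤ) : K) := by
  simp only [Finsupp.sum, map_sum, LinearMap.sum_apply, map_zsmul, LinearMap.smul_apply]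
  push_cast
  refine sum_congr rfl fun f hf ↦ ?_
  rw [sum_eq_single_of_mem f hf fun f' hf' hne ↦ ?_]
  · simp [characterPairing_irreducibleCharacters (hc hf) (hc hf), sq]
  · simp [characterPairing_irreducibleCharacters (hc hf') (hc hf), hne]

lemma exists_sq_eq_one_of_sum_sq_eq_one {ι : Type*} {s : Finset ι} {c : ι → ℤ}
    (hc : ∀ i ∈ s, c i ≠ 0) (sum_sq : ∑ i ∈ s, c i ^ 2 = 1) :
    ∃ i, s = {i} ∧ c i ^ 2 = 1 := by
  have card_le : (#s : ℤ) ≤ 1 := by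
    rw [← sum_sq, card_eq_sum_ones, Nat.cast_sum]
    exact sum_le_sum fun i hi ↦ Int.add_one_le_of_lt (sq_pos_of_ne_zero (hc i hi))
  have nonempty : s.Nonempty := nonempty_of_sum_ne_zero (sum_sq ▸ one_ne_zero)
  obtain ⟨i, rfl⟩ := card_eq_one.1 (le_antisymm (by exact_mod_cast card_le) nonempty.card_pos)
  exact ⟨i, rfl, by simpa using sum_sq⟩

theorem mem_irreducibleCharacters_or_neg_mem [Fintype G] {f : G → K}
    (hf : f ∈ AddSubgroup.closure (irreducibleCharacters K G))
    (norm_one : characterPairing K G f f = 1) :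
    f ∈ irreducibleCharacters K G ∨ -f ∈ irreducibleCharacters K G := by
  rw [← Submodule.span_int_eq_addSubgroupClosure, Submodule.mem_toAddSubgroup,
    Submodule.mem_span_set] at hf
  obtain ⟨c, hc, rfl⟩ := hf
  rw [characterPairing_self_finsupp hc] at norm_one
  obtain ⟨ψ, support_eq, sq_eq_one⟩ := exists_sq_eq_one_of_sum_sq_eq_one
    (fun ψ ↦ Finsupp.mem_support_iff.1) (by exact_mod_cast norm_one)
  have hψ : ψ ∈ irreducibleCharacters K G := hc (by simp [support_eq])
  rw [Finsupp.sum, support_eq, sum_singleton]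
  rcases sq_eq_one_iff.1 sq_eq_one with h | h
  · exact .inl (by simpa [h])
  · exact .inr (by simpa [h])

theorem exists_degree [Finite G] {f : G → K} (hf : f ∈ irreducibleCharacters K G) :
    ∃ d : ℕ, d ≠ 0 ∧ f 1 = d := by
  have := Fintype.ofFinite G
  have norm_one := characterPairing_irreducibleCharacters hf hf
  obtain ⟨V, -, rfl⟩ := hf
  refine ⟨Module.finrank K V, fun finrank_eq ↦ ?_, V.char_one⟩
  have : Subsingleton V := Module.finrank_zero_iff.1 finrank_eq
  have character_eq : V.character = 0 := character_eq_zero_of_subsingleton V.ρ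
  simp [character_eq] at norm_one

end Characters

/-! ### Hook products -/

section HookProducts

variable {n : ℕ}

/-- The product of the numbers `l i - t` over all `t < l i` outside the range of `l`. If `l` is a
β-set of a partition, the factors with index `i` are the hook lengths in one row of its diagram. -/
noncomputable def hookProd (l : Fin n → ℕ) : ℕ :=
  ∏ i, ∏ t ∈ range (l i) with t ∉ Set.range l, (l i - t)

lemma prod_range_sub_mem_range {l : Fin n → ℕ} (hl : StrictMono l) (i : Fin n) :
    ∏ t ∈ range (l i) with t ∈ Set.range l, (l i - t) = ∏ j ∈ Iio i, (l i - l j) := by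
  have filter_eq : {t ∈ range (l i) | t ∈ Set.range l} = (Iio i).image l := by
    ext t
    simp only [mem_filter, mem_range, Set.mem_range, mem_image, mem_Iio]
    constructor
    · rintro ⟨h, j, rfl⟩
      exact ⟨j, hl.lt_iff_lt.1 h, rfl⟩
    · rintro ⟨j, hj, rfl⟩
      exact ⟨hl hj, j, rfl⟩
  rw [filter_eq, prod_image hl.injective.injOn]

lemma prod_factorial_eq_hookProd_mul {l : Fin n → ℕ} (hl : StrictMono l) :
    ∏ i, (l i).factorial = hookProd l * ∏ i, ∏ j ∈ Iio i, (l i - l j) := by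
  rw [hookProd, ← prod_mul_distrib]
  refine prod_congr rfl fun i _ ↦ ?_
  rw [← prod_range_sub_mem_range hl, mul_comm, prod_filter_mul_prod_filter_not,
    ← Nat.descFactorial_eq_prod_range, Nat.descFactorial_self]

lemma det_vandermonde_natCast {R : Type*} [CommRing R] {l : Fin n → ℕ} (hl : StrictMono l) :
    (Matrix.vandermonde fun i ↦ (l i : R)).det = (∏ i, ∏ j ∈ Iio i, (l i - l j) : ℕ) := by
  rw [Matrix.det_vandermonde, prod_comm' (t' := univ) (s' := fun i ↦ Iio i) (by simp)]
  push_cast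
  refine prod_congr rfl fun i _ ↦ prod_congr rfl fun j hj ↦ ?_
  rw [Nat.cast_sub (hl (mem_Iio.1 hj)).le]

lemma det_vandermonde_eq_sum_descFactorial {R : Type*} [CommRing R] [IsDomain R] (l : Fin n → ℕ) :
    (Matrix.vandermonde fun i ↦ (l i : R)).det =
      ∑ σ : Perm (Fin n), (Perm.sign σ : ℤ) • (∏ i, ((l i).descFactorial (σ i) : R)) := by
  rw [Matrix.det_eval_matrixOfPolynomials_eq_det_vandermonde _ (fun i ↦ descPochhammer R i)
      (fun i ↦ descPochhammer_natDegree R i) (fun i ↦ monic_descPochhammer R i),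
    ← Matrix.det_transpose, Matrix.det_apply]
  simp only [Matrix.transpose_apply, Matrix.of_apply, descPochhammer_eval_eq_descFactorial,
    Units.smul_def]

end HookProducts

/-! ### The determinantal characters of the symmetric group -/

section BetaCharacter

variable {α : Type*} {n : ℕ} {K : Type*}

/-- `l` is the increasing enumeration of the β-set `{p i + i}` of a partition `p 0 ≤ p 1 ≤ ⋯` of `m`
into `n` parts, where parts may be zero. -/
structure IsBetaSet (m : ℕ) (l : Fin n → ℕ) : Prop where
  strictMono : StrictMono l
  sum_eq : ∑ i, l i = m + ∑ i : Fin n, (i : ℕ)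

/-- The character of the symmetric group given by the determinantal formula
`χ = det (h (l i - j))`, where `h a b c ⋯` is the permutation character on words of content
`a, b, c, …`. -/
noncomputable def betaCharacter (K : Type*) [Ring K] (α : Type*) (l : Fin n → ℕ) : Perm α → K :=
  ∑ σ : Perm (Fin n), (Perm.sign σ : ℤ) • permCharacter K (betaShift l σ)

lemma sum_betaShift {m : ℕ} {l : Fin n → ℕ} (sum_l : ∑ i, l i = m + ∑ i : Fin n, (i : ℕ))
    (σ : Perm (Fin n)) : ∑ i, betaShift l σ i = m := by
  simp only [betaShift, sum_sub_distrib, ← Nat.cast_sum, Equiv.sum_comp σ fun i ↦ (i : ℕ), sum_l]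
  simp

variable [Fintype α]

lemma permCharacter_betaShift_one_mul [Ring K] {l : Fin n → ℕ}
    (sum_l : ∑ i, l i = Fintype.card α + ∑ i : Fin n, (i : ℕ)) (σ : Perm (Fin n)) :
    permCharacter (α := α) K (betaShift l σ) 1 * (∏ i, (l i).factorial : ℕ) =
      (Fintype.card α).factorial * (∏ i, (l i).descFactorial (σ i) : ℕ) := by
  by_cases hσ : ∀ i, (σ i : ℕ) ≤ l i
  · have betaShift_eq : betaShift l σ = fun i ↦ ((l i - σ i : ℕ) : ℤ) :=
      funext fun i ↦ (Nat.cast_sub (hσ i)).symm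
    have sum_eq : ∑ i, (l i - (σ i : ℕ)) = Fintype.card α := by
      zify
      rw [← sum_betaShift sum_l σ, betaShift_eq]
    rw [prod_congr rfl fun i _ ↦ (Nat.factorial_mul_descFactorial (hσ i)).symm, prod_mul_distrib,
      Nat.cast_mul, ← mul_assoc, betaShift_eq, permCharacter_one_mul_prod_factorial sum_eq]
  · obtain ⟨i, hi⟩ := not_forall.1 hσ
    have neg : betaShift l σ i < 0 := by rw [betaShift]; lia
    rw [permCharacter_eq_zero fun h ↦ neg.not_ge (h.1 i),
      prod_eq_zero (f := fun i ↦ (l i).descFactorial (σ i)) (mem_univ i)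
        (Nat.descFactorial_eq_zero_iff_lt.2 (not_le.1 hi))]
    simp

/-- The hook length formula. -/
theorem hookProd_mul_betaCharacter_one [Field K] [CharZero K] {l : Fin n → ℕ}
    (hl : IsBetaSet (Fintype.card α) l) :
    hookProd l * betaCharacter K α l 1 = (Fintype.card α).factorial := by
  set v := ∏ i, ∏ j ∈ Iio i, (l i - l j)
  have v_ne_zero : (v : K) ≠ 0 := Nat.cast_ne_zero.2 <| prod_ne_zero_iff.2 fun i _ ↦
    prod_ne_zero_iff.2 fun j hj ↦ (Nat.sub_pos_of_lt (hl.strictMono (mem_Iio.1 hj))).ne'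
  refine mul_right_cancel₀ v_ne_zero ?_
  calc
    hookProd l * betaCharacter K α l 1 * v
      = betaCharacter K α l 1 * (∏ i, (l i).factorial : ℕ) := by
        rw [prod_factorial_eq_hookProd_mul hl.strictMono, Nat.cast_mul]
        ring
    _ = ∑ σ : Perm (Fin n), (Perm.sign σ : ℤ) •
          ((Fintype.card α).factorial * (∏ i, (l i).descFactorial (σ i) : ℕ) : K) := by
        simp only [betaCharacter, Finset.sum_apply, Pi.smul_apply, sum_mul, smul_mul_assoc,
          permCharacter_betaShift_one_mul hl.sum_eq]
    _ = (Fintype.card α).factorial * v := by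
        rw [← det_vandermonde_natCast hl.strictMono, det_vandermonde_eq_sum_descFactorial, mul_sum]
        simp only [mul_smul_comm, Nat.cast_prod]

lemma characterPairing_permCharacter [Field K] [CharZero K] {ι κ : Type*} [Fintype ι] [Fintype κ]
    {a : ι → ℤ} (b : κ → ℤ) (ha : ∑ i, a i = Fintype.card α) :
    characterPairing K (Perm α) (permCharacter K a) (permCharacter K b) = contingencyCount a b := by
  have card_ne_zero : (Nat.card (Perm α) : K) ≠ 0 := Nat.cast_ne_zero.2 Nat.card_pos.ne'
  simp only [characterPairing_apply, permCharacter_inv, sum_permCharacter_mul_permCharacter b ha]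
  field_simp

theorem characterPairing_betaCharacter_self [Field K] [CharZero K] {l : Fin n → ℕ}
    (hl : IsBetaSet (Fintype.card α) l) :
    characterPairing K (Perm α) (betaCharacter K α l) (betaCharacter K α l) = 1 := by
  have norm_one := congrArg (Int.cast (R := K))
    (sum_sign_mul_contingencyCount hl.strictMono.injective)
  push_cast at norm_one
  simp only [betaCharacter, map_sum, map_zsmul, LinearMap.sum_apply, LinearMap.smul_apply,
    characterPairing_permCharacter _ (sum_betaShift hl.sum_eq _), ← norm_one]
  rw [sum_comm]
  simp [mul_assoc, mul_sum, mul_left_comm]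

end BetaCharacter

/-! ### Classification of the irreducible characters of the symmetric group -/

section Classification

variable {n : ℕ}

theorem sum_betaShift_one_sq_lt {l : Fin n → ℕ} (hl : StrictMono l) {σ : Perm (Fin n)}
    (hσ : σ ≠ 1) : ∑ i, betaShift l 1 i ^ 2 < ∑ i, betaShift l σ i ^ 2 := by
  have rearrangement : ∑ i, (l i : ℤ) * (σ i : ℕ) < ∑ i, (l i : ℤ) * (i : ℕ) := by
    have monovary : Monovary (fun i ↦ (l i : ℤ)) fun i ↦ ((i : ℕ) : ℤ) := fun i j hij ↦
      Nat.cast_le.2 (hl (Nat.cast_lt.1 hij)).le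
    refine monovary.sum_mul_comp_perm_lt_sum_mul_iff.2 fun monovary_perm ↦ hσ (inv_eq_one.1 ?_)
    refine (Perm.monotone_iff _).1 (monotone_iff_forall_lt.2 fun i j hij ↦ ?_)
    exact hl.le_iff_le.1 (Nat.cast_le.1 (monovary_perm (by simpa using hij)))
  have expand (τ : Perm (Fin n)) : ∑ i, betaShift l τ i ^ 2 =
      ∑ i, (l i : ℤ) ^ 2 + ∑ i : Fin n, ((i : ℕ) : ℤ) ^ 2 - 2 * ∑ i, (l i : ℤ) * (τ i : ℕ) := by
    rw [← Equiv.sum_comp τ fun i ↦ ((i : ℕ) : ℤ) ^ 2, mul_sum, ← sum_add_distrib,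
      ← sum_sub_distrib]
    exact sum_congr rfl fun i _ ↦ by rw [betaShift]; ring
  rw [expand, expand]
  simpa using rearrangement

lemma exists_isBetaSet_betaShift_one_eq {m : ℕ} {a : Fin n → ℤ} (monotone_a : Monotone a)
    (nonneg : ∀ i, 0 ≤ a i) (sum_eq : ∑ i, a i = m) :
    ∃ l : Fin n → ℕ, IsBetaSet m l ∧ betaShift l 1 = a := by
  lift a to Fin n → ℕ using nonneg
  refine ⟨fun i ↦ a i + i, ⟨fun i j hij ↦ ?_, ?_⟩, by ext; simp [betaShift]⟩
  · exact add_lt_add_of_le_of_lt (Nat.cast_le.1 (monotone_a hij.le)) hij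
  · rw [sum_add_distrib]
    exact congrArg (· + _) (Nat.cast_injective (R := ℤ) (by simpa using sum_eq))

variable {α : Type*} [Fintype α]

theorem permCharacter_mem_closure_betaCharacter {K : Type*} [Ring K] {a : Fin n → ℤ}
    (nonneg : ∀ i, 0 ≤ a i) (sum_eq : ∑ i, a i = Fintype.card α) :
    permCharacter K a ∈ AddSubgroup.closure
      (betaCharacter K α '' {l : Fin n → ℕ | IsBetaSet (Fintype.card α) l}) := by
  induction h : ((Fintype.card α : ℤ) ^ 2 - ∑ i, a i ^ 2).toNat using Nat.strong_induction_on
    generalizing a with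
  | _ N ih =>
  obtain ⟨l, hl, betaShift_one⟩ := exists_isBetaSet_betaShift_one_eq (Tuple.monotone_sort a)
    (fun i ↦ nonneg _) ((Equiv.sum_comp (Tuple.sort a) a).trans sum_eq)
  have expand : permCharacter K a = betaCharacter K α l -
      ∑ σ ∈ univ.erase 1, (Perm.sign σ : ℤ) • permCharacter K (betaShift l σ) := by
    rw [betaCharacter, ← add_sum_erase _ _ (mem_univ 1), betaShift_one, permCharacter_comp_perm]
    simp
  rw [expand]
  refine sub_mem (AddSubgroup.subset_closure ⟨l, hl, rfl⟩) (sum_mem fun σ hσ ↦ zsmul_mem ?_ _)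
  by_cases hnonneg : ∀ i, 0 ≤ betaShift l σ i
  · refine ih _ ?_ hnonneg (sum_betaShift hl.sum_eq σ) rfl
    have sum_sq_lt := sum_betaShift_one_sq_lt hl.strictMono (ne_of_mem_erase hσ)
    have sum_sq_eq : ∑ i, betaShift l 1 i ^ 2 = ∑ i, a i ^ 2 := by
      rw [betaShift_one]
      exact Equiv.sum_comp (Tuple.sort a) fun i ↦ a i ^ 2
    have sum_sq_le := sum_sq_le_sq_sum_of_nonneg fun i (_ : i ∈ univ) ↦ hnonneg i
    rw [sum_betaShift hl.sum_eq] at sum_sq_le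
    lia
  · rw [permCharacter_eq_zero fun h ↦ hnonneg h.1]
    exact zero_mem _

end Classification

section IrreducibleCharacters

universe u

variable {K α : Type u} [Field K] [IsAlgClosed K] [CharZero K] {n : ℕ}

lemma permCharacter_mem_closure_irreducibleCharacters [Finite α] (a : Fin n → ℤ) :
    permCharacter K a ∈ AddSubgroup.closure (irreducibleCharacters K (Perm α)) := by
  have := Fintype.ofFinite α
  have character_eq : (Representation.ofMulAction K (Perm α) (Word α a)).character =
    permCharacter K a := funext character_ofMulAction
  rw [← character_eq]
  exact character_mem_closure_irreducibleCharacters _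

variable [Fintype α]

theorem betaCharacter_mem_irreducibleCharacters {l : Fin n → ℕ}
    (hl : IsBetaSet (Fintype.card α) l) :
    betaCharacter K α l ∈ irreducibleCharacters K (Perm α) := by
  have mem_closure : betaCharacter K α l ∈ AddSubgroup.closure (irreducibleCharacters K (Perm α)) :=
    sum_mem fun σ _ ↦ zsmul_mem (permCharacter_mem_closure_irreducibleCharacters _) _
  refine (mem_irreducibleCharacters_or_neg_mem mem_closure
    (characterPairing_betaCharacter_self hl)).resolve_right fun hneg ↦ ?_
  obtain ⟨d, -, hd⟩ := exists_degree hneg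
  have degree := hookProd_mul_betaCharacter_one (K := K) hl
  rw [neg_eq_iff_eq_neg.1 hd, mul_neg, neg_eq_iff_add_eq_zero] at degree
  have : hookProd l * d + (Fintype.card α).factorial = 0 := by exact_mod_cast degree
  exact Nat.factorial_ne_zero _ (Nat.add_eq_zero_iff.1 this).2

theorem irreducibleCharacters_perm_eq_image_betaCharacter (hn : n = Fintype.card α) :
    irreducibleCharacters K (Perm α) =
      betaCharacter K α '' {l : Fin n → ℕ | IsBetaSet (Fintype.card α) l} := by
  refine Set.Subset.antisymm (fun f hf ↦ ?_) (Set.image_subset_iff.2 fun l hl ↦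
    betaCharacter_mem_irreducibleCharacters hl)
  by_contra hne
  have closure_le : AddSubgroup.closure
      (betaCharacter K α '' {l : Fin n → ℕ | IsBetaSet (Fintype.card α) l}) ≤
      ((characterPairing K (Perm α)).flip f).toAddMonoidHom.ker := by
    rw [AddSubgroup.closure_le]
    rintro _ ⟨l, hl, rfl⟩
    have ne : betaCharacter K α l ≠ f := fun h ↦ hne ⟨l, hl, h⟩
    have irreducible := betaCharacter_mem_irreducibleCharacters (K := K) hl
    simp [characterPairing_irreducibleCharacters irreducible hf, ne]
  have regular_mem := closure_le (permCharacter_mem_closure_betaCharacter (a := fun _ ↦ 1)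
    (fun _ ↦ zero_le_one) (by simp [hn]))
  obtain ⟨d, d_ne_zero, hd⟩ := exists_degree hf
  have pairing_regular : characterPairing K (Perm α) (permCharacter K fun _ : Fin n ↦ 1) f = d := by
    simp [characterPairing_apply, permCharacter_const_one (α := α) (κ := Fin n) (by simp [hn]), hd]
  exact d_ne_zero (by simpa [pairing_regular] using regular_mem)

end IrreducibleCharacters

/-! ### Two-cores -/

section TwoCores

variable {n : ℕ}

/-- No `t` outside the range of `l` is obtained from a value of `l` by subtracting a positive even
number. For the β-set of a partition: no hook length is even, so that the partition is a 2-core. -/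
def IsTwoCore (l : Fin n → ℕ) : Prop :=
  ∀ i t, t < l i → t ∉ Set.range l → ¬2 ∣ l i - t

lemma not_two_dvd_hookProd_iff {l : Fin n → ℕ} : ¬2 ∣ hookProd l ↔ IsTwoCore l := by
  simp only [hookProd, Nat.prime_two.prime.dvd_finsetProd_iff, IsTwoCore, mem_univ, true_and,
    mem_filter, mem_range, not_exists, not_and, and_imp]

/-- The `a` smallest even and the `b` smallest odd natural numbers. -/
def twoCoreSet (a b : ℕ) : Finset ℕ :=
  (range a).image (2 * ·) ∪ (range b).image (2 * · + 1)

lemma mem_twoCoreSet {a b x : ℕ} :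
    x ∈ twoCoreSet a b ↔ x % 2 = 0 ∧ x / 2 < a ∨ x % 2 = 1 ∧ x / 2 < b := by
  simp only [twoCoreSet, mem_union, mem_image, mem_range]
  refine or_congr ⟨?_, fun h ↦ ⟨x / 2, by lia⟩⟩ ⟨?_, fun h ↦ ⟨x / 2, by lia⟩⟩ <;>
    rintro ⟨y, hy, rfl⟩ <;> lia

lemma sum_twoCoreSet (a b : ℕ) (f : ℕ → ℕ) :
    ∑ x ∈ twoCoreSet a b, f x = ∑ x ∈ range a, f (2 * x) + ∑ x ∈ range b, f (2 * x + 1) := by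
  have disjoint : Disjoint ((range a).image (2 * ·)) ((range b).image (2 * · + 1)) := by
    simp only [disjoint_left, mem_image, not_exists, not_and]
    lia
  rw [twoCoreSet, sum_union disjoint, sum_image fun _ _ _ _ h ↦ by simpa using h,
    sum_image fun _ _ _ _ h ↦ by simpa using h]

lemma card_twoCoreSet (a b : ℕ) : #(twoCoreSet a b) = a + b := by
  rw [card_eq_sum_ones, sum_twoCoreSet a b fun _ ↦ 1]
  simp

lemma two_mul_sum_range_add (n : ℕ) : 2 * ∑ i ∈ range n, i + n = n ^ 2 := by
  rw [mul_comm, sum_range_id_mul_two, Nat.mul_sub_one, sq,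
    Nat.sub_add_cancel (Nat.le_mul_self n)]

lemma sum_twoCoreSet_id_add (a b : ℕ) : ∑ x ∈ twoCoreSet a b, x + a = a ^ 2 + b ^ 2 := by
  rw [sum_twoCoreSet a b fun x ↦ x, sum_add_distrib, ← mul_sum, ← mul_sum,
    ← two_mul_sum_range_add a, ← two_mul_sum_range_add b]
  simp only [sum_const, card_range, smul_eq_mul, mul_one]
  ring

lemma card_eq_of_image_eq_twoCoreSet {l : Fin n → ℕ} {a b : ℕ} (hl : StrictMono l)
    (image_eq : univ.image l = twoCoreSet a b) : n = a + b := by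
  simpa [card_image_of_injective _ hl.injective, card_twoCoreSet] using congrArg card image_eq

lemma isBetaSet_iff_of_image_eq_twoCoreSet {l : Fin n → ℕ} {a b m : ℕ} (hl : StrictMono l)
    (image_eq : univ.image l = twoCoreSet a b) :
    IsBetaSet m l ↔ ((a : ℤ) - b) * (a - b - 1) = 2 * m := by
  have sum_eq : ∑ i, l i + a = a ^ 2 + b ^ 2 := by
    rw [← sum_twoCoreSet_id_add, ← image_eq, sum_image hl.injective.injOn]
  have sum_fin : 2 * ∑ i : Fin n, (i : ℕ) + n = n ^ 2 := by
    rw [Fin.sum_univ_eq_sum_range (fun i ↦ i), two_mul_sum_range_add]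
  have isBetaSet_iff_sum : IsBetaSet m l ↔ ∑ i, l i = m + ∑ i : Fin n, (i : ℕ) :=
    ⟨IsBetaSet.sum_eq, IsBetaSet.mk hl⟩
  rw [isBetaSet_iff_sum]
  obtain rfl := card_eq_of_image_eq_twoCoreSet hl image_eq
  zify at sum_eq sum_fin ⊢
  constructor <;> intro h <;> nlinarith

theorem isTwoCore_iff_exists_image_eq {l : Fin n → ℕ} :
    IsTwoCore l ↔ ∃ a b, univ.image l = twoCoreSet a b := by
  constructor
  · intro hl
    have sub_mem {i t} (lt : t < l i) (dvd : 2 ∣ l i - t) : t ∈ Set.range l :=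
      by_contra fun h ↦ hl i t lt h dvd
    have exists_Iio (r : ℕ) : ∃ a, {x | 2 * x + r ∈ Set.range l} = Set.Iio a := by
      have finite : {x | 2 * x + r ∈ Set.range l}.Finite :=
        (Set.finite_range l).preimage fun x _ y _ h ↦ by simpa using h
      have lower : IsLowerSet {x | 2 * x + r ∈ Set.range l} := by
        rintro _ y hyx ⟨i, hi⟩
        obtain rfl | hlt := hyx.eq_or_lt
        · exact ⟨i, hi⟩
        · exact sub_mem (i := i) (by lia) (by lia)
      exact lower.eq_univ_or_Iio.resolve_left fun h ↦ Set.infinite_univ (h ▸ finite)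
    obtain ⟨a, ha⟩ := exists_Iio 0
    obtain ⟨b, hb⟩ := exists_Iio 1
    refine ⟨a, b, Finset.ext fun x ↦ ?_⟩
    have even : 2 * (x / 2) + 0 ∈ Set.range l ↔ x / 2 < a := Set.ext_iff.1 ha (x / 2)
    have odd : 2 * (x / 2) + 1 ∈ Set.range l ↔ x / 2 < b := Set.ext_iff.1 hb (x / 2)
    have mem_image : x ∈ univ.image l ↔ x ∈ Set.range l := by simp
    rw [mem_twoCoreSet, mem_image, ← even, ← odd]
    obtain h | h := Nat.mod_two_eq_zero_or_one x
    · rw [show 2 * (x / 2) + 0 = x by lia]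
      lia
    · rw [show 2 * (x / 2) + 1 = x by lia]
      lia
  · rintro ⟨a, b, h⟩ i t ht ht' dvd
    have range_eq (x) : x ∈ Set.range l ↔ x ∈ twoCoreSet a b := by simp [← h]
    have hi := (range_eq (l i)).1 ⟨i, rfl⟩
    rw [range_eq] at ht'
    rw [mem_twoCoreSet] at hi ht'
    lia

theorem subsingleton_isBetaSet_isTwoCore (m : ℕ) :
    {l : Fin n → ℕ | IsBetaSet m l ∧ IsTwoCore l}.Subsingleton := by
  rintro l ⟨hl, hl'⟩ k ⟨hk, hk'⟩
  obtain ⟨a, b, image_l⟩ := isTwoCore_iff_exists_image_eq.1 hl'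
  obtain ⟨c, d, image_k⟩ := isTwoCore_iff_exists_image_eq.1 hk'
  have card_l := card_eq_of_image_eq_twoCoreSet hl.strictMono image_l
  have card_k := card_eq_of_image_eq_twoCoreSet hk.strictMono image_k
  have size_l := (isBetaSet_iff_of_image_eq_twoCoreSet hl.strictMono image_l).1 hl
  have size_k := (isBetaSet_iff_of_image_eq_twoCoreSet hk.strictMono image_k).1 hk
  have factored : ((a : ℤ) - b - (c - d)) * (a - b + (c - d) - 1) = 0 := by
    linear_combination size_l - size_k
  have image_eq : univ.image l = univ.image k := by
    obtain ⟨rfl, rfl⟩ : a = c ∧ b = d := by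
      obtain h | h := mul_eq_zero.1 factored <;> lia
    rw [image_l, image_k]
  refine (hl.strictMono.range_inj hk.strictMono).1 ?_
  simpa using congrArg (fun s : Finset ℕ ↦ (s : Set ℕ)) image_eq

lemma isTriangular_iff_exists_two_mul_eq {m : ℕ} :
    IsTriangular m ↔ ∃ k, 2 * m = k * (k + 1) :=
  exists_congr fun k ↦ by
    have := (Nat.even_mul_succ_self k).two_dvd
    lia

lemma isTriangular_iff_exists_add_eq {m : ℕ} :
    IsTriangular m ↔ ∃ a b : ℕ, a + b = m ∧ ((a : ℤ) - b) * (a - b - 1) = 2 * m := by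
  rw [isTriangular_iff_exists_two_mul_eq]
  constructor
  · rintro ⟨k, hk⟩
    have le : k ≤ m := by nlinarith
    zify at hk
    obtain ⟨a, ha⟩ | ⟨a, ha⟩ := Nat.even_or_odd (m - k)
    · refine ⟨a, a + k, by lia, ?_⟩
      push_cast
      linear_combination -hk
    · refine ⟨a + k + 1, a, by lia, ?_⟩
      push_cast
      linear_combination -hk
  · rintro ⟨a, b, -, h⟩
    obtain hab | hab := le_or_gt a b
    · obtain ⟨k, rfl⟩ := Nat.exists_eq_add_of_le hab
      refine ⟨k, ?_⟩
      zify
      push_cast at h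
      linear_combination -h
    · obtain ⟨k, rfl⟩ := Nat.exists_eq_add_of_lt hab
      refine ⟨k, ?_⟩
      zify
      push_cast at h
      linear_combination -h

theorem nonempty_isBetaSet_isTwoCore_iff {m : ℕ} :
    {l : Fin m → ℕ | IsBetaSet m l ∧ IsTwoCore l}.Nonempty ↔ IsTriangular m := by
  rw [isTriangular_iff_exists_add_eq]
  constructor
  · rintro ⟨l, hl, hl'⟩
    obtain ⟨a, b, image_eq⟩ := isTwoCore_iff_exists_image_eq.1 hl'
    exact ⟨a, b, (card_eq_of_image_eq_twoCoreSet hl.strictMono image_eq).symm,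
      (isBetaSet_iff_of_image_eq_twoCoreSet hl.strictMono image_eq).1 hl⟩
  · rintro ⟨a, b, rfl, h⟩
    set l := (twoCoreSet a b).orderEmbOfFin (card_twoCoreSet a b)
    have image_eq : univ.image l = twoCoreSet a b := image_orderEmbOfFin_univ _ _
    exact ⟨l, (isBetaSet_iff_of_image_eq_twoCoreSet l.strictMono image_eq).2 (mod_cast h),
      isTwoCore_iff_exists_image_eq.2 ⟨a, b, image_eq⟩⟩

end TwoCores

/-! ### Characters of 2-defect zero -/

section DefectZero

universe u

variable {K α : Type u} [Field K] [Fintype α] {n : ℕ}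

open Module

lemma padicValNat_finrank_eq_iff_isTwoCore [CharZero K] {l : Fin n → ℕ}
    (hl : IsBetaSet (Fintype.card α) l) {V : FDRep K (Perm α)}
    (character_eq : V.character = betaCharacter K α l) :
    padicValNat 2 (finrank K V) = padicValNat 2 (Nat.card (Perm α)) ↔ IsTwoCore l := by
  have hook_length : hookProd l * finrank K V = (Fintype.card α).factorial := by
    have degree := hookProd_mul_betaCharacter_one (K := K) hl
    rw [← character_eq, FDRep.char_one] at degree
    exact_mod_cast degree
  obtain ⟨hookProd_ne_zero, finrank_ne_zero⟩ :=
    mul_ne_zero_iff.1 (hook_length ▸ Nat.factorial_ne_zero (Fintype.card α))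
  rw [← not_two_dvd_hookProd_iff, Nat.card_perm, Nat.card_eq_fintype_card, ← hook_length,
    padicValNat.mul hookProd_ne_zero finrank_ne_zero, right_eq_add,
    padicValNat.eq_zero_iff]
  simp [hookProd_ne_zero]

theorem defectZeroCharacters_perm_eq_image_betaCharacter [IsAlgClosed K] [CharZero K]
    (hn : n = Fintype.card α) :
    {f : Perm α → K | ∃ V : FDRep K (Perm α), CategoryTheory.Simple V ∧ V.character = f ∧
      padicValNat 2 (finrank K V) = padicValNat 2 (Nat.card (Perm α))} =
      betaCharacter K α '' {l : Fin n → ℕ | IsBetaSet (Fintype.card α) l ∧ IsTwoCore l} := by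
  ext f
  constructor
  · rintro ⟨V, simple, rfl, defect_zero⟩
    obtain ⟨l, hl, h⟩ := (irreducibleCharacters_perm_eq_image_betaCharacter hn).subset
      ⟨V, simple, rfl⟩
    exact ⟨l, ⟨hl, (padicValNat_finrank_eq_iff_isTwoCore hl h.symm).1 defect_zero⟩, h⟩
  · rintro ⟨l, ⟨hl, two_core⟩, rfl⟩
    obtain ⟨V, simple, h⟩ := betaCharacter_mem_irreducibleCharacters (K := K) hl
    exact ⟨V, simple, h, (padicValNat_finrank_eq_iff_isTwoCore hl h).2 two_core⟩

theorem symmetricGroup_defect_zero_count_general [IsAlgClosed K] [CharZero K] :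
    Set.ncard {f : Perm α → K | ∃ V : FDRep K (Perm α), CategoryTheory.Simple V ∧
      V.character = f ∧ padicValNat 2 (finrank K V) = padicValNat 2 (Nat.card (Perm α))} =
      if IsTriangular (Fintype.card α) then 1 else 0 := by
  rw [defectZeroCharacters_perm_eq_image_betaCharacter rfl, ← nonempty_isBetaSet_isTwoCore_iff]
  obtain empty | ⟨l, singleton⟩ :=
    (subsingleton_isBetaSet_isTwoCore (n := Fintype.card α) (Fintype.card α)).eq_empty_or_singleton
  · simp [empty]
  · simp [singleton]

end DefectZero

/-- For every natural number `m`, the symmetric group `S_m` has exactly one irreducible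
complex character of 2-defect zero if `m` is a triangular number, and none otherwise.
Irreducible characters are counted as the character functions of simple objects of
`FDRep ℂ (S_m)`, and a character has 2-defect zero if the 2-adic valuation of its degree
equals the 2-adic valuation of the group order. -/
theorem symmetricGroup_defect_zero_count (m : ℕ) :
    Set.ncard { f : Equiv.Perm (Fin m) → ℂ |
      ∃ V : FDRep ℂ (Equiv.Perm (Fin m)), CategoryTheory.Simple V ∧ V.character = f ∧
        padicValNat 2 (Module.finrank ℂ V) =
          padicValNat 2 (Nat.card (Equiv.Perm (Fin m))) } =
      (if IsTriangular m then 1 else 0) := by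
  simpa using symmetricGroup_defect_zero_count_general (K := ℂ) (α := Fin m)
end

section
/- For every prime ℓ and every integer n ≥ 1, the general linear group GL_n(𝔽_ℓ) has exactly ℓ − 1 irreducible complex characters of ℓ-defect zero. -/
open Matrix

/-!
Let `ρ` be irreducible of defect zero for the characteristic `p` of `F`. Over a valuation ring of
the coefficient field lying above `p`, the matrices of `ρ` can be made integral, and the
endomorphism `∑ g, ρ(g)⁻¹ A ρ(g)` of an integral matrix unit `A` is a scalar `|G| / dim ρ`, hence a
unit: the identity is a relative trace. Linear characters of a `p`-subgroup `U` are trivial modulo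
the maximal ideal, so reduction shows that they all occur in `ρ` with the same nonzero
multiplicity.

Take for `U` the unitriangular group. By the Bruhat decomposition `G = ⋃ U w B`, a `U`-fixed vector
on whose line the torus acts generates at most one copy of a generic character of `U`, as only the
longest `w` contributes. So `ρ` has a single `U`-fixed line, and the Borel group `B` acts on it
through `α ∘ det` for some linear character `α` of `Fˣ`, because simple reflections preserve the
torus character. After twisting by `α⁻¹ ∘ det`, Frobenius reciprocity makes `ρ` a quotient of the
permutation representation on `G ⧸ B`. The generic vector shows that the Steinberg vector
`∑ w, sign w • w B` survives there, so `ρ` is the Steinberg representation, which has dimension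
`|U|`. The twists of the Steinberg representation by `α ∘ det` are told apart by the torus action
on the `U`-fixed line, and there are `|F| - 1` of them.
-/

namespace GLDefectZero

open Representation Module

section Valuation

variable {K : Type*} [Field K] (p : ℕ) [hp : Fact p.Prime]

theorem exists_valuationSubring_natCast_mem_maximalIdeal [CharZero K] :
    ∃ O : ValuationSubring K, (p : O) ∈ IsLocalRing.maximalIdeal O := by
  have hne : Ideal.span {(p : (Int.castRingHom K).range)} ≠ ⊤ := by
    rw [Ne, Ideal.span_singleton_eq_top, isUnit_iff_exists_inv]
    rintro ⟨⟨_, m, rfl⟩, hm⟩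
    have hmul : (p : K) * (m : K) = 1 := by simpa using congrArg Subtype.val hm
    exact (Nat.prime_iff_prime_int.1 hp.out).not_isUnit
      (IsUnit.of_mul_eq_one m (by exact_mod_cast hmul))
  obtain ⟨O, -, hO⟩ := Ideal.image_subset_nonunits_valuationSubring _ hne
  refine ⟨O, ?_⟩
  rw [ValuationSubring.valuation_lt_one_iff, ← ValuationSubring.mem_nonunits_iff]
  exact hO ⟨_, Ideal.subset_span rfl, by simp⟩

variable {p} {O : Type*} [CommRing O] [IsLocalRing O]

theorem charP_residueField (hO : (p : O) ∈ IsLocalRing.maximalIdeal O) :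
    CharP (IsLocalRing.ResidueField O) p := by
  refine (CharP.charP_iff_prime_eq_zero hp.out).2 ?_
  rwa [← map_natCast (IsLocalRing.residue O), IsLocalRing.residue_eq_zero_iff]

theorem isUnit_of_natCast_eq_natCast_mul [IsDomain O] [CharZero O]
    (hO : (p : O) ∈ IsLocalRing.maximalIdeal O) {m n : ℕ} (hm : m ≠ 0) {s : O}
    (hs : (m : O) = n * s) (hval : padicValNat p n = padicValNat p m) : IsUnit s := by
  have := charP_residueField hO
  have hfactor : n.factorization p = m.factorization p := by
    rwa [Nat.factorization_def _ hp.out, Nat.factorization_def _ hp.out]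
  rw [← Nat.ordProj_mul_ordCompl_eq_self m p, ← Nat.ordProj_mul_ordCompl_eq_self n p, hfactor,
    Nat.cast_mul, Nat.cast_mul, mul_assoc] at hs
  have hcancel := mul_left_cancel₀
    (Nat.cast_ne_zero.2 (pow_ne_zero _ hp.out.ne_zero)) hs
  refine isUnit_of_mul_isUnit_right (x := ((n / p ^ m.factorization p : ℕ) : O)) ?_
  rw [← hcancel, ← IsLocalRing.residue_ne_zero_iff_isUnit, map_natCast, Ne,
    CharP.cast_eq_zero_iff (IsLocalRing.ResidueField O) p]
  exact Nat.not_dvd_ordCompl hp.out hm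

end Valuation

section PGroup

variable {p : ℕ} [hp : Fact p.Prime] {P : Type*} [Group P]

theorem exists_ne_zero_forall_apply_eq_self [Finite P] (hP : IsPGroup p P) {k M : Type*}
    [CommRing k] [CharP k p] [AddCommGroup M] [Module k M] [Nontrivial M]
    (τ : Representation k P M) :
    ∃ x ≠ 0, ∀ g, τ g x = x := by
  obtain ⟨v, hv⟩ := exists_ne (0 : M)
  have hpsmul (x : M) : p • x = 0 := by
    rw [← Nat.cast_smul_eq_nsmul k, CharP.cast_eq_zero, zero_smul]
  let _ : DistribMulAction P M := DistribMulAction.compHom M τ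
  let N : AddSubgroup M := AddSubgroup.closure (Set.range fun g : P ↦ g • v)
  let N' : SubMulAction P M :=
    { carrier := N
      smul_mem' g x hx := by
        induction hx using AddSubgroup.closure_induction with
        | mem x hx =>
          obtain ⟨h, rfl⟩ := hx
          exact AddSubgroup.subset_closure ⟨g * h, mul_smul g h v⟩
        | zero => simp
        | add x y _ _ hx hy => simpa using N.add_mem hx hy
        | neg x _ hx => simpa using N.neg_mem hx }
  have hvN : v ∈ N := AddSubgroup.subset_closure ⟨1, one_smul P v⟩
  have : AddGroup.FG N :=
    (AddGroup.fg_iff_addSubgroup_fg N).2 (AddSubgroup.fg_iff _ |>.2 ⟨_, rfl, Set.finite_range _⟩)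
  have : Finite N := AddCommGroup.finite_of_fg_isAddTorsion N fun x ↦
    isOfFinAddOrder_iff_nsmul_eq_zero.2 ⟨p, hp.out.pos, Subtype.ext (hpsmul x)⟩
  have hdvd : p ∣ Nat.card N := by
    rw [← addOrderOf_eq_prime (x := (⟨v, hvN⟩ : N)) (Subtype.ext (hpsmul v))
      (fun h ↦ hv (congrArg Subtype.val h))]
    exact addOrderOf_dvd_natCard _
  have : Finite N' := ‹Finite N›
  have hzero : (⟨0, N.zero_mem⟩ : N') ∈ MulAction.fixedPoints P N' := fun g ↦
    Subtype.ext (smul_zero g)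
  obtain ⟨x, hx, hne⟩ := hP.exists_fixed_point_of_prime_dvd_card_of_fixed_point N' hdvd hzero
  exact ⟨x, fun h ↦ hne (Subtype.ext h.symm), fun g ↦ congrArg Subtype.val (hx g)⟩

theorem residue_monoidHom_apply (hP : IsPGroup p P) {O : Type*} [CommRing O] [IsLocalRing O]
    [CharP (IsLocalRing.ResidueField O) p] (χ : P →* O) (g : P) :
    IsLocalRing.residue O (χ g) = 1 := by
  obtain ⟨m, hm⟩ := hP g
  have := ExpChar.prime (R := IsLocalRing.ResidueField O) hp.out
  rw [← pow_one (IsLocalRing.residue O _), ← ExpChar.pow_prime_pow_mul_eq_one_iff p m 1, mul_one,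
    ← map_pow, ← map_pow, hm, map_one, map_one]

end PGroup

section Lattice

variable {G K V : Type*} [Group G] [Field K] [AddCommGroup V] [Module K V]

theorem exists_isLattice_forall_mem [Finite G] [FiniteDimensional K V] (O : Type*) [CommRing O]
    [Algebra O K] [Module O V] [IsScalarTower O K V] (ρ : Representation K G V) :
    ∃ L : Submodule O V, Submodule.IsLattice K L ∧ ∀ g, ∀ x ∈ L, ρ g x ∈ L := by
  let b := finBasis K V
  let s : Set V := Set.range fun q : G × Fin (finrank K V) ↦ ρ q.1 (b q.2)
  refine ⟨Submodule.span O s, ⟨Submodule.fg_span (Set.finite_range _), ?_⟩, fun g x hx ↦ ?_⟩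
  · rw [Submodule.span_span_of_tower, eq_top_iff, ← b.span_eq]
    refine Submodule.span_mono ?_
    rintro _ ⟨i, rfl⟩
    exact ⟨(1, i), by simp⟩
  · induction hx using Submodule.span_induction with
    | mem x hx =>
      obtain ⟨⟨h, i⟩, rfl⟩ := hx
      exact Submodule.subset_span ⟨(g * h, i), by simp⟩
    | zero => simp
    | add x y _ _ hx hy => simpa using add_mem hx hy
    | smul c x _ hx =>
      rw [← algebraMap_smul K c, map_smul, algebraMap_smul]
      exact Submodule.smul_mem _ c hx

variable {O : ValuationSubring K} {d : ℕ} (b : Basis (Fin d) K V)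

variable (O) in
/-- The endomorphism of a `K`-space attached, through a basis, to a matrix with entries in a
valuation ring of `K`. -/
noncomputable def integralEnd : Matrix (Fin d) (Fin d) O →ₐ[O] End K V :=
  ((Matrix.toLinAlgEquiv b).toAlgHom.restrictScalars O).comp (Algebra.ofId O K).mapMatrix

theorem integralEnd_apply (M : Matrix (Fin d) (Fin d) O) :
    integralEnd O b M = Matrix.toLin b b (M.map (algebraMap O K)) := rfl

theorem integralEnd_injective : Function.Injective (integralEnd O b) :=
  (Matrix.toLin b b).injective.comp (Matrix.map_injective Subtype.val_injective)

theorem exists_integralEnd_apply_eq [Finite G] [FiniteDimensional K V]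
    (O : ValuationSubring K) (ρ : Representation K G V) :
    ∃ (d : ℕ) (b : Basis (Fin d) K V) (R : G →* Matrix (Fin d) (Fin d) O),
      ∀ g, integralEnd O b (R g) = ρ g := by
  obtain ⟨L, hL, hstable⟩ := exists_isLattice_forall_mem O ρ
  have : Module.Finite O L := Submodule.IsLattice.finite K L
  have : IsTorsionFree O V := IsTorsionFree.trans_faithfulSMul O K V
  have : Flat O L := by
    rw [Flat.flat_iff_torsion_eq_bot_of_isBezout, ← Submodule.isTorsionFree_iff_torsion_eq_bot]
    infer_instance
  have : Free O L := free_of_flat_of_isLocalRing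
  let c := finBasis O L
  let σ : Representation O G L :=
    { toFun g := ((ρ g).restrictScalars O).restrict (hstable g)
      map_one' := by ext; simp
      map_mul' g h := LinearMap.ext fun x ↦ Subtype.ext (LinearMap.congr_fun (map_mul ρ g h) x) }
  refine ⟨_, c.extendOfIsLattice K, (LinearMap.toMatrixAlgEquiv c : _ →* _).comp σ,
    fun g ↦ (c.extendOfIsLattice K).ext fun j ↦ ?_⟩
  rw [integralEnd_apply, Matrix.toLin_self, Basis.extendOfIsLattice_apply]
  have hrepr := congrArg L.subtype (c.sum_repr (σ g (c j)))
  simp only [map_sum, LinearMap.map_smul_of_tower] at hrepr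
  refine Eq.trans (Finset.sum_congr rfl fun i _ ↦ ?_) hrepr
  rw [Basis.extendOfIsLattice_apply, ← algebraMap_smul K (c.repr _ i)]
  exact congrArg (fun a ↦ algebraMap O K a • (c i : V)) (LinearMap.toMatrixAlgEquiv_apply c _ i j)

end Lattice

section Representation

variable {G k V : Type*} [Group G] [Field k] [AddCommGroup V] [Module k V]

/-- The space of vectors on which the subgroup `U` acts through the linear character `χ`. -/
def weightSpace (ρ : Representation k G V) {U : Subgroup G} (χ : U →* k) : Submodule k V where
  carrier := {v | ∀ u : U, ρ u v = χ u • v}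
  zero_mem' := by simp
  add_mem' hv hw u := by rw [map_add, hv u, hw u, smul_add]
  smul_mem' c v hv u := by rw [map_smul, hv u, smul_comm]

theorem nontrivial_of_isIrreducible (ρ : Representation k G V) [ρ.IsIrreducible] : Nontrivial V :=
  IsSimpleModule.nontrivial (MonoidAlgebra k G) ρ.asModule

variable {U : Subgroup G} [Fintype U]

/-- The unnormalised projection `∑ u, χ u⁻¹ • R u` onto the `χ`-weight space of `U`. -/
def weightSum {A E : Type*} [CommSemiring A] [Semiring E] [Algebra A E] (R : G →* E) (χ : U →* A) :
    E :=
  ∑ u : U, χ u⁻¹ • R u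

theorem map_mul_weightSum {A E : Type*} [CommSemiring A] [Semiring E] [Algebra A E] (R : G →* E)
    (χ : U →* A) (v : U) : R v * weightSum R χ = χ v • weightSum R χ := by
  simp only [weightSum, Finset.mul_sum, Finset.smul_sum]
  rw [← Equiv.sum_comp (Equiv.mulLeft v) fun u : U ↦ χ v • χ u⁻¹ • R u]
  refine Finset.sum_congr rfl fun u _ ↦ ?_
  rw [Equiv.coe_mulLeft, _root_.mul_inv_rev, map_mul χ, smul_smul, mul_left_comm, ← map_mul χ,
    mul_inv_cancel, map_one, mul_one, mul_smul_comm, Subgroup.coe_mul, map_mul R]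

theorem weightSum_mul_map {A E : Type*} [CommSemiring A] [Semiring E] [Algebra A E] (R : G →* E)
    (χ : U →* A) (v : U) : weightSum R χ * R v = χ v • weightSum R χ := by
  simp only [weightSum, Finset.sum_mul, Finset.smul_sum]
  rw [← Equiv.sum_comp (Equiv.mulRight v) fun u : U ↦ χ v • χ u⁻¹ • R u]
  refine Finset.sum_congr rfl fun u _ ↦ ?_
  rw [Equiv.coe_mulRight, smul_smul, ← map_mul, _root_.mul_inv_rev, mul_inv_cancel_left]
  simp

theorem weightSum_apply_mem (ρ : Representation k G V) (χ : U →* k) (x : V) :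
    weightSum ρ χ x ∈ weightSpace ρ χ := fun u ↦
  LinearMap.congr_fun (map_mul_weightSum ρ χ u) x

theorem weightSum_apply_of_mem {ρ : Representation k G V} {χ : U →* k} {x : V}
    (hx : x ∈ weightSpace ρ χ) : weightSum ρ χ x = (Nat.card U : k) • x := by
  have hterm (u : U) : χ u⁻¹ • ρ u x = x := by
    rw [hx u, smul_smul, ← map_mul, inv_mul_cancel, map_one, one_smul]
  simp only [weightSum, LinearMap.sum_apply, LinearMap.smul_apply, hterm]
  simp [Nat.card_eq_fintype_card, Nat.cast_smul_eq_nsmul]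

end Representation

section RelativeTrace

theorem sum_conj_eq_sum_conj_sum_quotient {G E : Type*} [Group G] [Fintype G] [Ring E]
    (R : G →* E) (A : E) (U : Subgroup G) [Fintype U] [Fintype (G ⧸ U)] :
    ∑ g, R g⁻¹ * A * R g =
      ∑ u : U, R (u : G)⁻¹ * (∑ q : G ⧸ U, R q.out⁻¹ * A * R q.out) * R u := by
  have hbij : Function.Bijective fun x : (G ⧸ U) × U ↦ x.1.out * (x.2 : G) :=
    (Subgroup.isComplement_range_left QuotientGroup.out_eq').comp
      ((Equiv.ofInjective Quotient.out Quotient.out_injective).prodCongr (.refl U)).bijective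
  rw [← (Equiv.ofBijective _ hbij).sum_comp, Fintype.sum_prod_type, Finset.sum_comm]
  simp only [Finset.mul_sum, Finset.sum_mul, Equiv.ofBijective_apply, _root_.mul_inv_rev, map_mul,
    mul_assoc]

variable {G K V : Type*} [Group G] [Field K] [IsAlgClosed K] [AddCommGroup V] [Module K V]
  {ρ : Representation K G V} {O : ValuationSubring K}
  {d : ℕ} {b : Basis (Fin d) K V} {R : G →* Matrix (Fin d) (Fin d) O}

theorem eq_smul_one_of_forall_commute [FiniteDimensional K V] [ρ.IsIrreducible]
    (hR : ∀ g, integralEnd O b (R g) = ρ g) {S : Matrix (Fin d) (Fin d) O}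
    (hS : ∀ g, Commute (R g) S) (i : Fin d) : S = S i i • 1 := by
  let T : IntertwiningMap ρ ρ :=
    ⟨integralEnd O b S, fun g ↦ by
      rw [← hR, ← End.mul_eq_comp, ← End.mul_eq_comp, ← map_mul, ← map_mul, (hS g).eq]⟩
  obtain ⟨c, hc⟩ := (IsIrreducible.algebraMap_intertwiningMap_bijective_of_isAlgClosed (ρ := ρ)).2 T
  have hmap : S.map (algebraMap O K) = c • 1 := by
    apply (Matrix.toLin b b).injective
    rw [← integralEnd_apply, map_smul, Matrix.toLin_one]
    exact (congrArg IntertwiningMap.toLinearMap hc).symm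
  have hentry (j l : Fin d) : (S j l : K) = c * (1 : Matrix (Fin d) (Fin d) K) j l :=
    congrFun (congrFun hmap j) l
  ext j l
  by_cases hjl : j = l <;> simp [hentry, hjl]

variable {p : ℕ} [Fact p.Prime] [CharZero K]

theorem exists_sum_conj_eq_one [Fintype G] [FiniteDimensional K V] [ρ.IsIrreducible]
    (hO : (p : O) ∈ IsLocalRing.maximalIdeal O) (hR : ∀ g, integralEnd O b (R g) = ρ g)
    (hdefect : padicValNat p (finrank K V) = padicValNat p (Nat.card G)) :
    ∃ A, ∑ g, R g⁻¹ * A * R g = 1 := by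
  have hd : finrank K V = d := by rw [finrank_eq_card_basis b, Fintype.card_fin]
  have := nontrivial_of_isIrreducible ρ
  let i : Fin d := ⟨0, hd ▸ finrank_pos⟩
  let A := Matrix.single i i (1 : O)
  let S := ∑ g, R g⁻¹ * A * R g
  have hcommute (g : G) : Commute (R g) S := by
    rw [Commute, SemiconjBy, Finset.mul_sum, Finset.sum_mul, ← Equiv.sum_comp (Equiv.mulRight g)]
    refine Finset.sum_congr rfl fun h _ ↦ ?_
    simp only [Equiv.coe_mulRight, _root_.mul_inv_rev, map_mul, ← mul_assoc]
    rw [← map_mul, mul_inv_cancel, map_one, one_mul]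
  have hS := eq_smul_one_of_forall_commute hR hcommute i
  have htrace : (Nat.card G : O) = finrank K V * S i i := by
    have : S.trace = Nat.card G := by
      simp only [S, Matrix.trace_sum]
      rw [Finset.sum_congr rfl (g := fun _ ↦ (1 : O)) fun g _ ↦ ?_]
      · simp [Nat.card_eq_fintype_card]
      · rw [Matrix.trace_mul_cycle, ← map_mul, mul_inv_cancel, map_one, one_mul,
          Matrix.trace_single_eq_same]
    rw [← this, hS]
    simp [Matrix.trace_smul, mul_comm, hd]
  obtain ⟨t, ht⟩ := (isUnit_of_natCast_eq_natCast_mul hO Nat.card_pos.ne' htrace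
    hdefect).exists_left_inv
  refine ⟨t • A, ?_⟩
  simp only [mul_smul_comm, smul_mul_assoc, ← Finset.smul_sum]
  change t • S = 1
  rw [hS, smul_smul, ht, one_smul]

end RelativeTrace

section IntegralWeightSum

variable {G K V : Type*} [Group G] [Field K] [AddCommGroup V] [Module K V]
  {O : ValuationSubring K} {U : Subgroup G}

theorem exists_monoidHom_valuationSubring [Finite U] (O : ValuationSubring K) (χ : U →* K) :
    ∃ χ' : U →* O, (algebraMap O K : O →* K).comp χ' = χ := by
  have hmem (u : U) : χ u ∈ O := by
    rw [← ValuationSubring.valuation_le_one_iff]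
    have hpow : O.valuation (χ u) ^ Nat.card U = 1 := by
      rw [← map_pow, ← map_pow, pow_card_eq_one', map_one, map_one]
    exact ((pow_eq_one_iff.1 hpow).resolve_right Nat.card_pos.ne').le
  exact ⟨χ.codRestrict O hmem, rfl⟩

variable [Fintype U] {ρ : Representation K G V} {d : ℕ} {b : Basis (Fin d) K V}
  {R : G →* Matrix (Fin d) (Fin d) O} {A : Matrix (Fin d) (Fin d) O}

theorem integralEnd_weightSum_mul_apply_mem (hR : ∀ g, integralEnd O b (R g) = ρ g)
    (χ : U →* O) (x : V) : integralEnd O b (weightSum R χ * A) x ∈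
      weightSpace ρ ((algebraMap O K : O →* K).comp χ) := fun u ↦ by
  rw [← hR, ← End.mul_apply, ← map_mul, ← mul_assoc, map_mul_weightSum, smul_mul_assoc, map_smul]
  rfl

theorem integralEnd_weightSum_mul_apply_of_mem (hR : ∀ g, integralEnd O b (R g) = ρ g)
    (hA : ∑ u : U, R (u : G)⁻¹ * A * R u = 1) (χ : U →* O) {x : V}
    (hx : x ∈ weightSpace ρ ((algebraMap O K : O →* K).comp χ)) :
    integralEnd O b (weightSum R χ * A) x = x := by
  have hsum : integralEnd O b (∑ u : U, R (u : G)⁻¹ * A * R u) x = x := by simp [hA]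
  conv_rhs => rw [← hsum]
  rw [weightSum, Finset.sum_mul, map_sum, map_sum, LinearMap.sum_apply, LinearMap.sum_apply,
    ← Equiv.sum_comp (Equiv.inv U)]
  refine Finset.sum_congr rfl fun u _ ↦ ?_
  rw [map_mul _ _ (R u), End.mul_apply, hR, hx u, Equiv.inv_apply, inv_inv, smul_mul_assoc,
    map_smul, map_smul]
  rfl

variable {p : ℕ} [hp : Fact p.Prime]

theorem residue_mapMatrix_weightSum (hU : IsPGroup p U) [CharP (IsLocalRing.ResidueField O) p]
    (χ : U →* O) : (IsLocalRing.residue O).mapMatrix (weightSum R χ) =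
      ∑ u : U, (IsLocalRing.residue O).mapMatrix (R u) := by
  rw [weightSum, map_sum]
  refine Finset.sum_congr rfl fun u _ ↦ ?_
  ext i j
  simp [residue_monoidHom_apply hU]

theorem eq_zero_of_residue_mapMatrix_eq {M N : Matrix (Fin d) (Fin d) O}
    (hMN : (IsLocalRing.residue O).mapMatrix M = (IsLocalRing.residue O).mapMatrix N) {x : V}
    (hM : integralEnd O b M x = x) (hN : integralEnd O b N x = 0) : x = 0 := by
  have hunit : IsUnit (1 - (M - N)) := by
    rw [Matrix.isUnit_iff_isUnit_det, ← IsLocalRing.residue_ne_zero_iff_isUnit, RingHom.map_det,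
      map_sub, map_sub, hMN, sub_self, sub_zero, map_one, Matrix.det_one]
    exact one_ne_zero
  obtain ⟨Z, hZ⟩ := hunit.exists_left_inv
  have hzero : integralEnd O b (Z * (1 - (M - N))) x = 0 := by simp [hM, hN]
  simpa [hZ] using hzero

theorem exists_integralEnd_weightSum_mul_ne_zero [Nontrivial V] (hU : IsPGroup p U)
    (hO : (p : O) ∈ IsLocalRing.maximalIdeal O) (b : Basis (Fin d) K V)
    (hA : ∑ u : U, R (u : G)⁻¹ * A * R u = 1) :
    ∃ x, integralEnd O b (weightSum R (1 : U →* O) * A) x ≠ 0 := by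
  have := charP_residueField hO
  have : Nonempty (Fin d) := b.index_nonempty
  let res := (IsLocalRing.residue O).mapMatrix (m := Fin d)
  let τ : Representation (IsLocalRing.ResidueField O) U (Fin d → IsLocalRing.ResidueField O) :=
    (Matrix.toLinAlgEquiv' : _ ≃ₐ[IsLocalRing.ResidueField O] _).toAlgHom.toMonoidHom.comp
      (res.toMonoidHom.comp (R.comp U.subtype))
  obtain ⟨x, hx0, hx⟩ := exists_ne_zero_forall_apply_eq_self hU τ
  have hfixed : res (weightSum R (1 : U →* O) * A) *ᵥ x = x := by
    have hsum : res (∑ u : U, R (u : G)⁻¹ * A * R u) *ᵥ x = x := by simp [hA]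
    conv_rhs => rw [← hsum]
    rw [map_mul, residue_mapMatrix_weightSum hU, Finset.sum_mul, map_sum, Matrix.sum_mulVec,
      Matrix.sum_mulVec, ← Equiv.sum_comp (Equiv.inv U)]
    refine Finset.sum_congr rfl fun u _ ↦ ?_
    have hu : res (R u) *ᵥ x = x := hx u
    rw [Equiv.inv_apply, map_mul res _ (R u), ← Matrix.mulVec_mulVec _ _ (res (R u)), hu,
      map_mul res]
    rfl
  by_contra! hzero
  have hmul : weightSum R (1 : U →* O) * A = 0 :=
    integralEnd_injective b (LinearMap.ext fun y ↦ by rw [hzero, map_zero]; rfl)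
  rw [hmul, map_zero, Matrix.zero_mulVec] at hfixed
  exact hx0 hfixed.symm

end IntegralWeightSum

section DefectZero

variable {G K V : Type*} [Group G] [Finite G] [Field K] [CharZero K] [IsAlgClosed K]
  [AddCommGroup V] [Module K V] [FiniteDimensional K V] {p : ℕ} [hp : Fact p.Prime]
  {U : Subgroup G} (ρ : Representation K G V) [ρ.IsIrreducible]

theorem exists_integral_relative_projection [Fintype U]
    (hdefect : padicValNat p (finrank K V) = padicValNat p (Nat.card G)) :
    ∃ (O : ValuationSubring K) (d : ℕ) (b : Basis (Fin d) K V)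
      (R : G →* Matrix (Fin d) (Fin d) O) (A : Matrix (Fin d) (Fin d) O),
      (p : O) ∈ IsLocalRing.maximalIdeal O ∧ (∀ g, integralEnd O b (R g) = ρ g) ∧
        ∑ u : U, R (u : G)⁻¹ * A * R u = 1 := by
  have := Fintype.ofFinite G
  have := Fintype.ofFinite (G ⧸ U)
  obtain ⟨O, hO⟩ := exists_valuationSubring_natCast_mem_maximalIdeal (K := K) p
  obtain ⟨d, b, R, hR⟩ := exists_integralEnd_apply_eq O ρ
  obtain ⟨A, hA⟩ := exists_sum_conj_eq_one hO hR hdefect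
  exact ⟨O, d, b, R, _, hO, hR, (sum_conj_eq_sum_conj_sum_quotient R A U).symm.trans hA⟩

theorem finrank_weightSpace_le
    (hdefect : padicValNat p (finrank K V) = padicValNat p (Nat.card G))
    (hU : IsPGroup p U) (χ ψ : U →* K) :
    finrank K (weightSpace ρ χ) ≤ finrank K (weightSpace ρ ψ) := by
  have := Fintype.ofFinite U
  obtain ⟨O, d, b, R, A, hO, hR, hA⟩ := exists_integral_relative_projection (U := U) ρ hdefect
  have := charP_residueField hO
  obtain ⟨χ, rfl⟩ := exists_monoidHom_valuationSubring O χ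
  obtain ⟨ψ, rfl⟩ := exists_monoidHom_valuationSubring O ψ
  let f := ((integralEnd O b (weightSum R ψ * A)).comp
    (weightSpace ρ ((algebraMap O K : O →* K).comp χ)).subtype).codRestrict
      (weightSpace ρ _) fun x ↦ integralEnd_weightSum_mul_apply_mem hR ψ x
  refine LinearMap.finrank_le_finrank_of_injective (f := f)
    ((injective_iff_map_eq_zero f).2 fun x hx ↦ Subtype.ext ?_)
  refine eq_zero_of_residue_mapMatrix_eq (M := weightSum R χ * A) (N := weightSum R ψ * A) ?_
    (integralEnd_weightSum_mul_apply_of_mem hR hA χ x.2) (congrArg Subtype.val hx)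
  simp only [map_mul, residue_mapMatrix_weightSum hU]

theorem weightSpace_ne_bot
    (hdefect : padicValNat p (finrank K V) = padicValNat p (Nat.card G))
    (hU : IsPGroup p U) (χ : U →* K) : weightSpace ρ χ ≠ ⊥ := by
  have := Fintype.ofFinite U
  have := nontrivial_of_isIrreducible ρ
  obtain ⟨O, d, b, R, A, hO, hR, hA⟩ := exists_integral_relative_projection (U := U) ρ hdefect
  obtain ⟨x, hx⟩ := exists_integralEnd_weightSum_mul_ne_zero hU hO b hA
  have hone : weightSpace ρ ((algebraMap O K : O →* K).comp (1 : U →* O)) ≠ ⊥ := fun h ↦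
    hx <| (Submodule.mem_bot K).1 <| h ▸ integralEnd_weightSum_mul_apply_mem hR 1 x
  exact Submodule.one_le_finrank_iff.1 <|
    (Submodule.one_le_finrank_iff.2 hone).trans (finrank_weightSpace_le ρ hdefect hU _ χ)

end DefectZero

section Generators

variable {ι R : Type*} [Fintype ι] [DecidableEq ι] [CommRing R]

/-- Permutation matrices as elements of the general linear group: `permGL w` sends the basis
vector `e j` to `e (w j)`. -/
def permGL : Equiv.Perm ι →* GL ι R := Matrix.permMatrixHom.toHomUnits

/-- Diagonal matrices as elements of the general linear group. -/
def diagGL : (ι → Rˣ) →* GL ι R :=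
  (Units.map (Matrix.diagonalRingHom ι R : (ι → R) →* Matrix ι ι R)).comp
    (MulEquiv.piUnits (M := fun _ : ι ↦ R)).symm.toMonoidHom

/-- The root subgroup of the pair `(i, j)`: the transvections `1 + t E_{ij}`. -/
def transvecGL {i j : ι} (h : i ≠ j) : AddChar R (GL ι R) where
  toFun t := ⟨Matrix.transvection i j t, Matrix.transvection i j (-t),
    by simp [Matrix.transvection_mul_transvection_same _ _ h],
    by simp [Matrix.transvection_mul_transvection_same _ _ h]⟩
  map_zero_eq_one' := Units.ext (by simp)
  map_add_eq_mul' s t := Units.ext (Matrix.transvection_mul_transvection_same _ _ h s t).symm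

theorem permGL_mul_apply (w : Equiv.Perm ι) (g : GL ι R) (i j : ι) :
    (permGL w * g : GL ι R) i j = g (w⁻¹ i) j :=
  congrFun₂ (PEquiv.toMatrix_toPEquiv_mul w⁻¹ g.val) i j

theorem mul_permGL_apply (w : Equiv.Perm ι) (g : GL ι R) (i j : ι) :
    (g * permGL w : GL ι R) i j = g i (w j) :=
  congrFun₂ (PEquiv.mul_toMatrix_toPEquiv g.val w⁻¹) i j

theorem permGL_apply (w : Equiv.Perm ι) (i j : ι) :
    (permGL w : GL ι R) i j = if i = w j then 1 else 0 := by
  rw [← one_mul (permGL w), mul_permGL_apply, Units.val_one, Matrix.one_apply]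

theorem diagGL_mul_apply (d : ι → Rˣ) (g : GL ι R) (i j : ι) :
    (diagGL d * g : GL ι R) i j = d i * g i j :=
  Matrix.diagonal_mul ..

theorem mul_diagGL_apply (d : ι → Rˣ) (g : GL ι R) (i j : ι) :
    (g * diagGL d : GL ι R) i j = g i j * d j :=
  Matrix.mul_diagonal ..

theorem det_diagGL (d : ι → Rˣ) : (diagGL d).det = ∏ i, d i :=
  Units.ext <| (Matrix.det_diagonal (d := fun i ↦ (d i : R))).trans (Units.coe_prod ..).symm

theorem transvecGL_apply {i j : ι} (h : i ≠ j) (t : R) (a b : ι) :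
    transvecGL h t a b = (if a = b then 1 else 0) + if i = a ∧ j = b then t else 0 := by
  rw [← Matrix.one_apply, ← Matrix.single_apply]
  rfl

theorem transvecGL_mul_apply {i j : ι} (h : i ≠ j) (t : R) (g : GL ι R) (a b : ι) :
    (transvecGL h t * g : GL ι R) a b = g a b + if a = i then t * g j b else 0 := by
  split_ifs with ha
  · exact ha ▸ Matrix.transvection_mul_apply_same ..
  · exact (Matrix.transvection_mul_apply_of_ne _ _ _ _ ha ..).trans (add_zero _).symm

theorem mul_transvecGL_apply {i j : ι} (h : i ≠ j) (t : R) (g : GL ι R) (a b : ι) :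
    (g * transvecGL h t : GL ι R) a b = g a b + if b = j then t * g a i else 0 := by
  split_ifs with hb
  · exact hb ▸ Matrix.mul_transvection_apply_same ..
  · exact (Matrix.mul_transvection_apply_of_ne _ _ _ _ hb ..).trans (add_zero _).symm

theorem transvecGL_mul_permGL (w : Equiv.Perm ι) {i j : ι} (h : i ≠ j) (t : R) :
    transvecGL h t * permGL w = permGL w * transvecGL (w⁻¹.injective.ne h) t := by
  ext a b
  rw [mul_permGL_apply, permGL_mul_apply, transvecGL_apply, transvecGL_apply]
  simp only [EmbeddingLike.apply_eq_iff_eq, Equiv.Perm.inv_eq_iff_eq]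

theorem diagGL_mul_permGL (w : Equiv.Perm ι) (d : ι → Rˣ) :
    diagGL d * permGL w = permGL w * diagGL (d ∘ w) := by
  ext a b
  rw [diagGL_mul_apply, mul_diagGL_apply, permGL_apply]
  split_ifs with h
  · simp [h]
  · simp

theorem permGL_swap_conj_transvecGL {i j : ι} (h : i ≠ j) (t : Rˣ) :
    permGL (Equiv.swap i j) * transvecGL h (t : R) * (permGL (Equiv.swap i j))⁻¹ =
      transvecGL h (↑t⁻¹ : R) * diagGL (Pi.mulSingle i (-t⁻¹) * Pi.mulSingle j t) *
        permGL (Equiv.swap i j) * transvecGL h (↑t⁻¹ : R) := by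
  ext a b
  rw [← map_inv, Equiv.swap_inv, mul_permGL_apply, permGL_mul_apply, Equiv.swap_inv,
    mul_transvecGL_apply, mul_assoc, transvecGL_mul_apply, transvecGL_mul_apply]
  simp only [diagGL_mul_apply, transvecGL_apply, permGL_apply, Pi.mul_apply, Pi.mulSingle_apply,
    Equiv.swap_apply_def, Units.val_mul, apply_ite Units.val, Units.val_neg, Units.val_one]
  have ht : (↑t⁻¹ : R) * t = 1 := t.inv_mul
  grind

end Generators

section Borel

variable {n : ℕ} {F : Type*} [Field F]

variable (n F) in
/-- The Borel subgroup of upper triangular matrices. -/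
def borel : Subgroup (GL (Fin n) F) where
  carrier := {g | g.val.IsUpperTriangular}
  one_mem' := Matrix.blockTriangular_one
  mul_mem' := Matrix.BlockTriangular.mul
  inv_mem' {g} hg := by
    have := g.invertible
    simpa only [Set.mem_ofPred_eq, Matrix.coe_units_inv] using
      Matrix.blockTriangular_inv_of_blockTriangular hg

theorem mul_apply_self_of_mem_borel {g h : GL (Fin n) F} (hg : g ∈ borel n F)
    (hh : h ∈ borel n F) (i : Fin n) : (g * h : GL (Fin n) F) i i = g i i * h i i := by
  rw [Units.val_mul, Matrix.mul_apply]
  refine Finset.sum_eq_single_of_mem i (Finset.mem_univ i) fun k _ hki ↦ ?_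
  rcases hki.lt_or_gt with hki | hik
  · rw [hg hki, zero_mul]
  · rw [hh hik, mul_zero]

variable (n F) in
/-- The subgroup of upper unitriangular matrices. -/
def unipotent : Subgroup (GL (Fin n) F) where
  carrier := {g | g ∈ borel n F ∧ ∀ i, g i i = 1}
  one_mem' := ⟨one_mem _, fun i ↦ by simp⟩
  mul_mem' := fun ⟨hg, hg'⟩ ⟨hh, hh'⟩ ↦
    ⟨mul_mem hg hh, fun i ↦ by rw [mul_apply_self_of_mem_borel hg hh, hg', hh', one_mul]⟩
  inv_mem' {g} := fun ⟨hg, hg'⟩ ↦ by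
    refine ⟨inv_mem hg, fun i ↦ ?_⟩
    have hmul := mul_apply_self_of_mem_borel hg (inv_mem hg) i
    rwa [hg', one_mul, mul_inv_cancel, Units.val_one, Matrix.one_apply_eq, eq_comm] at hmul

theorem unipotent_le_borel : unipotent n F ≤ borel n F := fun _ h ↦ h.1

theorem diagGL_mem_borel (d : Fin n → Fˣ) : diagGL d ∈ borel n F :=
  Matrix.blockTriangular_diagonal _

theorem transvecGL_mem_unipotent {i j : Fin n} (h : i < j) (t : F) :
    transvecGL h.ne t ∈ unipotent n F := by
  refine ⟨Matrix.blockTriangular_transvection h.le t, fun a ↦ ?_⟩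
  rw [transvecGL_apply, if_pos rfl, if_neg fun ⟨hi, hj⟩ ↦ h.ne (hi.trans hj.symm), add_zero]

theorem diagGL_conj_mem_unipotent (d : Fin n → Fˣ) {u : GL (Fin n) F} (hu : u ∈ unipotent n F) :
    diagGL d * u * (diagGL d)⁻¹ ∈ unipotent n F := by
  refine ⟨mul_mem (mul_mem (diagGL_mem_borel d) hu.1) (inv_mem (diagGL_mem_borel d)), fun i ↦ ?_⟩
  rw [← map_inv, mul_diagGL_apply, diagGL_mul_apply, hu.2 i]
  simp

theorem exists_eq_diagGL_mul {b : GL (Fin n) F} (hb : b ∈ borel n F) :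
    ∃ d, ∃ u ∈ unipotent n F, b = diagGL d * u := by
  have hdet : ∏ i, b i i ≠ 0 := Matrix.det_of_isUpperTriangular hb ▸ b.det_ne_zero
  have hdiag i : b i i ≠ 0 := Finset.prod_ne_zero_iff.1 hdet i (Finset.mem_univ i)
  let d i := Units.mk0 _ (hdiag i)
  refine ⟨d, (diagGL d)⁻¹ * b, ⟨mul_mem (inv_mem (diagGL_mem_borel d)) hb, fun i ↦ ?_⟩, by simp⟩
  rw [← map_inv, diagGL_mul_apply]
  simp [d, hdiag i]

theorem det_eq_one_of_mem_unipotent {u : GL (Fin n) F} (hu : u ∈ unipotent n F) : u.det = 1 := by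
  ext
  rw [Matrix.GeneralLinearGroup.val_det_apply, Matrix.det_of_isUpperTriangular hu.1]
  simp [hu.2]

theorem mul_apply_of_covBy {u v : GL (Fin n) F} (hu : u ∈ unipotent n F)
    (hv : v ∈ unipotent n F) {i j : Fin n} (hij : i ⋖ j) :
    (u * v : GL (Fin n) F) i j = u i j + v i j := by
  rw [Units.val_mul, Matrix.mul_apply, Finset.sum_eq_add i j hij.ne, hu.2, hv.2, one_mul, mul_one,
    add_comm]
  · rintro k - ⟨hki, hkj⟩
    rcases lt_or_ge k i with hk | hk
    · rw [hu.1 hk, zero_mul]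
    · have hjk : j < k := lt_of_not_ge fun h ↦ (hij.eq_or_eq hk h).elim hki hkj
      rw [hv.1 hjk, mul_zero]
  all_goals simp

theorem swap_conj_mem_unipotent {u : GL (Fin n) F} (hu : u ∈ unipotent n F) {i j : Fin n}
    (hij : i ⋖ j) (huij : u i j = 0) :
    permGL (Equiv.swap i j) * u * (permGL (Equiv.swap i j))⁻¹ ∈ unipotent n F := by
  refine ⟨fun a b hba ↦ ?_, fun a ↦ ?_⟩
  all_goals rw [← map_inv, Equiv.swap_inv, mul_permGL_apply, permGL_mul_apply, Equiv.swap_inv]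
  · by_cases hswap : Equiv.swap i j b < Equiv.swap i j a
    · exact hu.1 hswap
    · obtain ⟨rfl, rfl⟩ : a = j ∧ b = i := by
        rw [Fin.covBy_iff, Nat.covBy_iff_add_one_eq] at hij
        grind
      simpa using huij
  · exact hu.2 _

theorem exists_eq_mul_transvecGL {u : GL (Fin n) F} (hu : u ∈ unipotent n F) {i j : Fin n}
    (hij : i ⋖ j) :
    ∃ v, permGL (Equiv.swap i j) * v * (permGL (Equiv.swap i j))⁻¹ ∈ unipotent n F ∧
      u = v * transvecGL hij.ne (u i j) := by
  have hx := transvecGL_mem_unipotent hij.lt (-u i j)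
  refine ⟨u * transvecGL hij.ne (-u i j), swap_conj_mem_unipotent (mul_mem hu hx) hij ?_, ?_⟩
  · simp [mul_apply_of_covBy hu hx hij, transvecGL_apply, hij.ne]
  · rw [mul_assoc, ← AddChar.map_add_eq_mul, neg_add_cancel, AddChar.map_zero_eq_one, mul_one]

end Borel

section Bruhat

variable {n : ℕ} {F : Type*} [Field F]

theorem mem_of_forall_covBy_swap_mem {H : Submonoid (Equiv.Perm (Fin n))}
    (hH : ∀ i j, i ⋖ j → Equiv.swap i j ∈ H) (w : Equiv.Perm (Fin n)) : w ∈ H := by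
  cases n with
  | zero => exact Subsingleton.elim w 1 ▸ one_mem H
  | succ n =>
    have hle : Submonoid.closure (Set.range fun i : Fin n ↦ Equiv.swap i.castSucc i.succ) ≤ H := by
      rw [Submonoid.closure_le]
      rintro _ ⟨i, rfl⟩
      exact hH _ _ (by simp [Fin.covBy_iff])
    rw [Equiv.Perm.mclosure_swap_castSucc_succ] at hle
    exact hle (Submonoid.mem_top w)

theorem transvecGL_mem_of_unipotent_le {H : Submonoid (GL (Fin n) F)}
    (hU : (unipotent n F).toSubmonoid ≤ H) (hH : ∀ w, permGL w ∈ H) {i j : Fin n} (h : i ≠ j)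
    (t : F) : transvecGL h t ∈ H := by
  rcases h.lt_or_gt with hij | hji
  · exact hU (transvecGL_mem_unipotent hij t)
  · have hconj := transvecGL_mul_permGL (Equiv.swap i j) h t
    simp only [Equiv.swap_inv, Equiv.swap_apply_left, Equiv.swap_apply_right] at hconj
    rw [eq_mul_inv_of_mul_eq hconj, ← map_inv]
    exact mul_mem (mul_mem (hH _) (hU (transvecGL_mem_unipotent hji t))) (hH _)

theorem mem_of_unipotent_le {H : Submonoid (GL (Fin n) F)}
    (hU : (unipotent n F).toSubmonoid ≤ H) (hT : ∀ d, diagGL d ∈ H)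
    (hH : ∀ i j, i ⋖ j → permGL (Equiv.swap i j) ∈ H) (g : GL (Fin n) F) : g ∈ H := by
  suffices hg : ∃ g' ∈ H, g'.val = g.val by
    obtain ⟨g', hg', hval⟩ := hg
    exact Units.ext hval ▸ hg'
  refine Matrix.diagonal_transvection_induction_of_det_ne_zero (fun M ↦ ∃ g' ∈ H, g'.val = M) _
    g.det_ne_zero (fun d hd ↦ ?_) (fun t ↦ ?_) ?_
  · rw [Matrix.det_diagonal, Finset.prod_ne_zero_iff] at hd
    exact ⟨diagGL fun i ↦ Units.mk0 (d i) (hd i (Finset.mem_univ i)), hT _, rfl⟩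
  · have hW := mem_of_forall_covBy_swap_mem (H := H.comap permGL) hH
    exact ⟨_, transvecGL_mem_of_unipotent_le hU hW t.hij t.c, rfl⟩
  · rintro _ _ - - ⟨a, ha, rfl⟩ ⟨b, hb, rfl⟩
    exact ⟨a * b, mul_mem ha hb, rfl⟩

/-- The Bruhat cell `U w B`. -/
def bruhatCell (w : Equiv.Perm (Fin n)) : Set (GL (Fin n) F) :=
  {g | ∃ u ∈ unipotent n F, ∃ b ∈ borel n F, g = u * permGL w * b}

theorem exists_swap_mul_transvecGL_mul_permGL_mem {i j : Fin n} (hij : i < j) (c : F)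
    (w : Equiv.Perm (Fin n)) :
    ∃ w', permGL (Equiv.swap i j) * transvecGL hij.ne c * permGL w ∈ bruhatCell w' := by
  rcases (w⁻¹.injective.ne hij.ne).lt_or_gt with hw | hw
  · refine ⟨Equiv.swap i j * w, 1, one_mem _, _,
      unipotent_le_borel (transvecGL_mem_unipotent hw c), ?_⟩
    rw [mul_assoc, transvecGL_mul_permGL, map_mul, one_mul, mul_assoc]
  obtain rfl | hc := eq_or_ne c 0
  · exact ⟨Equiv.swap i j * w, 1, one_mem _, 1, one_mem _, by simp⟩
  lift c to Fˣ using hc.isUnit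
  have hsw : (Equiv.swap i j * w)⁻¹ i < (Equiv.swap i j * w)⁻¹ j := by simpa using hw
  let d : Fin n → Fˣ := Pi.mulSingle i (-c⁻¹) * Pi.mulSingle j c
  refine ⟨w, _, transvecGL_mem_unipotent hij (↑c⁻¹ : F), _, mul_mem (diagGL_mem_borel (d ∘ w))
    (unipotent_le_borel (transvecGL_mem_unipotent hsw (↑c⁻¹ : F))), ?_⟩
  set s := Equiv.swap i j
  have hs : s * (s * w) = w := by simp [s]
  set x := transvecGL hij.ne (↑c⁻¹ : F)
  calc permGL s * transvecGL hij.ne (c : F) * permGL w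
      = permGL s * transvecGL hij.ne (c : F) * (permGL s)⁻¹ * permGL (s * w) := by
        rw [map_mul]; group
    _ = x * diagGL d * permGL s * (x * permGL (s * w)) := by
        rw [permGL_swap_conj_transvecGL, mul_assoc _ x]
    _ = x * (diagGL d * permGL (s * (s * w))) * transvecGL hsw.ne (↑c⁻¹ : F) := by
        rw [transvecGL_mul_permGL, map_mul _ s (s * w)]; group
    _ = _ := by rw [hs, diagGL_mul_permGL]; group

theorem exists_swap_mul_mem_bruhatCell {i j : Fin n} (hij : i ⋖ j) {g : GL (Fin n) F}
    {w : Equiv.Perm (Fin n)} (hg : g ∈ bruhatCell w) :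
    ∃ w', permGL (Equiv.swap i j) * g ∈ bruhatCell w' := by
  obtain ⟨u, hu, b, hb, rfl⟩ := hg
  obtain ⟨v, hv, huv⟩ := exists_eq_mul_transvecGL hu hij
  obtain ⟨w', u', hu', b', hb', heq⟩ :=
    exists_swap_mul_transvecGL_mul_permGL_mem hij.lt (u i j) w
  set s : GL (Fin n) F := permGL (Equiv.swap i j)
  refine ⟨w', _, mul_mem hv hu', _, mul_mem hb' hb, ?_⟩
  calc s * (u * permGL w * b)
      = s * (v * transvecGL hij.ne (u i j) * permGL w * b) := by rw [← huv]
    _ = s * v * s⁻¹ * (s * transvecGL hij.ne (u i j) * permGL w) * b := by group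
    _ = _ := by rw [heq]; group

theorem exists_mem_bruhatCell (g : GL (Fin n) F) : ∃ w, g ∈ bruhatCell w := by
  let H : Submonoid (GL (Fin n) F) :=
    { carrier := {h | ∀ g, (∃ w, g ∈ bruhatCell w) → ∃ w, h * g ∈ bruhatCell w}
      one_mem' := fun g hg ↦ by simpa using hg
      mul_mem' := fun ha hb g hg ↦ by simpa only [mul_assoc] using ha _ (hb _ hg) }
  suffices hg : g ∈ H by
    simpa using hg 1 ⟨1, 1, one_mem _, 1, one_mem _, by simp⟩
  refine mem_of_unipotent_le (fun v hv ↦ ?_) (fun d ↦ ?_) (fun i j hij ↦ ?_) g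
  · rintro _ ⟨w, u, hu, b, hb, rfl⟩
    exact ⟨w, v * u, mul_mem hv hu, b, hb, by simp only [mul_assoc]⟩
  · rintro _ ⟨w, u, hu, b, hb, rfl⟩
    refine ⟨w, _, diagGL_conj_mem_unipotent d hu, _, mul_mem (diagGL_mem_borel (d ∘ w)) hb, ?_⟩
    calc diagGL d * (u * permGL w * b)
        = diagGL d * u * (diagGL d)⁻¹ * (diagGL d * permGL w) * b := by group
      _ = _ := by rw [diagGL_mul_permGL]; group
  · rintro _ ⟨w, hg⟩
    exact exists_swap_mul_mem_bruhatCell hij hg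

theorem eq_one_of_forall_le_apply {w : Equiv.Perm (Fin n)} (hw : ∀ i, i ≤ w i) : w = 1 := by
  have hsum : ∑ i : Fin n, (i : ℕ) = ∑ i : Fin n, (w i : ℕ) :=
    (Equiv.sum_comp w fun i ↦ (i : ℕ)).symm
  have heq := (Finset.sum_eq_sum_iff_of_le fun i _ ↦ Fin.le_def.1 (hw i)).1 hsum
  exact Equiv.ext fun i ↦ Fin.ext (heq i (Finset.mem_univ i)).symm

theorem exists_covBy_inv_apply_lt {w : Equiv.Perm (Fin n)} (hw : w ≠ Fin.revPerm) :
    ∃ i j, i ⋖ j ∧ w⁻¹ i < w⁻¹ j := by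
  contrapose! hw
  have hanti : StrictAnti (w⁻¹ : Equiv.Perm (Fin n)) := by
    cases n with
    | zero => exact fun i ↦ i.elim0
    | succ n =>
      refine Fin.strictAnti_iff_succ_lt.2 fun i ↦
        (hw i.castSucc i.succ (by simp [Fin.covBy_iff])).lt_of_ne ?_
      exact w⁻¹.injective.ne Fin.castSucc_lt_succ.ne'
  have hmono : Monotone (w⁻¹ * Fin.revPerm : Equiv.Perm (Fin n)) := fun a b hab ↦
    hanti.antitone (by simpa using hab)
  exact inv_mul_eq_one.1 ((Equiv.Perm.monotone_iff _).1 hmono)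

theorem eq_one_of_revPerm_inv_mul_mem_borel {u : GL (Fin n) F} (hu : u ∈ unipotent n F)
    {w : Equiv.Perm (Fin n)} (h : (permGL Fin.revPerm)⁻¹ * u * permGL w ∈ borel n F) :
    w = Fin.revPerm ∧ u = 1 := by
  have hzero {p q : Fin n} (hqp : q < p) : u (Fin.revPerm p) (w q) = 0 := by
    simpa only [← map_inv, mul_permGL_apply, permGL_mul_apply, inv_inv] using h hqp
  have hw : w⁻¹ * Fin.revPerm = 1 := eq_one_of_forall_le_apply fun p ↦ by
    by_contra! hlt
    simpa [hu.2] using hzero hlt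
  obtain rfl := inv_mul_eq_one.1 hw
  refine ⟨rfl, Units.ext (Matrix.ext fun a b ↦ ?_)⟩
  rw [Units.val_one, Matrix.one_apply]
  split_ifs with hab
  · rw [hab, hu.2]
  · rcases lt_or_gt_of_ne hab with hab | hba
    · simpa using hzero (Fin.rev_lt_rev.2 hab)
    · exact hu.1 hba

end Bruhat

section Unipotent

variable {n : ℕ} {F : Type*} [Field F]

/-- The coordinates on the unipotent group given by the entries above the diagonal, column by
column. -/
def unipotentEquiv : unipotent n F ≃ ((j : Fin n) → Fin j → F) where
  toFun u j i := u.1 ⟨i, i.2.trans j.2⟩ j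
  invFun f :=
    let M : Matrix (Fin n) (Fin n) F := Matrix.of fun i j ↦
      if h : (i : ℕ) < j then f j ⟨i, h⟩ else if i = j then 1 else 0
    have hM : M.IsUpperTriangular := fun i j (h : j < i) ↦ by
      simp [M, h.not_gt, h.ne']
    have hdet : M.det = 1 := by rw [Matrix.det_of_isUpperTriangular hM]; simp [M]
    ⟨Matrix.GeneralLinearGroup.mkOfDetNeZero M (hdet ▸ one_ne_zero), hM, fun i ↦ by
      simp [Matrix.GeneralLinearGroup.mkOfDetNeZero, M]⟩
  left_inv u := by
    refine Subtype.ext (Units.ext (Matrix.ext fun i j ↦ ?_))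
    change (if _ : (i : ℕ) < j then u.1 i j else if i = j then 1 else 0) = u.1 i j
    split_ifs with hlt heq
    · rfl
    · rw [heq, u.2.2]
    · exact (u.2.1 ((not_lt.1 hlt).lt_of_ne (Fin.val_ne_of_ne (Ne.symm heq)))).symm
  right_inv f := by
    funext j i
    exact dif_pos i.2

theorem card_unipotent : Nat.card (unipotent n F) = ∏ j : Fin n, Nat.card F ^ (j : ℕ) := by
  simp [Nat.card_congr unipotentEquiv, Nat.card_pi]

theorem isPGroup_unipotent [Finite F] (p : ℕ) [CharP F p] : IsPGroup p (unipotent n F) := by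
  have := Fintype.ofFinite F
  obtain ⟨m, -, hm⟩ := FiniteField.card F p
  refine IsPGroup.of_card (n := ∑ j : Fin n, m * j) ?_
  simp only [card_unipotent, Nat.card_eq_fintype_card, hm, ← pow_mul, Finset.prod_pow_eq_pow_sum]

theorem padicValNat_card_unipotent [Finite F] (p : ℕ) [hp : Fact p.Prime] [CharP F p] :
    padicValNat p (Nat.card (unipotent n F)) = padicValNat p (Nat.card (GL (Fin n) F)) := by
  have := Fintype.ofFinite F
  have hpF : p ∣ Nat.card F := by
    rw [← CharP.cast_eq_zero_iff F, Nat.card_eq_fintype_card, Nat.cast_card_eq_zero]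
  have hcard : Nat.card (GL (Fin n) F) =
      Nat.card (unipotent n F) * ∏ j : Fin n, (Nat.card F ^ (n - j : ℕ) - 1) := by
    rw [card_unipotent, Matrix.card_GL_field, ← Finset.prod_mul_distrib]
    refine Finset.prod_congr rfl fun j _ ↦ ?_
    rw [Nat.card_eq_fintype_card, Nat.mul_sub, ← pow_add, mul_one, Nat.add_sub_cancel' j.2.le]
  have hndvd : ¬ p ∣ ∏ j : Fin n, (Nat.card F ^ (n - j : ℕ) - 1) := by
    rw [hp.out.prime.dvd_finsetProd_iff]
    rintro ⟨j, -, hj⟩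
    have hpow : p ∣ Nat.card F ^ (n - j : ℕ) := hpF.trans (dvd_pow_self _ (by lia))
    rw [Nat.dvd_sub_iff_right (Nat.one_le_pow _ _ Nat.card_pos) hpow] at hj
    exact hp.out.not_dvd_one hj
  rw [hcard, padicValNat.mul Nat.card_pos.ne' (fun h ↦ hndvd (by rw [h]; exact dvd_zero p)),
    padicValNat.eq_zero_of_not_dvd hndvd, add_zero]

open Classical in
variable (n F) in
/-- The sum of the entries just above the diagonal, as a character of the unipotent group. -/
noncomputable def superdiagSum : unipotent n F →* Multiplicative F :=
  MonoidHom.mk' (fun u ↦ .ofAdd (∑ p : Fin n × Fin n with p.1 ⋖ p.2, u.1 p.1 p.2)) fun u v ↦ by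
    rw [← ofAdd_add, ← Finset.sum_add_distrib]
    exact congrArg _ (Finset.sum_congr rfl fun p hp ↦
      mul_apply_of_covBy u.2 v.2 (Finset.mem_filter.1 hp).2)

open Classical in
theorem superdiagSum_transvecGL {i j : Fin n} (hij : i ⋖ j) (t : F) :
    superdiagSum n F ⟨transvecGL hij.ne t, transvecGL_mem_unipotent hij.lt t⟩ = .ofAdd t := by
  refine congrArg Multiplicative.ofAdd ((Finset.sum_eq_single_of_mem (i, j) ?_ ?_).trans ?_)
  · exact Finset.mem_filter.2 ⟨Finset.mem_univ _, hij⟩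
  · rintro ⟨a, b⟩ hab hne
    have hab : a ⋖ b := (Finset.mem_filter.1 hab).2
    have hne : ¬ (i = a ∧ j = b) := fun ⟨ha, hb⟩ ↦ hne (by rw [ha, hb])
    simp [transvecGL_apply, hab.ne, hne]
  · simp [transvecGL_apply, hij.ne]

end Unipotent

section CyclicVectors

variable {G k V : Type*} [Field k] [AddCommGroup V] [Module k V]

open scoped MonoidAlgebra in
theorem exists_forall_apply_mem_span_singleton [CommGroup G] [IsAlgClosed k]
    [FiniteDimensional k V] [Nontrivial V] (ρ : Representation k G V) :
    ∃ v ≠ 0, ∀ g, ρ g v ∈ k ∙ v := by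
  have : Module.Finite k ρ.asModule := inferInstanceAs (Module.Finite k V)
  have : IsArtinian k[G] ρ.asModule := isArtinian_of_tower k inferInstance
  have : Nontrivial ρ.asModule := inferInstanceAs (Nontrivial V)
  obtain ⟨N, hN⟩ := IsAtomic.exists_atom (Submodule k[G] ρ.asModule)
  have : IsSimpleModule k[G] N := isSimpleModule_iff_isAtom.2 hN
  have : Module.Finite k N := .of_injective (N.subtype.restrictScalars k) N.subtype_injective
  obtain ⟨v, hv, hspan⟩ := finrank_eq_one_iff'.1
    (IsSimpleModule.finrank_eq_one_of_isMulCommutative k[G] N k)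
  refine ⟨ρ.asModuleEquiv v.1, fun h ↦ hv (Subtype.ext h), fun g ↦ ?_⟩
  obtain ⟨c, hc⟩ := hspan (MonoidAlgebra.of k G g • v)
  refine Submodule.mem_span_singleton.2 ⟨c, (congrArg (fun x ↦ ρ.asModuleEquiv x.1) hc).trans ?_⟩
  exact (ρ.asModuleEquiv_map_smul _ _).trans (by rw [asAlgebraHom_of])

variable [Group G] (ρ : Representation k G V)

/-- The subrepresentation generated by a vector. -/
def generatedSubrep (v : V) : Subrepresentation ρ where
  toSubmodule := Submodule.span k (Set.range (ρ · v))
  apply_mem_toSubmodule g := by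
    change Submodule.span k _ ≤ (Submodule.span k _).comap (ρ g)
    rw [Submodule.span_le]
    rintro _ ⟨h, rfl⟩
    exact Submodule.subset_span ⟨g * h, by simp⟩

theorem span_range_apply_eq_top [ρ.IsIrreducible] {v : V} (hv : v ≠ 0) :
    Submodule.span k (Set.range (ρ · v)) = ⊤ := by
  have hmem : v ∈ generatedSubrep ρ v := Submodule.subset_span ⟨1, by simp⟩
  have hne : generatedSubrep ρ v ≠ ⊥ := fun h ↦ hv (by rw [h] at hmem; exact hmem)
  exact congrArg Subrepresentation.toSubmodule
    ((eq_bot_or_eq_top (generatedSubrep ρ v)).resolve_left hne)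

end CyclicVectors

section GenericCharacter

variable {n : ℕ} {F k V : Type*} [Field F] [Field k] [AddCommGroup V] [Module k V]

/-- The linear character `u ↦ e (∑ i, u i (i + 1))` of the unipotent group attached to an additive
character `e` of the field; it is generic when `e` is nontrivial. -/
noncomputable def genericChar (e : AddChar F k) : unipotent n F →* k :=
  e.toMonoidHom.comp (superdiagSum n F)

theorem genericChar_transvecGL (e : AddChar F k) {i j : Fin n} (hij : i ⋖ j) (t : F) :
    genericChar e ⟨transvecGL hij.ne t, transvecGL_mem_unipotent hij.lt t⟩ = e t := by
  rw [genericChar, MonoidHom.comp_apply, superdiagSum_transvecGL hij]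
  rfl

theorem mem_weightSpace_one {G : Type*} [Group G] {ρ : Representation k G V} {U : Subgroup G}
    {v : V} : v ∈ weightSpace ρ (1 : U →* k) ↔ ∀ u ∈ U, ρ u v = v := by
  simp [weightSpace]

variable {ρ : Representation k (GL (Fin n) F) V}

theorem apply_diagGL_mem_weightSpace_one (d : Fin n → Fˣ) {v : V}
    (hv : v ∈ weightSpace ρ (1 : unipotent n F →* k)) :
    ρ (diagGL d) v ∈ weightSpace ρ (1 : unipotent n F →* k) := by
  rw [mem_weightSpace_one] at hv ⊢
  intro u hu
  have hconj := diagGL_conj_mem_unipotent d⁻¹ hu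
  rw [map_inv, inv_inv] at hconj
  have hcomm : u * diagGL d = diagGL d * ((diagGL d)⁻¹ * u * diagGL d) := by group
  rw [← End.mul_apply, ← map_mul, hcomm, map_mul, End.mul_apply, hv _ hconj]

theorem exists_forall_apply_diagGL_mem_span_singleton [IsAlgClosed k] [FiniteDimensional k V]
    (hρ : weightSpace ρ (1 : unipotent n F →* k) ≠ ⊥) :
    ∃ v ∈ weightSpace ρ (1 : unipotent n F →* k), v ≠ 0 ∧ ∀ d, ρ (diagGL d) v ∈ k ∙ v := by
  have := Submodule.nontrivial_iff_ne_bot.2 hρ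
  let W : Subrepresentation (ρ.comp diagGL) :=
    ⟨weightSpace ρ (1 : unipotent n F →* k), fun d _ ↦ apply_diagGL_mem_weightSpace_one d⟩
  have : Nontrivial W.toSubmodule := this
  obtain ⟨v, hv, hspan⟩ := exists_forall_apply_mem_span_singleton W.toRepresentation
  refine ⟨v, v.2, fun h ↦ hv (Subtype.ext h), fun d ↦ ?_⟩
  obtain ⟨c, hc⟩ := Submodule.mem_span_singleton.1 (hspan d)
  exact Submodule.mem_span_singleton.2 ⟨c, congrArg Subtype.val hc⟩

variable {e : AddChar F k}

section WeightSum

variable [Fintype (unipotent n F)]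

theorem weightSum_genericChar_apply_permGL (he : e ≠ 1) {v : V}
    (hv : v ∈ weightSpace ρ (1 : unipotent n F →* k)) {w : Equiv.Perm (Fin n)}
    (hw : w ≠ Fin.revPerm) : weightSum ρ (genericChar e) (ρ (permGL w) v) = 0 := by
  obtain ⟨i, j, hij, hlt⟩ := exists_covBy_inv_apply_lt hw
  obtain ⟨t, ht⟩ := AddChar.ne_one_iff.1 he
  have hfix : ρ (transvecGL hij.ne t) (ρ (permGL w) v) = ρ (permGL w) v := by
    rw [← End.mul_apply, ← map_mul, transvecGL_mul_permGL, map_mul, End.mul_apply,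
      mem_weightSpace_one.1 hv _ (transvecGL_mem_unipotent hlt t)]
  have hsmul : e t • weightSum ρ (genericChar e) (ρ (permGL w) v) =
      weightSum ρ (genericChar e) (ρ (permGL w) v) := by
    conv_rhs => rw [← hfix, ← End.mul_apply]
    rw [← genericChar_transvecGL e hij t, ← LinearMap.smul_apply, ← weightSum_mul_map]
  by_contra hne
  exact ht (smul_left_injective k hne (hsmul.trans (one_smul k _).symm))

theorem weightSum_genericChar_apply_mem_span_singleton (he : e ≠ 1) {v : V}
    (hv : v ∈ weightSpace ρ (1 : unipotent n F →* k)) (hT : ∀ d, ρ (diagGL d) v ∈ k ∙ v)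
    (hspan : Submodule.span k (Set.range (ρ · v)) = ⊤) (x : V) :
    weightSum ρ (genericChar e) x ∈
      k ∙ weightSum ρ (genericChar e) (ρ (permGL Fin.revPerm) v) := by
  have hx : x ∈ Submodule.span k (Set.range (ρ · v)) := hspan ▸ Submodule.mem_top
  rw [← Submodule.mem_comap]
  refine (Submodule.span_le.2 ?_) hx
  rintro _ ⟨g, rfl⟩
  obtain ⟨w, u, hu, b, hb, rfl⟩ := exists_mem_bruhatCell g
  obtain ⟨d, u', hu', rfl⟩ := exists_eq_diagGL_mul hb
  obtain ⟨c, hc⟩ := Submodule.mem_span_singleton.1 (hT d)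
  have hE : weightSum ρ (genericChar e) (ρ (u * permGL w * (diagGL d * u')) v) =
      (genericChar e ⟨u, hu⟩ * c) • weightSum ρ (genericChar e) (ρ (permGL w) v) := by
    have := LinearMap.congr_fun (weightSum_mul_map ρ (genericChar e) ⟨u, hu⟩) (ρ (permGL w) v)
    simp only [map_mul, End.mul_apply, mem_weightSpace_one.1 hv u' hu', ← hc, map_smul]
    rw [mul_comm, mul_smul]
    exact congrArg (c • ·) this
  rw [SetLike.mem_coe, Submodule.mem_comap, hE]
  by_cases hw : w = Fin.revPerm
  · exact hw ▸ Submodule.smul_mem _ _ (Submodule.mem_span_singleton_self _)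
  · rw [weightSum_genericChar_apply_permGL he hv hw, smul_zero]
    exact Submodule.zero_mem _

end WeightSum

theorem finrank_weightSpace_genericChar_le_one [Finite (unipotent n F)] [CharZero k] (he : e ≠ 1)
    {v : V} (hv : v ∈ weightSpace ρ (1 : unipotent n F →* k)) (hT : ∀ d, ρ (diagGL d) v ∈ k ∙ v)
    (hspan : Submodule.span k (Set.range (ρ · v)) = ⊤) :
    finrank k (weightSpace ρ (genericChar e : unipotent n F →* k)) ≤ 1 := by
  classical
  have := Fintype.ofFinite (unipotent n F)
  refine (Submodule.finrank_mono fun x hx ↦ ?_).trans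
    (finrank_span_le_card {weightSum ρ (genericChar e) (ρ (permGL Fin.revPerm) v)})
  have hmem := weightSum_genericChar_apply_mem_span_singleton he hv hT hspan x
  rw [weightSum_apply_of_mem hx] at hmem
  exact (Submodule.smul_mem_iff _ (Nat.cast_ne_zero.2 Nat.card_pos.ne')).1 hmem

end GenericCharacter

section TorusWeight

theorem exists_monoidHom_forall_apply_eq_smul {M k V : Type*} [Monoid M] [Field k] [AddCommGroup V]
    [Module k V] (ρ : Representation k M V) {v : V} (hv : v ≠ 0) (h : ∀ g, ρ g v ∈ k ∙ v) :
    ∃ θ : M →* k, ∀ g, ρ g v = θ g • v := by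
  choose θ hθ using fun g ↦ Submodule.mem_span_singleton.1 (h g)
  have hinj := smul_left_injective k hv
  refine ⟨⟨⟨θ, hinj ?_⟩, fun g g' ↦ hinj ?_⟩, fun g ↦ (hθ g).symm⟩
  · simp [hθ]
  · change θ (g * g') • v = (θ g * θ g') • v
    rw [hθ, map_mul, End.mul_apply, ← hθ g', map_smul, ← hθ g, smul_smul, mul_comm]

theorem exists_monoidHom_forall_eq_apply_prod {ι M N : Type*} [Fintype ι] [Nonempty ι]
    [CommMonoid M] [CommMonoid N] (Θ : (ι → M) →* N)
    (hΘ : ∀ (w : Equiv.Perm ι) d, Θ (d ∘ w) = Θ d) : ∃ α : M →* N, ∀ d, Θ d = α (∏ i, d i) := by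
  classical
  let i₀ := Classical.arbitrary ι
  refine ⟨Θ.comp (MonoidHom.mulSingle (fun _ ↦ M) i₀), fun d ↦ ?_⟩
  have hsingle (i : ι) (x : M) : Θ (Pi.mulSingle i x) = Θ (Pi.mulSingle i₀ x) := by
    rw [← hΘ (Equiv.swap i i₀)]
    congr 1
    ext j
    simp [Pi.mulSingle_apply, Equiv.swap_apply_eq_iff]
  rw [← Finset.univ_prod_mulSingle d, map_prod, map_prod]
  simp [hsingle]

theorem commute_weightSum_one {G A E : Type*} [Group G] {U : Subgroup G} [Fintype U]
    [CommSemiring A] [Semiring E] [Algebra A E] (R : G →* E) {g : G}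
    (hg : ∀ u ∈ U, g * u * g⁻¹ ∈ U) : Commute (R g) (weightSum R (1 : U →* A)) := by
  let f (u : U) : U := ⟨g * u * g⁻¹, hg u u.2⟩
  have hf : Function.Bijective f := Finite.injective_iff_bijective.1 fun u v huv ↦
    Subtype.ext (by simpa [f] using huv)
  simp only [Commute, SemiconjBy, weightSum, MonoidHom.one_apply, one_smul, Finset.mul_sum,
    Finset.sum_mul, ← map_mul]
  exact Fintype.sum_bijective f hf _ _ fun u ↦ by simp [f]

variable {n : ℕ} {F k V : Type*} [Field F] [Field k] [AddCommGroup V] [Module k V]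
  {ρ : Representation k (GL (Fin n) F) V}

section WeightSum

variable [Fintype (unipotent n F)]

theorem weightSum_one_apply_diagGL (d : Fin n → Fˣ) (v : V) :
    weightSum ρ (1 : unipotent n F →* k) (ρ (diagGL d) v) =
      ρ (diagGL d) (weightSum ρ (1 : unipotent n F →* k) v) :=
  LinearMap.congr_fun
    (commute_weightSum_one ρ fun _ hu ↦ diagGL_conj_mem_unipotent d hu).symm.eq v

theorem weightSum_one_apply_unipotent {u : GL (Fin n) F} (hu : u ∈ unipotent n F) (v : V) :
    weightSum ρ (1 : unipotent n F →* k) (ρ u v) = weightSum ρ (1 : unipotent n F →* k) v :=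
  (LinearMap.congr_fun (weightSum_mul_map ρ 1 ⟨u, hu⟩) v).trans (one_smul k _)

theorem weightSum_one_apply_swap_conj_eq_zero {i j : Fin n} (hij : i ⋖ j) {v : V}
    (hv : v ∈ weightSpace ρ (1 : unipotent n F →* k))
    (hzero : weightSum ρ (1 : unipotent n F →* k) (ρ (permGL (Equiv.swap i j)) v) = 0)
    {u : GL (Fin n) F} (hu : u ∈ unipotent n F) (huij : u i j ≠ 0) :
    weightSum ρ (1 : unipotent n F →* k)
      (ρ (permGL (Equiv.swap i j) * u * (permGL (Equiv.swap i j))⁻¹) v) = 0 := by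
  set s : GL (Fin n) F := permGL (Equiv.swap i j)
  obtain ⟨u', hu', huu'⟩ := exists_eq_mul_transvecGL hu hij
  let t := Units.mk0 _ huij
  let x := transvecGL hij.ne (↑t⁻¹ : F)
  have hx : x ∈ unipotent n F := transvecGL_mem_unipotent hij.lt _
  let d : Fin n → Fˣ := Pi.mulSingle i (-t⁻¹) * Pi.mulSingle j t
  have hconj : s * u * s⁻¹ = s * u' * s⁻¹ * (x * (diagGL d * (s * x))) := by
    calc s * u * s⁻¹ = s * u' * s⁻¹ * (s * transvecGL hij.ne (t : F) * s⁻¹) := by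
          conv_lhs => rw [huu']
          simp only [mul_assoc, inv_mul_cancel_left]
          rfl
      _ = _ := by rw [permGL_swap_conj_transvecGL]; simp only [mul_assoc]; rfl
  rw [hconj, map_mul, End.mul_apply, weightSum_one_apply_unipotent hu', map_mul, End.mul_apply,
    weightSum_one_apply_unipotent hx, map_mul ρ, End.mul_apply, weightSum_one_apply_diagGL,
    map_mul ρ s, End.mul_apply, mem_weightSpace_one.1 hv x hx, hzero, map_zero]

theorem weightSum_one_apply_permGL_swap_ne_zero [CharZero k] {i j : Fin n} (hij : i ⋖ j) {v : V}
    (hv : v ∈ weightSpace ρ (1 : unipotent n F →* k)) (hv0 : v ≠ 0) :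
    weightSum ρ (1 : unipotent n F →* k) (ρ (permGL (Equiv.swap i j)) v) ≠ 0 := by
  classical
  intro hzero
  set E := weightSum ρ (1 : unipotent n F →* k)
  set s : GL (Fin n) F := permGL (Equiv.swap i j) with hs
  have hterm (u : unipotent n F) :
      E (ρ (s * u * s⁻¹) v) = if u.1 i j = 0 then (Nat.card (unipotent n F) : k) • v else 0 := by
    split_ifs with huij
    · rw [mem_weightSpace_one.1 hv _ (swap_conj_mem_unipotent u.2 hij huij)]
      exact weightSum_apply_of_mem hv
    · exact weightSum_one_apply_swap_conj_eq_zero hij hv hzero u.2 huij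
  have hsum : ∑ u : unipotent n F, E (ρ (s * u * s⁻¹) v) = E (ρ s (E (ρ s v))) := by
    have hinv : s⁻¹ = s := by rw [hs, ← map_inv, Equiv.swap_inv]
    simp only [E, weightSum, MonoidHom.one_apply, one_smul, LinearMap.sum_apply, map_sum, hinv,
      map_mul, End.mul_apply]
  rw [hzero, map_zero, map_zero, Finset.sum_congr rfl fun u _ ↦ hterm u, ← Finset.sum_filter,
    Finset.sum_const, ← Nat.cast_smul_eq_nsmul k, smul_eq_zero, smul_eq_zero, Nat.cast_eq_zero,
    Nat.cast_eq_zero, Finset.card_eq_zero] at hsum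
  refine hsum.elim (Finset.ne_empty_of_mem (a := 1) (by simp [hij.ne])) fun h ↦ ?_
  exact h.elim Nat.card_pos.ne' hv0

end WeightSum

theorem exists_forall_apply_borel_eq_smul [Finite (unipotent n F)] [CharZero k] [NeZero n] {v : V}
    (hv : v ∈ weightSpace ρ (1 : unipotent n F →* k)) (hv0 : v ≠ 0)
    (hline : finrank k (weightSpace ρ (1 : unipotent n F →* k)) = 1) :
    ∃ α : Fˣ →* kˣ, ∀ b ∈ borel n F, ρ b v = α b.det • v := by
  have := Fintype.ofFinite (unipotent n F)
  have hspan {x : V} (hx : x ∈ weightSpace ρ (1 : unipotent n F →* k)) : x ∈ k ∙ v := by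
    obtain ⟨c, hc⟩ := exists_smul_eq_of_finrank_eq_one hline
      (x := ⟨v, hv⟩) (fun h ↦ hv0 (congrArg Subtype.val h)) ⟨x, hx⟩
    exact Submodule.mem_span_singleton.2 ⟨c, congrArg Subtype.val hc⟩
  obtain ⟨Θ, hΘ⟩ := exists_monoidHom_forall_apply_eq_smul (ρ.comp diagGL) hv0 fun d ↦
    hspan (apply_diagGL_mem_weightSpace_one d hv)
  have hswap (i j : Fin n) (hij : i ⋖ j) (d : Fin n → Fˣ) : Θ (d ∘ Equiv.swap i j) = Θ d := by
    let y := weightSum ρ (1 : unipotent n F →* k) (ρ (permGL (Equiv.swap i j)) v)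
    have hy0 : y ≠ 0 := weightSum_one_apply_permGL_swap_ne_zero hij hv hv0
    obtain ⟨c, hc⟩ := Submodule.mem_span_singleton.1 (hspan (weightSum_apply_mem ρ 1 _))
    have hΘ' (d) : ρ (diagGL d) v = Θ d • v := hΘ d
    refine smul_left_injective k hy0 ?_
    calc Θ (d ∘ Equiv.swap i j) • y = ρ (diagGL d) y := by
          rw [← weightSum_one_apply_diagGL, ← End.mul_apply (ρ _), ← map_mul, diagGL_mul_permGL,
            map_mul, End.mul_apply, hΘ', map_smul, map_smul]
      _ = Θ d • y := by rw [show y = c • v from hc.symm, map_smul, hΘ', smul_comm]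
  let H : Submonoid (Equiv.Perm (Fin n)) :=
    { carrier := {w | ∀ d, Θ (d ∘ w) = Θ d}
      one_mem' := fun d ↦ rfl
      mul_mem' := fun {a b} ha hb d ↦ (hb (d ∘ a)).trans (ha d) }
  obtain ⟨α, hα⟩ := exists_monoidHom_forall_eq_apply_prod Θ fun w ↦
    mem_of_forall_covBy_swap_mem (H := H) hswap w
  refine ⟨α.toHomUnits, fun b hb ↦ ?_⟩
  obtain ⟨d, u, hu, rfl⟩ := exists_eq_diagGL_mul hb
  rw [map_mul, End.mul_apply, mem_weightSpace_one.1 hv u hu, map_mul, det_diagGL,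
    det_eq_one_of_mem_unipotent hu, mul_one, Units.smul_def, MonoidHom.coe_toHomUnits, ← hα]
  exact hΘ d

end TorusWeight

section SteinbergVector

open Equiv.Perm (sign)

variable {n : ℕ} {F : Type*} [Field F]

variable (F) in
/-- The coset of the flag spanned by the standard basis vectors in the order given by `w`. -/
def coordFlag (w : Equiv.Perm (Fin n)) : GL (Fin n) F ⧸ borel n F :=
  (permGL w : GL (Fin n) F)

theorem permGL_smul_coordFlag (s w : Equiv.Perm (Fin n)) :
    (permGL s : GL (Fin n) F) • coordFlag F w = coordFlag F (s * w) := by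
  rw [coordFlag, coordFlag, map_mul]
  rfl

theorem diagGL_smul_coordFlag (d : Fin n → Fˣ) (w : Equiv.Perm (Fin n)) :
    diagGL d • coordFlag F w = coordFlag F w := by
  rw [coordFlag, MulAction.Quotient.smul_coe, smul_eq_mul, diagGL_mul_permGL]
  exact QuotientGroup.mk_mul_of_mem _ (diagGL_mem_borel _)

theorem transvecGL_smul_coordFlag {i j : Fin n} (hij : i ≠ j) (t : F) {w : Equiv.Perm (Fin n)}
    (hw : w⁻¹ i < w⁻¹ j) : transvecGL hij t • coordFlag F w = coordFlag F w := by
  rw [coordFlag, MulAction.Quotient.smul_coe, smul_eq_mul, transvecGL_mul_permGL]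
  exact QuotientGroup.mk_mul_of_mem _ (unipotent_le_borel (transvecGL_mem_unipotent hw t))

variable (k : Type*) [Field k]

variable (n F) in
/-- The permutation representation on the complete flags of `F ^ n`, identified with the cosets of
the Borel subgroup. -/
noncomputable abbrev flagRep :=
  ofMulAction k (GL (Fin n) F) (GL (Fin n) F ⧸ borel n F)

variable (n F) in
/-- The alternating sum of the coordinate flags, a generator of the Steinberg representation. -/
noncomputable def steinbergVector : MonoidAlgebra k (GL (Fin n) F ⧸ borel n F) :=
  ∑ w : Equiv.Perm (Fin n), .single (coordFlag F w) (sign w : k)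

variable (F) in
/-- The part of the Steinberg vector fixed by the root subgroup of `(i, j)`. -/
noncomputable def halfSteinbergVector (i j : Fin n) :
    MonoidAlgebra k (GL (Fin n) F ⧸ borel n F) :=
  ∑ w : Equiv.Perm (Fin n) with w⁻¹ i < w⁻¹ j, .single (coordFlag F w) (sign w : k)

variable {k}

theorem flagRep_permGL_steinbergVector (s : Equiv.Perm (Fin n)) :
    flagRep n F k (permGL s) (steinbergVector n F k) = (sign s : k) • steinbergVector n F k := by
  have hs : (sign s : k) * sign s = 1 := by
    rw [← Int.cast_mul, Int.units_coe_mul_self, Int.cast_one]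
  simp only [steinbergVector, map_sum, ofMulAction_single, permGL_smul_coordFlag, Finset.smul_sum]
  rw [← Equiv.sum_comp (Equiv.mulLeft s) fun w ↦ (sign s : k) • MonoidAlgebra.single _ _]
  simp [MonoidAlgebra.smul_single, ← mul_assoc, hs]

theorem flagRep_diagGL_steinbergVector (d : Fin n → Fˣ) :
    flagRep n F k (diagGL d) (steinbergVector n F k) = steinbergVector n F k := by
  simp only [steinbergVector, map_sum, ofMulAction_single, diagGL_smul_coordFlag]

theorem flagRep_diagGL_halfSteinbergVector (d : Fin n → Fˣ) (i j : Fin n) :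
    flagRep n F k (diagGL d) (halfSteinbergVector F k i j) = halfSteinbergVector F k i j := by
  simp only [halfSteinbergVector, map_sum, ofMulAction_single, diagGL_smul_coordFlag]

theorem flagRep_transvecGL_halfSteinbergVector {i j : Fin n} (hij : i ≠ j) (t : F) :
    flagRep n F k (transvecGL hij t) (halfSteinbergVector F k i j) =
      halfSteinbergVector F k i j := by
  simp only [halfSteinbergVector, map_sum, ofMulAction_single]
  refine Finset.sum_congr rfl fun w hw ↦ ?_
  rw [transvecGL_smul_coordFlag hij t (Finset.mem_filter.1 hw).2]

theorem steinbergVector_eq_sub {i j : Fin n} (hij : i ≠ j) :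
    steinbergVector n F k = halfSteinbergVector F k i j -
      flagRep n F k (permGL (Equiv.swap i j)) (halfSteinbergVector F k i j) := by
  have hswap : flagRep n F k (permGL (Equiv.swap i j)) (halfSteinbergVector F k i j) =
      -∑ w : Equiv.Perm (Fin n) with ¬ w⁻¹ i < w⁻¹ j, .single (coordFlag F w) (sign w : k) := by
    simp only [halfSteinbergVector, map_sum, ofMulAction_single, permGL_smul_coordFlag,
      ← Finset.sum_neg_distrib]
    refine Finset.sum_equiv (Equiv.mulLeft (Equiv.swap i j)) (fun w ↦ ?_) fun w _ ↦ ?_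
    · simp only [Finset.mem_filter, Finset.mem_univ, true_and, Equiv.coe_mulLeft,
        _root_.mul_inv_rev, Equiv.swap_inv, Equiv.Perm.mul_apply, Equiv.swap_apply_left,
        Equiv.swap_apply_right, not_lt, (w⁻¹.injective.ne hij).le_iff_lt]
    · simp [Equiv.Perm.sign_swap hij]
  rw [hswap, sub_neg_eq_add, halfSteinbergVector, Finset.sum_filter_add_sum_filter_not,
    steinbergVector]

theorem flagRep_swap_transvecGL_steinbergVector {i j : Fin n} (hij : i ≠ j) (t : Fˣ) :
    flagRep n F k (permGL (Equiv.swap i j) * transvecGL hij (t : F)) (steinbergVector n F k) =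
      flagRep n F k (transvecGL hij (↑t⁻¹ : F)) (steinbergVector n F k) -
        steinbergVector n F k := by
  set s : GL (Fin n) F := permGL (Equiv.swap i j) with hs
  set f := steinbergVector n F k
  set g := halfSteinbergVector F k i j
  set x := transvecGL hij (t : F)
  set y := transvecGL hij (↑t⁻¹ : F)
  let d : Fin n → Fˣ := Pi.mulSingle i (-t⁻¹) * Pi.mulSingle j t
  have hsub : f = g - flagRep n F k s g := steinbergVector_eq_sub hij
  have hxg : flagRep n F k x g = g := flagRep_transvecGL_halfSteinbergVector hij _
  have hyg : flagRep n F k y g = g := flagRep_transvecGL_halfSteinbergVector hij _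
  have hsxs : s * x * s = y * diagGL d * s * y := by
    rw [← permGL_swap_conj_transvecGL hij t, hs, ← map_inv, Equiv.swap_inv]
  have hsg : flagRep n F k s g = g - f := by rw [hsub]; abel
  have hsxsg : flagRep n F k (s * x * s) g = g - flagRep n F k y f := by
    rw [hsxs, map_mul, End.mul_apply, hyg, map_mul, End.mul_apply, hsg, map_mul, End.mul_apply,
      map_sub, flagRep_diagGL_halfSteinbergVector, flagRep_diagGL_steinbergVector, map_sub, hyg]
  calc flagRep n F k (s * x) f
      = flagRep n F k s (flagRep n F k x g) - flagRep n F k (s * x * s) g := by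
        rw [hsub, map_sub, map_mul _ (s * x) s, End.mul_apply, map_mul, End.mul_apply]
    _ = flagRep n F k s g - g + flagRep n F k y f := by rw [hxg, hsxsg]; abel
    _ = flagRep n F k y f - f := by rw [hsub]; abel

end SteinbergVector

section Steinberg

open Equiv.Perm (sign)

theorem isIrreducible_of_forall_mem {G k V : Type*} [Group G] [Finite G] [Field k]
    [NeZero (Nat.card G : k)] [AddCommGroup V] [Module k V] {ρ : Representation k G V} {z : V}
    (hz0 : z ≠ 0) (hz : ∀ W : Subrepresentation ρ, W ≠ ⊥ → z ∈ W) : ρ.IsIrreducible where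
  exists_pair_ne := ⟨⊥, ⊤, fun h ↦ hz0 <| by
    have : z ∈ (⊤ : Subrepresentation ρ) := Submodule.mem_top
    rwa [← h] at this⟩
  eq_bot_or_eq_top W := by
    have : IsSemisimpleRepresentation ρ := inferInstance
    obtain ⟨W', hW'⟩ := exists_isCompl W
    by_cases hbot : W' = ⊥
    · exact .inr (eq_top_of_isCompl_bot (hbot ▸ hW'))
    · refine .inl (by_contra fun hne ↦ hz0 ?_)
      exact hW'.disjoint.le_bot (x := z) ⟨hz W hne, hz W' hbot⟩

theorem weightSum_apply_mem_subrepresentation {G k V : Type*} [Group G] [Field k]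
    [AddCommGroup V] [Module k V] {ρ : Representation k G V} (W : Subrepresentation ρ)
    {U : Subgroup G} [Fintype U] (χ : U →* k) {x : V} (hx : x ∈ W) : weightSum ρ χ x ∈ W := by
  rw [weightSum, LinearMap.sum_apply]
  exact W.toSubmodule.sum_mem fun u _ ↦ W.toSubmodule.smul_mem _ (W.apply_mem_toSubmodule u hx)

variable {n : ℕ} {F k : Type*} [Field F] [Field k]

variable (n F k) in
/-- The space of the Steinberg representation, spanned by the translates of the Steinberg vector
under the unipotent group. -/
noncomputable def steinbergSpace : Submodule k (MonoidAlgebra k (GL (Fin n) F ⧸ borel n F)) :=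
  Submodule.span k (Set.range fun u : unipotent n F ↦ flagRep n F k u (steinbergVector n F k))

theorem flagRep_apply_steinbergVector_mem {u : GL (Fin n) F} (hu : u ∈ unipotent n F) :
    flagRep n F k u (steinbergVector n F k) ∈ steinbergSpace n F k :=
  Submodule.subset_span ⟨⟨u, hu⟩, rfl⟩

theorem steinbergVector_mem : steinbergVector n F k ∈ steinbergSpace n F k := by
  have := flagRep_apply_steinbergVector_mem (n := n) (F := F) (k := k) (one_mem _)
  rwa [map_one, End.one_apply] at this

theorem flagRep_swap_mul_steinbergVector_mem {i j : Fin n} (hij : i < j) (t : F) :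
    flagRep n F k (permGL (Equiv.swap i j) * transvecGL hij.ne t) (steinbergVector n F k) ∈
      steinbergSpace n F k := by
  rcases eq_or_ne t 0 with rfl | ht
  · rw [AddChar.map_zero_eq_one, mul_one, flagRep_permGL_steinbergVector]
    exact Submodule.smul_mem _ _ steinbergVector_mem
  · rw [← Units.val_mk0 ht, flagRep_swap_transvecGL_steinbergVector]
    exact Submodule.sub_mem _ (flagRep_apply_steinbergVector_mem
      (transvecGL_mem_unipotent hij _)) steinbergVector_mem

theorem flagRep_apply_mem_steinbergSpace (g : GL (Fin n) F)
    {x : MonoidAlgebra k (GL (Fin n) F ⧸ borel n F)} (hx : x ∈ steinbergSpace n F k) :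
    flagRep n F k g x ∈ steinbergSpace n F k := by
  let H : Submonoid (GL (Fin n) F) :=
    { carrier := {g | ∀ x ∈ steinbergSpace n F k, flagRep n F k g x ∈ steinbergSpace n F k}
      one_mem' x hx := by rwa [map_one, End.one_apply]
      mul_mem' := fun {g h} hg hh x hx ↦ by
        rw [map_mul, End.mul_apply]
        exact hg _ (hh x hx) }
  have hH {g : GL (Fin n) F} (hg : ∀ u ∈ unipotent n F,
      flagRep n F k (g * u) (steinbergVector n F k) ∈ steinbergSpace n F k) : g ∈ H := by
    suffices steinbergSpace n F k ≤ (steinbergSpace n F k).comap (flagRep n F k g) from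
      fun _ hx ↦ this hx
    refine Submodule.span_le.2 ?_
    rintro _ ⟨u, rfl⟩
    have := hg u u.2
    rwa [map_mul, End.mul_apply] at this
  have hU : (unipotent n F).toSubmonoid ≤ H := fun v hv ↦ hH fun u hu ↦
    flagRep_apply_steinbergVector_mem (mul_mem hv hu)
  refine mem_of_unipotent_le hU (fun d ↦ hH fun u hu ↦ ?_) (fun i j hij ↦ hH fun u hu ↦ ?_) g x hx
  · have := flagRep_apply_steinbergVector_mem (k := k) (diagGL_conj_mem_unipotent d hu)
    rwa [map_mul, End.mul_apply, ← map_inv, flagRep_diagGL_steinbergVector] at this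
  · obtain ⟨v, hv, huv⟩ := exists_eq_mul_transvecGL hu hij
    rw [huv, ← mul_assoc, ← inv_mul_cancel_right (permGL (Equiv.swap i j) * v)
      (permGL (Equiv.swap i j)), mul_assoc, map_mul, End.mul_apply]
    exact hU hv _ (flagRep_swap_mul_steinbergVector_mem hij.lt _)

theorem smul_coordFlag_revPerm_eq_iff {u : GL (Fin n) F} (hu : u ∈ unipotent n F)
    {w : Equiv.Perm (Fin n)} :
    u • coordFlag F Fin.revPerm = coordFlag F w ↔ w = Fin.revPerm ∧ u = 1 := by
  refine ⟨fun h ↦ ?_, fun ⟨hw, hu⟩ ↦ by rw [hw, hu, one_smul]⟩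
  have hmem : (u * permGL Fin.revPerm)⁻¹ * permGL w ∈ borel n F := QuotientGroup.eq.1 h
  rw [_root_.mul_inv_rev] at hmem
  exact (eq_one_of_revPerm_inv_mul_mem_borel (inv_mem hu) hmem).imp_right inv_eq_one.1

open scoped Classical in
theorem coeff_steinbergVector {u : GL (Fin n) F} (hu : u ∈ unipotent n F) :
    (steinbergVector n F k).coeff (u • coordFlag F Fin.revPerm) =
      if u = 1 then (sign (Fin.revPerm : Equiv.Perm (Fin n)) : k) else 0 := by
  simp only [steinbergVector, MonoidAlgebra.coeff_sum, MonoidAlgebra.coeff_single,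
    Finsupp.finsetSum_apply, Finsupp.single_apply, eq_comm (b := u • _),
    smul_coordFlag_revPerm_eq_iff hu, ite_and, Finset.sum_ite_eq', Finset.mem_univ, if_true]

theorem linearIndependent_flagRep_unipotent :
    LinearIndependent k fun u : unipotent n F ↦ flagRep n F k u (steinbergVector n F k) := by
  classical
  let c : k := sign (Fin.revPerm : Equiv.Perm (Fin n))
  have hc : c * c = 1 := by rw [← Int.cast_mul, Int.units_coe_mul_self, Int.cast_one]
  have hcoeff (u v : unipotent n F) : (flagRep n F k v (steinbergVector n F k)).coeff
      ((u : GL (Fin n) F) • coordFlag F Fin.revPerm) = if v = u then c else 0 := by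
    rw [coeff_ofMulAction, smul_smul, coeff_steinbergVector (mul_mem (inv_mem v.2) u.2)]
    simp only [inv_mul_eq_one, SetLike.coe_eq_coe, c]
  refine .of_pairwise_dual_eq_zero_one _ (fun u : unipotent n F ↦
    c • Finsupp.lapply ((u : GL (Fin n) F) • coordFlag F Fin.revPerm) ∘ₗ
      (MonoidAlgebra.coeffLinearEquiv k).toLinearMap) (fun u v huv ↦ ?_) fun u ↦ ?_
  · exact (congrArg (c * ·) (hcoeff u v)).trans (by rw [if_neg huv.symm, mul_zero])
  · exact (congrArg (c * ·) (hcoeff u u)).trans (by rw [if_pos rfl, hc])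

theorem finrank_steinbergSpace [Finite F] :
    finrank k (steinbergSpace n F k) = Nat.card (unipotent n F) := by
  have := Fintype.ofFinite (unipotent n F)
  rw [steinbergSpace, Nat.card_eq_fintype_card]
  exact finrank_span_eq_card linearIndependent_flagRep_unipotent

theorem steinbergVector_ne_zero : steinbergVector n F k ≠ 0 := by
  simpa using linearIndependent_flagRep_unipotent (k := k).ne_zero (1 : unipotent n F)

section Irreducible

variable [Fintype (unipotent n F)]

theorem exists_weightSum_flagRep_apply_ne_zero [CharZero k]
    {x : MonoidAlgebra k (GL (Fin n) F ⧸ borel n F)} (hx : x ≠ 0) :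
    ∃ g, weightSum (flagRep n F k) (1 : unipotent n F →* k) (flagRep n F k g x) ≠ 0 := by
  obtain ⟨b, hb⟩ : ∃ b, x.coeff b ≠ 0 := by
    by_contra! h
    exact hx (MonoidAlgebra.ext (Finsupp.ext h))
  obtain ⟨g, rfl⟩ := QuotientGroup.mk_surjective b
  refine ⟨g⁻¹, fun h ↦ ?_⟩
  have hterm (u : unipotent n F) : (flagRep n F k u (flagRep n F k g⁻¹ x)).coeff
      ((1 : GL (Fin n) F) : GL (Fin n) F ⧸ borel n F) = x.coeff g := by
    have hu : (u : GL (Fin n) F)⁻¹ • ((1 : GL (Fin n) F) : GL (Fin n) F ⧸ borel n F) =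
        (1 : GL (Fin n) F) :=
      QuotientGroup.eq.2 (by simpa using unipotent_le_borel u.2)
    rw [coeff_ofMulAction, hu, coeff_ofMulAction, inv_inv, MulAction.Quotient.smul_coe,
      smul_eq_mul, mul_one]
  have hsum := congrArg (fun y ↦ y.coeff ((1 : GL (Fin n) F) : GL (Fin n) F ⧸ borel n F)) h
  simp only [weightSum, MonoidHom.one_apply, one_smul, LinearMap.sum_apply,
    MonoidAlgebra.coeff_sum, Finsupp.finsetSum_apply, hterm, Finset.sum_const, Finset.card_univ,
    MonoidAlgebra.coeff_zero, Finsupp.coe_zero, Pi.zero_apply] at hsum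
  exact (smul_ne_zero Fintype.card_ne_zero hb) hsum

theorem weightSum_apply_mem_span_of_mem_steinbergSpace
    {x : MonoidAlgebra k (GL (Fin n) F ⧸ borel n F)} (hx : x ∈ steinbergSpace n F k) :
    weightSum (flagRep n F k) (1 : unipotent n F →* k) x ∈
      k ∙ weightSum (flagRep n F k) (1 : unipotent n F →* k) (steinbergVector n F k) := by
  suffices steinbergSpace n F k ≤ (k ∙ weightSum (flagRep n F k) (1 : unipotent n F →* k)
    (steinbergVector n F k)).comap (weightSum (flagRep n F k) (1 : unipotent n F →* k)) from this hx
  refine Submodule.span_le.2 ?_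
  rintro _ ⟨u, rfl⟩
  rw [SetLike.mem_coe, Submodule.mem_comap, weightSum_one_apply_unipotent u.2]
  exact Submodule.mem_span_singleton_self _

theorem weightSum_one_steinbergVector_ne_zero [CharZero k] :
    weightSum (flagRep n F k) (1 : unipotent n F →* k) (steinbergVector n F k) ≠ 0 := by
  obtain ⟨g, hg⟩ := exists_weightSum_flagRep_apply_ne_zero
    (steinbergVector_ne_zero (n := n) (F := F) (k := k))
  obtain ⟨c, hc⟩ := Submodule.mem_span_singleton.1
    (weightSum_apply_mem_span_of_mem_steinbergSpace
      (flagRep_apply_mem_steinbergSpace (k := k) g steinbergVector_mem))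
  intro h
  rw [← hc, h, smul_zero] at hg
  exact hg rfl

end Irreducible

variable (n F k) in
/-- The Steinberg representation, realised on the complete flags of `F ^ n`. -/
noncomputable def steinbergRep : Representation k (GL (Fin n) F) (steinbergSpace n F k) :=
  Subrepresentation.toRepresentation (ρ := flagRep n F k)
    ⟨steinbergSpace n F k, fun g _ hx ↦ flagRep_apply_mem_steinbergSpace g hx⟩

theorem coe_steinbergRep_apply (g : GL (Fin n) F) (x : steinbergSpace n F k) :
    (steinbergRep n F k g x : MonoidAlgebra k (GL (Fin n) F ⧸ borel n F)) =
      flagRep n F k g x :=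
  rfl

theorem coe_weightSum_steinbergRep_apply [Fintype (unipotent n F)] (χ : unipotent n F →* k)
    (x : steinbergSpace n F k) :
    (weightSum (steinbergRep n F k) χ x : MonoidAlgebra k (GL (Fin n) F ⧸ borel n F)) =
      weightSum (flagRep n F k) χ x := by
  simp only [weightSum, LinearMap.sum_apply, LinearMap.smul_apply, Submodule.coe_sum,
    Submodule.coe_smul, coe_steinbergRep_apply]

instance isIrreducible_steinbergRep [Finite F] [CharZero k] :
    (steinbergRep n F k).IsIrreducible := by
  have := Fintype.ofFinite (unipotent n F)
  let z : steinbergSpace n F k := weightSum (steinbergRep n F k) (1 : unipotent n F →* k)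
    ⟨steinbergVector n F k, steinbergVector_mem⟩
  have hz : z ≠ 0 := fun h ↦ weightSum_one_steinbergVector_ne_zero (n := n) (F := F) (k := k) <| by
    rw [← coe_weightSum_steinbergRep_apply 1 ⟨_, steinbergVector_mem⟩]
    exact congrArg Subtype.val h
  refine isIrreducible_of_forall_mem hz fun W hW ↦ ?_
  obtain ⟨x, hxW, hx⟩ := W.toSubmodule.exists_mem_ne_zero_of_ne_bot fun h ↦
    hW (Subrepresentation.toSubmodule_injective h)
  obtain ⟨g, hg⟩ := exists_weightSum_flagRep_apply_ne_zero (k := k) (Subtype.coe_ne_coe.2 hx)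
  obtain ⟨c, hc⟩ := Submodule.mem_span_singleton.1 (weightSum_apply_mem_span_of_mem_steinbergSpace
    (flagRep_apply_mem_steinbergSpace g x.2))
  have hc0 : c ≠ 0 := by
    rintro rfl
    exact hg (by rw [← hc, zero_smul])
  have hcz : c • z = weightSum (steinbergRep n F k) (1 : unipotent n F →* k)
      (steinbergRep n F k g x) := by
    refine Subtype.ext ?_
    rw [coe_weightSum_steinbergRep_apply, coe_steinbergRep_apply, ← hc,
      ← coe_weightSum_steinbergRep_apply 1 ⟨_, steinbergVector_mem⟩]
    rfl
  exact (W.toSubmodule.smul_mem_iff hc0).1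
    (hcz ▸ weightSum_apply_mem_subrepresentation W 1 (W.apply_mem_toSubmodule g hxW))

end Steinberg

section Twist

variable {G k V : Type*} [Group G] [Field k] [AddCommGroup V] [Module k V]

/-- The twist `g ↦ χ g • ρ g` of a representation by a linear character. -/
def twist (χ : G →* kˣ) (ρ : Representation k G V) : Representation k G V where
  toFun g := (χ g : k) • ρ g
  map_one' := by simp
  map_mul' g h := by rw [map_mul, map_mul, Units.val_mul, smul_mul_smul_comm]

variable (χ : G →* kˣ) (ρ : Representation k G V)

theorem twist_apply (g : G) (v : V) : twist χ ρ g v = (χ g : k) • ρ g v :=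
  rfl

theorem character_twist (g : G) : (twist χ ρ).character g = χ g * ρ.character g :=
  map_smul (LinearMap.trace k V) (χ g : k) (ρ g)

/-- The order isomorphism between the subrepresentations of a twist of `ρ` and those of `ρ`. -/
def twistSubrepresentationIso : Subrepresentation (twist χ ρ) ≃o Subrepresentation ρ where
  toFun W := ⟨W.toSubmodule, fun g _ hv ↦
    (W.toSubmodule.smul_mem_iff (χ g).ne_zero).1 (W.apply_mem_toSubmodule g hv)⟩
  invFun W := ⟨W.toSubmodule, fun g _ hv ↦
    W.toSubmodule.smul_mem _ (W.apply_mem_toSubmodule g hv)⟩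
  map_rel_iff' := Iff.rfl

instance isIrreducible_twist [ρ.IsIrreducible] : (twist χ ρ).IsIrreducible :=
  (twistSubrepresentationIso χ ρ).isSimpleOrder

theorem weightSpace_twist {U : Subgroup G} (hχ : ∀ u ∈ U, χ u = 1) (ψ : U →* k) :
    weightSpace (twist χ ρ) ψ = weightSpace ρ ψ := by
  ext v
  refine forall_congr' fun u ↦ ?_
  rw [twist_apply, hχ u u.2, Units.val_one, one_smul]

end Twist

section Permutation

variable {G k V : Type*} [Group G] [Field k] [AddCommGroup V] [Module k V]

theorem exists_intertwiningMap_ofMulAction_quotient (ρ : Representation k G V) {H : Subgroup G}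
    {v : V} (hv : ∀ h ∈ H, ρ h v = v) :
    ∃ π : IntertwiningMap (ofMulAction k G (G ⧸ H)) ρ, ∀ g : G, π (.single g 1) = ρ g v := by
  have hout (g : G) : ρ (g : G ⧸ H).out v = ρ g v := by
    obtain ⟨h, hh⟩ := QuotientGroup.mk_out_eq_mul H g
    rw [hh, map_mul, End.mul_apply, hv h h.2]
  let π : MonoidAlgebra k (G ⧸ H) →ₗ[k] V :=
    Finsupp.lift V k (G ⧸ H) (fun q ↦ ρ q.out v) ∘ₗ (MonoidAlgebra.coeffLinearEquiv k).toLinearMap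
  have hπ (g : G) : π (.single g 1) = ρ g v := by simp [π, hout]
  refine ⟨⟨π, fun g ↦ MonoidAlgebra.lhom_ext' fun q ↦ LinearMap.ext_ring ?_⟩, hπ⟩
  obtain ⟨h, rfl⟩ := QuotientGroup.mk_surjective q
  change π (ofMulAction k G (G ⧸ H) g (.single h 1)) = ρ g (π (.single h 1))
  rw [ofMulAction_single, hπ, ← End.mul_apply, ← map_mul]
  exact hπ (g * h)

end Permutation

theorem trace_weightSum {G k V : Type*} [Group G] [Field k] [CharZero k] [AddCommGroup V]
    [Module k V] [FiniteDimensional k V] (ρ : Representation k G V) {U : Subgroup G} [Fintype U]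
    (χ : U →* k) :
    LinearMap.trace k V (weightSum ρ χ) = Nat.card U * finrank k (weightSpace ρ χ) := by
  have hcard : (Nat.card U : k) ≠ 0 := Nat.cast_ne_zero.2 Nat.card_pos.ne'
  have hproj : LinearMap.IsProj (weightSpace ρ χ) ((Nat.card U : k)⁻¹ • weightSum ρ χ) :=
    { map_mem := fun x ↦ Submodule.smul_mem _ _ (weightSum_apply_mem ρ χ x)
      map_id := fun x hx ↦ by
        rw [LinearMap.smul_apply, weightSum_apply_of_mem hx, inv_smul_smul₀ hcard] }
  rw [← hproj.trace, map_smul, smul_eq_mul, mul_inv_cancel_left₀ hcard]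

section SteinbergCharacterization

open Equiv.Perm (sign)

variable {n : ℕ} {F k V : Type*} [Field F] [Field k] [AddCommGroup V] [Module k V]
  {ρ : Representation k (GL (Fin n) F) V} {v : V}

theorem apply_steinbergVector (π : IntertwiningMap (flagRep n F k) ρ)
    (hπ : ∀ g : GL (Fin n) F, π (.single g 1) = ρ g v) :
    π (steinbergVector n F k) = ∑ w : Equiv.Perm (Fin n), (sign w : k) • ρ (permGL w) v := by
  rw [steinbergVector, map_sum]
  refine Finset.sum_congr rfl fun w _ ↦ ?_
  rw [← hπ, ← map_smul, MonoidAlgebra.smul_single, smul_eq_mul, mul_one]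
  rfl

theorem weightSum_genericChar_sum_sign_smul [Fintype (unipotent n F)] {e : AddChar F k}
    (he : e ≠ 1) (hv : v ∈ weightSpace ρ (1 : unipotent n F →* k)) :
    weightSum ρ (genericChar e) (∑ w : Equiv.Perm (Fin n), (sign w : k) • ρ (permGL w) v) =
      (sign (Fin.revPerm : Equiv.Perm (Fin n)) : k) •
        weightSum ρ (genericChar e) (ρ (permGL Fin.revPerm) v) := by
  rw [map_sum, Finset.sum_eq_single_of_mem _ (Finset.mem_univ Fin.revPerm), map_smul]
  intro w _ hw
  rw [map_smul, weightSum_genericChar_apply_permGL he hv hw, smul_zero]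

theorem weightSum_genericChar_apply_revPerm_ne_zero [Fintype (unipotent n F)] [CharZero k]
    {e : AddChar F k} (he : e ≠ 1) (hv : v ∈ weightSpace ρ (1 : unipotent n F →* k))
    (hT : ∀ d, ρ (diagGL d) v ∈ k ∙ v) (hspan : Submodule.span k (Set.range (ρ · v)) = ⊤)
    (hψ : weightSpace ρ (genericChar e : unipotent n F →* k) ≠ ⊥) :
    weightSum ρ (genericChar e) (ρ (permGL Fin.revPerm) v) ≠ 0 := by
  intro hzero
  obtain ⟨y, hy, hy0⟩ := Submodule.exists_mem_ne_zero_of_ne_bot hψ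
  have hmem := weightSum_genericChar_apply_mem_span_singleton he hv hT hspan y
  rw [hzero, Submodule.span_singleton_eq_bot.2 rfl, Submodule.mem_bot, weightSum_apply_of_mem hy,
    smul_eq_zero_iff_right (Nat.cast_ne_zero.2 Nat.card_pos.ne')] at hmem
  exact hy0 hmem

theorem nonempty_equiv_steinbergRep [Finite F] [CharZero k] [ρ.IsIrreducible] {e : AddChar F k}
    (he : e ≠ 1) (hv0 : v ≠ 0) (hv : ∀ b ∈ borel n F, ρ b v = v)
    (hψ : weightSpace ρ (genericChar e : unipotent n F →* k) ≠ ⊥) :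
    Nonempty ((steinbergRep n F k).Equiv ρ) := by
  have := Fintype.ofFinite (unipotent n F)
  have hU : v ∈ weightSpace ρ (1 : unipotent n F →* k) :=
    mem_weightSpace_one.2 fun u hu ↦ hv u (unipotent_le_borel hu)
  have hT (d) : ρ (diagGL d) v ∈ k ∙ v := by
    rw [hv _ (diagGL_mem_borel d)]
    exact Submodule.mem_span_singleton_self v
  obtain ⟨π, hπ⟩ := exists_intertwiningMap_ofMulAction_quotient ρ hv
  have hne : π (steinbergVector n F k) ≠ 0 := by
    intro hzero
    have hsum := weightSum_genericChar_sum_sign_smul he hU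
    rw [← apply_steinbergVector π hπ, hzero, map_zero] at hsum
    exact smul_ne_zero (Int.cast_ne_zero.2 (Units.ne_zero _))
      (weightSum_genericChar_apply_revPerm_ne_zero he hU hT (span_range_apply_eq_top ρ hv0) hψ)
      hsum.symm
  let φ : IntertwiningMap (steinbergRep n F k) ρ :=
    ⟨π.toLinearMap ∘ₗ (steinbergSpace n F k).subtype, fun g ↦ LinearMap.ext fun x ↦
      π.isIntertwining _ _ g x⟩
  have hφ : φ ≠ 0 := fun h ↦ hne <| DFunLike.congr_fun h
    (⟨steinbergVector n F k, steinbergVector_mem⟩ : steinbergSpace n F k)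
  exact ⟨φ.ofBijective ((IsIrreducible.bijective_or_eq_zero φ).resolve_right hφ)⟩

end SteinbergCharacterization

section SteinbergTwists

variable {n : ℕ} {F k V : Type*} [Field F] [Field k]

instance finiteDimensional_steinbergSpace [Finite F] :
    FiniteDimensional k (steinbergSpace n F k) :=
  FiniteDimensional.span_of_finite k (Set.finite_range _)

theorem padicValNat_finrank_steinbergSpace [Finite F] (p : ℕ) [Fact p.Prime]
    [CharP F p] :
    padicValNat p (finrank k (steinbergSpace n F k)) = padicValNat p (Nat.card (GL (Fin n) F)) := by
  rw [finrank_steinbergSpace, padicValNat_card_unipotent]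

theorem exists_character_eq_of_padicValNat_finrank [Finite F] [IsAlgClosed k] [CharZero k]
    [NeZero n] [AddCommGroup V] [Module k V] [FiniteDimensional k V] (p : ℕ) [Fact p.Prime]
    [CharP F p] {e : AddChar F k} (he : e ≠ 1) (ρ : Representation k (GL (Fin n) F) V)
    [ρ.IsIrreducible]
    (hdefect : padicValNat p (finrank k V) = padicValNat p (Nat.card (GL (Fin n) F))) :
    ∃ α : Fˣ →* kˣ, ρ.character =
      (twist (α.comp GeneralLinearGroup.det) (steinbergRep n F k)).character := by
  have := Fintype.ofFinite (unipotent n F)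
  have hU := isPGroup_unipotent (n := n) (F := F) p
  obtain ⟨v, hv, hv0, hT⟩ := exists_forall_apply_diagGL_mem_span_singleton
    (weightSpace_ne_bot ρ hdefect hU 1)
  have hψ := weightSpace_ne_bot ρ hdefect hU (genericChar e)
  have hline : finrank k (weightSpace ρ (1 : unipotent n F →* k)) = 1 := by
    refine le_antisymm ((finrank_weightSpace_le ρ hdefect hU 1 (genericChar e)).trans ?_) ?_
    · exact finrank_weightSpace_genericChar_le_one he hv hT (span_range_apply_eq_top ρ hv0)
    · exact Submodule.one_le_finrank_iff.2 (weightSpace_ne_bot ρ hdefect hU 1)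
  obtain ⟨α, hα⟩ := exists_forall_apply_borel_eq_smul hv hv0 hline
  let χ : GL (Fin n) F →* kˣ := α.comp GeneralLinearGroup.det
  have hfix (b) (hb : b ∈ borel n F) : twist χ⁻¹ ρ b v = v := by
    rw [twist_apply, hα b hb, ← Units.smul_def, smul_smul]
    simp [χ]
  rw [← weightSpace_twist χ⁻¹ ρ fun u hu ↦ by simp [χ, det_eq_one_of_mem_unipotent hu]] at hψ
  obtain ⟨φ⟩ := nonempty_equiv_steinbergRep he hv0 hfix hψ
  refine ⟨α, funext fun g ↦ ?_⟩
  rw [character_twist, char_iso φ, character_twist, ← mul_assoc]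
  simp [χ]

theorem steinbergRep_diagGL_mul_weightSum_one [Fintype (unipotent n F)] (d : Fin n → Fˣ) :
    steinbergRep n F k (diagGL d) * weightSum (steinbergRep n F k) (1 : unipotent n F →* k) =
      weightSum (steinbergRep n F k) (1 : unipotent n F →* k) := by
  ext x : 2
  rw [End.mul_apply, coe_steinbergRep_apply, coe_weightSum_steinbergRep_apply]
  obtain ⟨c, hc⟩ := Submodule.mem_span_singleton.1
    (weightSum_apply_mem_span_of_mem_steinbergSpace x.2)
  rw [← hc, map_smul, ← weightSum_one_apply_diagGL, flagRep_diagGL_steinbergVector]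

theorem trace_weightSum_steinbergRep_one_ne_zero [Finite F] [CharZero k]
    [Fintype (unipotent n F)] : LinearMap.trace k (steinbergSpace n F k)
      (weightSum (steinbergRep n F k) (1 : unipotent n F →* k)) ≠ 0 := by
  let f : steinbergSpace n F k := ⟨steinbergVector n F k, steinbergVector_mem⟩
  have hEf : weightSum (steinbergRep n F k) (1 : unipotent n F →* k) f ≠ 0 := fun h ↦
    weightSum_one_steinbergVector_ne_zero (n := n) (F := F) (k := k) <| by
      rw [← coe_weightSum_steinbergRep_apply 1 f, h, Submodule.coe_zero]
  have hne : weightSpace (steinbergRep n F k) (1 : unipotent n F →* k) ≠ ⊥ :=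
    (Submodule.ne_bot_iff _).2 ⟨_, weightSum_apply_mem _ _ f, hEf⟩
  rw [trace_weightSum]
  exact mul_ne_zero (Nat.cast_ne_zero.2 Nat.card_pos.ne')
    (Nat.cast_ne_zero.2 (Submodule.finrank_eq_zero.not.2 hne))

theorem sum_character_twist_steinbergRep [Fintype (unipotent n F)] (α : Fˣ →* kˣ)
    (d : Fin n → Fˣ) :
    ∑ u : unipotent n F, (twist (α.comp GeneralLinearGroup.det) (steinbergRep n F k)).character
        (diagGL d * u) =
      α (∏ i, d i) * LinearMap.trace k (steinbergSpace n F k)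
        (weightSum (steinbergRep n F k) (1 : unipotent n F →* k)) := by
  rw [← steinbergRep_diagGL_mul_weightSum_one d, weightSum, Finset.mul_sum, map_sum,
    Finset.mul_sum]
  refine Finset.sum_congr rfl fun u _ ↦ ?_
  rw [character_twist, MonoidHom.one_apply, one_smul, ← map_mul, MonoidHom.comp_apply,
    map_mul _ (diagGL d), det_diagGL, det_eq_one_of_mem_unipotent u.2, mul_one]
  rfl

theorem character_twist_steinbergRep_injective [Finite F] [CharZero k] [NeZero n] :
    Function.Injective fun α : Fˣ →* kˣ ↦
      (twist (α.comp GeneralLinearGroup.det) (steinbergRep n F k)).character := by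
  have := Fintype.ofFinite (unipotent n F)
  intro α β h
  ext a
  have hsum := sum_character_twist_steinbergRep (n := n) (k := k) α (Pi.mulSingle 0 a)
  rw [Finset.sum_congr rfl fun u _ ↦ congrFun h _,
    sum_character_twist_steinbergRep, Finset.prod_pi_mulSingle', if_pos (Finset.mem_univ _)] at hsum
  exact (mul_right_cancel₀ trace_weightSum_steinbergRep_one_ne_zero hsum).symm

end SteinbergTwists

section FDRep

open CategoryTheory

universe u v

theorem isIrreducible_ρ_of_simple {k : Type u} {G : Type v} [Field k] [Group G] (V : FDRep k G)
    [Simple V] : Representation.IsIrreducible V.ρ where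
  exists_pair_ne := ⟨⊥, ⊤, fun h ↦ id_nonzero V <| by
    ext x
    have hx : x ∈ (⊤ : Subrepresentation V.ρ) := Submodule.mem_top
    rwa [← h] at hx⟩
  eq_bot_or_eq_top W := by
    let ι : FDRep.of W.toRepresentation ⟶ V :=
      ⟨InducedCategory.homMk (ModuleCat.ofHom W.toSubmodule.subtype), fun g ↦ rfl⟩
    have : Mono ι := ConcreteCategory.mono_of_injective ι Subtype.val_injective
    refine or_iff_not_imp_left.2 fun hW ↦ ?_
    have hι : ι ≠ 0 := fun h ↦ hW <| Subrepresentation.toSubmodule_injective <|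
      (Submodule.eq_bot_iff _).2 fun x hx ↦
        congrArg (fun f : FDRep.of W.toRepresentation ⟶ V ↦ f.hom.hom.hom ⟨x, hx⟩) h
    have := isIso_of_mono_of_nonzero hι
    refine Subrepresentation.toSubmodule_injective (Submodule.eq_top_of_finrank_eq ?_)
    exact (FDRep.isoToLinearEquiv (asIso ι)).finrank_eq

theorem simple_of_isIrreducible {k G V : Type u} [Field k] [IsAlgClosed k] [CharZero k] [Group G]
    [Finite G] [AddCommGroup V] [Module k V] [FiniteDimensional k V] (ρ : Representation k G V)
    [ρ.IsIrreducible] : Simple (FDRep.of ρ) := by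
  have := Fintype.ofFinite G
  have hcard : (Nat.card G : k) ≠ 0 := Nat.cast_ne_zero.2 Nat.card_pos.ne'
  have := invertibleOfNonzero hcard
  have hnorm := card_inv_mul_sum_char_mul_char_eq_finrank ρ ρ
  rw [IsIrreducible.finrank_intertwiningMap_self, Nat.cast_one, inv_mul_eq_one₀ hcard] at hnorm
  exact (FDRep.simple_iff_char_is_norm_one _).2 hnorm.symm

end FDRep

section Count

universe u

variable {F k : Type u} [Field F] [Finite F] [Field k] [IsAlgClosed k] [CharZero k]

theorem exists_addChar_ne_one (F k : Type*) [Field F] [Finite F] [Field k] [IsAlgClosed k]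
    [CharZero k] :
    ∃ e : AddChar F k, e ≠ 1 := by
  obtain ⟨φ, hφ⟩ := CommGroup.exists_apply_ne_one_of_hasEnoughRootsOfUnity (Multiplicative F) k
    (a := .ofAdd 1) (by simp)
  refine ⟨AddChar.toMonoidHomEquiv.symm ((Units.coeHom k).comp φ), AddChar.ne_one_iff.2 ⟨1, ?_⟩⟩
  simpa using hφ

theorem setOf_character_eq_range (p : ℕ) [Fact p.Prime] [CharP F p] (n : ℕ) [NeZero n] :
    {f : GL (Fin n) F → k | ∃ V : FDRep k (GL (Fin n) F), CategoryTheory.Simple V ∧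
      V.character = f ∧
      padicValNat p (finrank k V) = padicValNat p (Nat.card (GL (Fin n) F))} =
    Set.range fun α : Fˣ →* kˣ ↦
      (twist (α.comp GeneralLinearGroup.det) (steinbergRep n F k)).character := by
  ext f
  constructor
  · rintro ⟨V, hV, rfl, hdefect⟩
    have := isIrreducible_ρ_of_simple V
    obtain ⟨e, he⟩ := exists_addChar_ne_one F k
    obtain ⟨α, hα⟩ := exists_character_eq_of_padicValNat_finrank p he V.ρ hdefect
    exact ⟨α, hα.symm⟩
  · rintro ⟨α, rfl⟩
    exact ⟨FDRep.of (twist (α.comp GeneralLinearGroup.det) (steinbergRep n F k)),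
      simple_of_isIrreducible _, rfl, padicValNat_finrank_steinbergSpace p⟩

end Count

end GLDefectZero

section

universe u

theorem GL_defect_zero_count_general {F k : Type u} [Field F] [Finite F] [Field k]
    [IsAlgClosed k] [CharZero k] (p : ℕ) [Fact p.Prime] [CharP F p] (n : ℕ) [NeZero n] :
    Set.ncard {f : GL (Fin n) F → k | ∃ V : FDRep k (GL (Fin n) F), CategoryTheory.Simple V ∧
      V.character = f ∧
      padicValNat p (Module.finrank k V) = padicValNat p (Nat.card (GL (Fin n) F))} =
    Nat.card F - 1 := by
  rw [GLDefectZero.setOf_character_eq_range,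
    Set.ncard_range_of_injective GLDefectZero.character_twist_steinbergRep_injective,
    CommGroup.card_monoidHom_of_hasEnoughRootsOfUnity, Nat.card_units]

end

/-- For every prime `ℓ` and every `n ≥ 1`, the general linear group `GL_n(𝔽_ℓ)` has exactly
`ℓ - 1` irreducible complex characters of `ℓ`-defect zero.  Irreducible characters are counted
as the character functions of simple objects of `FDRep ℂ (GL_n(𝔽_ℓ))`, and a character has
`ℓ`-defect zero if the `ℓ`-adic valuation of its degree equals the `ℓ`-adic valuation of the
group order. -/
theorem GL_defect_zero_count (ℓ : ℕ) (hℓ : ℓ.Prime) (n : ℕ) (hn : 1 ≤ n) :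
    Set.ncard { f : GL (Fin n) (ZMod ℓ) → ℂ |
      ∃ V : FDRep ℂ (GL (Fin n) (ZMod ℓ)), CategoryTheory.Simple V ∧ V.character = f ∧
        padicValNat ℓ (Module.finrank ℂ V) =
          padicValNat ℓ (Nat.card (GL (Fin n) (ZMod ℓ))) } = ℓ - 1 := by
  have : Fact ℓ.Prime := ⟨hℓ⟩
  have : NeZero n := ⟨Nat.one_le_iff_ne_zero.1 hn⟩
  rw [GL_defect_zero_count_general, Nat.card_zmod]
end
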